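/- arXiv:2009.08035 — 2 statements merged into one kernel-verified Lean document; each statement's English description precedes it below -/
import Mathlib

section
/- Let n and d be positive integers with d ≥ 3 and gcd(n,d) = 1, and let a, b be indeterminates. Then the sum over k from 0 to n−1 of [2dk+1] · (aq, q/a, bq, q/b; q^d)_k · (q; q^d)_k^2 / ( (aq^d, q^d/a, bq^d, q^d/b; q^d)_k · (q^d; q^d)_k^2 ) · q^{(2d−3)k} is congruent to 0 modulo [n]·Φ_n(q) if n ≡ −1 (mod d), and congruent to 0 modulo [n] otherwise. -/
open Finset

noncomputable section

/-- Polynomial ring in the variables `q, a, b, c` (indices `0,1,2,3`). -/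
abbrev R : Type := MvPolynomial (Fin 4) ℚ

/-- Field of rational functions in `q, a, b, c`. -/
abbrev K : Type := FractionRing R

def qv : K := algebraMap R K (MvPolynomial.X 0)
def av : K := algebraMap R K (MvPolynomial.X 1)
def bv : K := algebraMap R K (MvPolynomial.X 2)
def cv : K := algebraMap R K (MvPolynomial.X 3)

/-- The q-shifted factorial `(x; Q)_k = (1-x)(1-xQ)⋯(1-xQ^{k-1})`. -/
def poch (x Q : K) (k : ℕ) : K := ∏ i ∈ Finset.range k, (1 - x * Q ^ i)

/-- The q-integer `[m] = (1-q^m)/(1-q)` (allowing integer `m`). -/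
def qint (m : ℤ) : K := (1 - qv ^ m) / (1 - qv)

/-- The n-th cyclotomic polynomial, as a polynomial in the variable `q`. -/
def Phi (n : ℕ) : R :=
  Polynomial.eval₂ MvPolynomial.C (MvPolynomial.X 0) (Polynomial.cyclotomic n ℚ)

/-- `[n] = 1 + q + ⋯ + q^{n-1}` as a polynomial in `q`. -/
def qintR (n : ℕ) : R := ∑ i ∈ Finset.range n, (MvPolynomial.X 0 : R) ^ i

/-- `x ≡ 0 (mod M)` as rational functions: `x = M·f/g` where `g` shares no prime
factor with `M` (i.e. the numerator of `x` in lowest terms is divisible by `M`). -/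
def modCong (M : R) (x : K) : Prop :=
  ∃ f g : R, g ≠ 0 ∧ (∀ p : R, Prime p → p ∣ M → ¬ p ∣ g) ∧
    x * algebraMap R K g = algebraMap R K (M * f)

open Finset

/-- Pochhammer over a general field. -/
def pc {F : Type*} [Field F] (x Q : F) (k : ℕ) : F := ∏ i ∈ Finset.range k, (1 - x * Q ^ i)

section hyper
variable {F : Type*} [Field F]

lemma pc_zero (x Q : F) : pc x Q 0 = 1 := by simp [pc]
lemma pc_succ (x Q : F) (k : ℕ) : pc x Q (k+1) = pc x Q k * (1 - x * Q ^ k) := by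
  simp [pc, Finset.prod_range_succ]
lemma pc_succ' (x Q : F) (k : ℕ) : pc x Q (k+1) = (1 - x) * pc (x * Q) Q k := by
  simp only [pc, Finset.prod_range_succ']
  rw [mul_comm]; congr 1
  · simp
  · exact Finset.prod_congr rfl fun i _ => by ring
lemma pc_add (x Q : F) (k l : ℕ) : pc x Q (k+l) = pc x Q k * pc (x * Q^k) Q l := by
  simp only [pc, Finset.prod_range_add]
  congr 1
  exact Finset.prod_congr rfl fun i _ => by ring
lemma pc_ne {x Q : F} {k : ℕ} (h : ∀ i < k, 1 - x * Q ^ i ≠ 0) : pc x Q k ≠ 0 :=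
  Finset.prod_ne_zero_iff.2 fun i hi => h i (Finset.mem_range.1 hi)
lemma pc_eq_zero {x Q : F} {k i : ℕ} (hi : i < k) (h : x * Q ^ i = 1) : pc x Q k = 0 :=
  Finset.prod_eq_zero (Finset.mem_range.2 hi) (by rw [h]; ring)

/-- summand of the terminating 6phi5 -/
def f6 (A D E Q : F) (n k : ℕ) : F :=
  (1 - A * Q^(2*k)) * (pc A Q k * pc D Q k * pc E Q k * pc (Q^n)⁻¹ Q k) /
   (pc Q Q k * pc (A*Q/D) Q k * pc (A*Q/E) Q k * pc (A*Q^(n+1)) Q k) * (A*Q^(n+1)/(D*E))^k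

def G6 (A D E Q : F) (n k : ℕ) : F :=
  A*Q^(n+1)/(D*E*(1-A*Q/D*Q^n)*(1-A*Q/E*Q^n)) *
  (pc A Q (k+1) * pc D Q (k+1) * pc E Q (k+1) * pc (Q^n)⁻¹ Q k) /
   (pc Q Q k * pc (A*Q/D) Q k * pc (A*Q/E) Q k * pc (A*Q^(n+2)) Q k) * (A*Q^(n+1)/(D*E))^k

def sg6 (A D E Q : F) (n : ℕ) : F :=
  (1-A*Q^(n+1))*(1-A*Q/(D*E)*Q^n)/((1-A*Q/D*Q^n)*(1-A*Q/E*Q^n))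

set_option maxHeartbeats 1000000 in
lemma rat6 (A D E Q x y : F) (hA : A ≠ 0) (hD : D ≠ 0) (hE : E ≠ 0) (hQ : Q ≠ 0) (hx : x ≠ 0) (hy : y ≠ 0)
    (q1 : 1 - Q*x ≠ 0) (e2 : 1 - A*Q/D*y ≠ 0) (e3 : 1 - A*Q/E*y ≠ 0)
    (q2 : 1 - A*Q/D*x ≠ 0) (q3 : 1 - A*Q/E*x ≠ 0) (q4 : 1 - A*(y*Q) ≠ 0) (q5 : 1 - A*(y*Q*Q)*x ≠ 0) :
    A*(y*Q)/(D*E*(1-A*Q/D*y)*(1-A*Q/E*y)) +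
    ((1-A*(x*x*Q*Q))*(1-(y*Q)⁻¹)*x*(A*(y*Q*Q)/(D*E))/((1-Q*x)*(1-A*Q/D*x)*(1-A*Q/E*x)*(1-A*(y*Q*Q)*x))
    - (1-A*(y*Q))*(1-A*Q/(D*E)*y)/((1-A*Q/D*y)*(1-A*Q/E*y)) *
      ((1-A*(x*x*Q*Q))*(1-y⁻¹*x)*(A*(y*Q)/(D*E))/((1-Q*x)*(1-A*Q/D*x)*(1-A*Q/E*x)*(1-A*(y*Q)))))
    = A*(y*Q)/(D*E*(1-A*Q/D*y)*(1-A*Q/E*y)) *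
      ((1-A*(x*Q))*(1-D*(x*Q))*(1-E*(x*Q))*(1-y⁻¹*x)*(A*(y*Q)/(D*E))/
        ((1-Q*x)*(1-A*Q/D*x)*(1-A*Q/E*x)*(1-A*(y*Q*Q)*x))) := by
  have e2' : D - A*Q*y ≠ 0 := by
    intro h; apply e2; field_simp; linear_combination h
  have e3' : E - A*Q*y ≠ 0 := by
    intro h; apply e3; field_simp; linear_combination h
  have q2' : D - A*Q*x ≠ 0 := by
    intro h; apply q2; field_simp; linear_combination h
  have q3' : E - A*Q*x ≠ 0 := by
    intro h; apply q3; field_simp; linear_combination h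
  have t1 : 1 - A*Q/D*y = (D - A*Q*y)/D := by field_simp
  have t2 : 1 - A*Q/E*y = (E - A*Q*y)/E := by field_simp
  have t3 : 1 - A*Q/D*x = (D - A*Q*x)/D := by field_simp
  have t4 : 1 - A*Q/E*x = (E - A*Q*x)/E := by field_simp
  have q4' : 1 - A*y*Q ≠ 0 := by rwa [← mul_assoc] at q4
  have q5' : 1 - A*y*Q^2*x ≠ 0 := by
    intro h; apply q5; linear_combination h
  rw [t1, t2, t3, t4]
  clear t1 t2 t3 t4 e2 e3 q2 q3 q4' q5'
  obtain ⟨d1, hd1⟩ : ∃ d1, d1 = D - A*Q*y := ⟨_, rfl⟩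
  obtain ⟨d2, hd2⟩ : ∃ d2, d2 = E - A*Q*y := ⟨_, rfl⟩
  obtain ⟨d3, hd3⟩ : ∃ d2, d2 = D - A*Q*x := ⟨_, rfl⟩
  obtain ⟨d4, hd4⟩ : ∃ d2, d2 = E - A*Q*x := ⟨_, rfl⟩
  obtain ⟨d5, hd5⟩ : ∃ d2, d2 = 1 - A*(y*Q) := ⟨_, rfl⟩
  obtain ⟨d6, hd6⟩ : ∃ d2, d2 = 1 - A*(y*Q*Q)*x := ⟨_, rfl⟩
  obtain ⟨d7, hd7⟩ : ∃ d2, d2 = 1 - Q*x := ⟨_, rfl⟩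
  rw [← hd1] at e2' ⊢
  rw [← hd2] at e3' ⊢
  rw [← hd3] at q2' ⊢
  rw [← hd4] at q3' ⊢
  rw [← hd5] at q4 ⊢
  rw [← hd6] at q5 ⊢
  rw [← hd7] at q1 ⊢
  field_simp
  rw [hd1, hd2, hd3, hd4, hd6, hd7]
  ring

set_option maxHeartbeats 1000000 in
lemma sum6_step (A D E Q : F) (hA : A ≠ 0) (hD : D ≠ 0) (hE : E ≠ 0) (hQ : Q ≠ 0)
    (h1 : ∀ i, 1 - Q * Q^i ≠ 0) (h2 : ∀ i, 1 - A*Q/D * Q^i ≠ 0) (h3 : ∀ i, 1 - A*Q/E * Q^i ≠ 0)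
    (h4 : ∀ i, 1 - A*Q^i ≠ 0) (n k : ℕ) :
    ∑ i ∈ range (k+1), (f6 A D E Q (n+1) i - sg6 A D E Q n * f6 A D E Q n i) = G6 A D E Q n k := by
  have e2 := h2 n
  have e3 := h3 n
  have hy : Q^n ≠ 0 := pow_ne_zero _ hQ
  induction k with
  | zero =>
    simp only [zero_add, sum_range_one, f6, G6, sg6, pc_succ, pc_zero, pow_zero, mul_zero, mul_one, one_mul, div_one]
    have e2' : D - A*Q*Q^n ≠ 0 := by
      intro h; apply e2; field_simp; linear_combination h
    have e3' : E - A*Q*Q^n ≠ 0 := by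
      intro h; apply e3; field_simp; linear_combination h
    rw [pow_succ]
    generalize Q^n = y at *
    have t1 : 1 - A*Q/D*y = (D - A*Q*y)/D := by field_simp
    have t2 : 1 - A*Q/E*y = (E - A*Q*y)/E := by field_simp
    rw [t1, t2]
    obtain ⟨d1, hd1⟩ : ∃ d1, d1 = D - A*Q*y := ⟨_, rfl⟩
    obtain ⟨d2, hd2⟩ : ∃ d2, d2 = E - A*Q*y := ⟨_, rfl⟩
    rw [← hd1] at e2' ⊢
    rw [← hd2] at e3' ⊢
    obtain ⟨d3, hd3⟩ : ∃ d2, d2 = 1 - A*y := ⟨_, rfl⟩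
    try rw [← hd3] at e4 ⊢
    field_simp
    rw [hd1, hd2]
    ring
  | succ k ih =>
    rw [sum_range_succ, ih]
    have p1 : pc Q Q k ≠ 0 := pc_ne fun i _ => h1 i
    have p2 : pc (A*Q/D) Q k ≠ 0 := pc_ne fun i _ => h2 i
    have p3 : pc (A*Q/E) Q k ≠ 0 := pc_ne fun i _ => h3 i
    have p4 : pc (A*Q^(n+2)) Q k ≠ 0 := pc_ne fun i _ => by
      have := h4 (n+2+i); rwa [pow_add, ← mul_assoc] at this
    have r1 : pc (Q^(n+1))⁻¹ Q (k+1) = (1-(Q^(n+1))⁻¹) * pc (Q^n)⁻¹ Q k := by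
      rw [pc_succ']; congr 2; field_simp; ring
    have r2 : pc (A*Q^(n+1)) Q (k+1) = (1-A*Q^(n+1)) * pc (A*Q^(n+2)) Q k := by
      rw [pc_succ']; congr 2; ring
    have r3 : pc (A*Q^(n+1+1)) Q (k+1) = pc (A*Q^(n+2)) Q k * (1-A*Q^(n+2)*Q^k) := pc_succ _ _ _
    have q1 := h1 k
    have q2 := h2 k
    have q3 := h3 k
    have q4 := h4 (n+1)
    have q5 := h4 (n+2+k)
    simp only [f6, G6, sg6, r1, r2, r3]
    simp only [pc_succ]
    have s1 : Q^(2*(k+1)) = Q^k*Q^k*Q*Q := by ring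
    have s2 : Q^(n+1) = Q^n*Q := by ring
    have s3 : Q^(n+2) = Q^n*Q*Q := by ring
    have s4 : Q^(k+1) = Q^k*Q := by ring
    have s5 : Q^(n+1+1) = Q^n*Q*Q := by ring
    have s6 : Q^(n+2+k) = Q^n*Q*Q*Q^k := by ring
    simp only [s1, s2, s3, s4, s5, s6] at *
    have hx : Q^k ≠ 0 := pow_ne_zero _ hQ
    have z1 : (A*(Q^n*Q*Q)/(D*E))^(k+1) = (A*(Q^n*Q)/(D*E))^k * Q^k * (A*(Q^n*Q*Q)/(D*E)) := by
      rw [pow_succ, ← mul_pow]; congr 2; ring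
    rw [z1, pow_succ (A*(Q^n*Q)/(D*E)) k]
    generalize (A*(Q^n*Q)/(D*E))^k = Z
    generalize pc Q Q k = P1 at *
    generalize pc (A*Q/D) Q k = P2 at *
    generalize pc (A*Q/E) Q k = P3 at *
    generalize pc (A*(Q^n*Q*Q)) Q k = P4 at *
    generalize pc (Q^n)⁻¹ Q k = P5
    generalize pc A Q k = P6
    generalize pc D Q k = P7
    generalize pc E Q k = P8
    clear z1 r1 r2 r3 s1 s2 s3 s4 s5 s6 ih h1 h2 h3 h4
    generalize Q^n = y at *
    generalize Q^k = x at *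
    have q5' : 1 - A*(y*Q*Q)*x ≠ 0 := by
      intro h; apply q5; linear_combination h
    have key := rat6 A D E Q x y hA hD hE hQ hx hy q1 e2 e3 q2 q3 q4 q5'
    clear e2 e3 q1 q2 q3 q4 q5 q5'
    generalize 1-A*Q/D*y = T0 at *
    generalize 1-A*Q/E*y = T1 at *
    generalize 1-A*Q/D*x = T2 at *
    generalize 1-A*Q/E*x = T3 at *
    generalize 1-A*(y*Q) = T4 at *
    generalize 1-A*(y*Q*Q)*x = T5 at *
    generalize 1-Q*x = T6 at *
    generalize 1-A*x = T7 at *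
    generalize 1-D*x = T8 at *
    generalize 1-E*x = T9 at *
    generalize 1-A*(x*Q) = T10 at *
    generalize 1-D*(x*Q) = T11 at *
    generalize 1-E*(x*Q) = T12 at *
    generalize 1-A*(x*x*Q*Q) = T13 at *
    generalize 1-y⁻¹*x = T14 at *
    generalize 1-(y*Q)⁻¹ = T15 at *
    generalize 1-A*Q/(D*E)*y = T16 at *
    generalize A*(y*Q)/(D*E) = T17 at *
    generalize A*(y*Q*Q)/(D*E) = T18 at *
    linear_combination (P6*T7*P7*T8*P8*T9*P5*Z/(P1*P2*P3*P4)) * key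

lemma sum6 (A D E Q : F) (hA : A ≠ 0) (hD : D ≠ 0) (hE : E ≠ 0) (hQ : Q ≠ 0)
    (h1 : ∀ i, 1 - Q * Q^i ≠ 0) (h2 : ∀ i, 1 - A*Q/D * Q^i ≠ 0) (h3 : ∀ i, 1 - A*Q/E * Q^i ≠ 0)
    (h4 : ∀ i, 1 - A*Q^i ≠ 0) (n : ℕ) :
    ∑ i ∈ range (n+1), f6 A D E Q n i =
      pc A Q (n+1) * pc (A*Q/(D*E)) Q n / (pc (A*Q/D) Q n * pc (A*Q/E) Q n) := by
  induction n with
  | zero => simp [f6, pc_zero, pc_succ]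
  | succ n ih =>
    have h := sum6_step A D E Q hA hD hE hQ h1 h2 h3 h4 n (n+1)
    have hy : Q^n ≠ 0 := pow_ne_zero _ hQ
    have z : pc (Q^n)⁻¹ Q (n+1) = 0 := pc_eq_zero (Nat.lt_succ_self n) (inv_mul_cancel₀ hy)
    rw [G6, z, sum_sub_distrib, ← mul_sum, sum_range_succ (fun i => f6 A D E Q n i) (n+1), ih] at h
    have z' : f6 A D E Q n (n+1) = 0 := by rw [f6, z]; simp
    rw [z'] at h
    have h' := sub_eq_zero.1 (h.trans (by simp))
    rw [h', sg6]
    simp only [pc_succ _ _ n, pc_succ _ _ (n+1)]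
    rw [add_zero, div_mul_div_comm]
    congr 1 <;> ring

/-- summand of Saalschuetz -/
def g3 (A B C Q : F) (k j : ℕ) : F :=
  pc (Q^k)⁻¹ Q j * pc (A*Q^k) Q j * pc (A*Q/(B*C)) Q j /
   (pc Q Q j * pc (A*Q/B) Q j * pc (A*Q/C) Q j) * Q^j

def G3 (A B C Q : F) (k j : ℕ) : F :=
  (1 - A*Q*Q^k*Q^k)/((1-A*Q/B*Q^k)*(1-A*Q/C*Q^k)*(1-A*Q^k)) *
  (pc (Q^k)⁻¹ Q j * pc (A*Q^k) Q (j+1) * pc (A*Q/(B*C)) Q (j+1) /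
   (pc Q Q j * pc (A*Q/B) Q j * pc (A*Q/C) Q j))

def sg3 (A B C Q : F) (k : ℕ) : F :=
  (1-B*Q^k)*(1-C*Q^k)/((1-A*Q/B*Q^k)*(1-A*Q/C*Q^k)) * (A*Q/(B*C))

lemma sum3_step (A B C Q : F) (hA : A ≠ 0) (hB : B ≠ 0) (hC : C ≠ 0) (hQ : Q ≠ 0)
    (h1 : ∀ i, 1 - Q * Q^i ≠ 0) (h2 : ∀ i, 1 - A*Q/B * Q^i ≠ 0) (h3 : ∀ i, 1 - A*Q/C * Q^i ≠ 0)
    (h4 : ∀ i, 1 - A*Q^i ≠ 0) (n k : ℕ) :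
    ∑ i ∈ range (k+1), (g3 A B C Q (n+1) i - sg3 A B C Q n * g3 A B C Q n i) = G3 A B C Q n k := by
  have e2 := h2 n
  have e3 := h3 n
  have e4 := h4 n
  have hy : Q^n ≠ 0 := pow_ne_zero _ hQ
  induction k with
  | zero =>
    simp only [zero_add, sum_range_one, g3, G3, sg3, pc_succ, pc_zero, pow_zero, mul_one, one_mul, div_one]
    have e2' : B - A*Q*Q^n ≠ 0 := by
      intro h; apply e2; field_simp; linear_combination h
    have e3' : C - A*Q*Q^n ≠ 0 := by
      intro h; apply e3; field_simp; linear_combination h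
    generalize Q^n = y at *
    have t1 : 1 - A*Q/B*y = (B - A*Q*y)/B := by field_simp
    have t2 : 1 - A*Q/C*y = (C - A*Q*y)/C := by field_simp
    rw [t1, t2]
    obtain ⟨d1, hd1⟩ : ∃ d1, d1 = B - A*Q*y := ⟨_, rfl⟩
    obtain ⟨d2, hd2⟩ : ∃ d2, d2 = C - A*Q*y := ⟨_, rfl⟩
    rw [← hd1] at e2' ⊢
    rw [← hd2] at e3' ⊢
    obtain ⟨d3, hd3⟩ : ∃ d2, d2 = 1 - A*y := ⟨_, rfl⟩
    try rw [← hd3] at e4 ⊢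
    field_simp
    rw [hd1, hd2]
    ring
  | succ k ih =>
    rw [sum_range_succ, ih]
    have p1 : pc Q Q k ≠ 0 := pc_ne fun i _ => h1 i
    have p2 : pc (A*Q/B) Q k ≠ 0 := pc_ne fun i _ => h2 i
    have p3 : pc (A*Q/C) Q k ≠ 0 := pc_ne fun i _ => h3 i
    have r1 : pc (Q^(n+1))⁻¹ Q (k+1) = (1-(Q^(n+1))⁻¹) * pc (Q^n)⁻¹ Q k := by
      rw [pc_succ']; congr 2; field_simp; ring
    have r2 : pc (A*Q^n) Q (k+1+1) = (1-A*Q^n) * pc (A*Q^(n+1)) Q (k+1) := by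
      rw [pc_succ']; congr 2; ring
    have r2' : pc (A*Q^n) Q (k+1) = (1-A*Q^n) * pc (A*Q^(n+1)) Q k := by
      rw [pc_succ']; congr 2; ring
    have q1 := h1 k
    have q2 := h2 k
    have q3 := h3 k
    simp only [g3, G3, sg3, r1, r2, r2']
    simp only [pc_succ]
    have s2 : Q^(n+1) = Q^n*Q := by ring
    have s4 : Q^(k+1) = Q^k*Q := by ring
    simp only [s2, s4] at *
    have hx : Q^k ≠ 0 := pow_ne_zero _ hQ
    generalize pc Q Q k = P1 at *
    generalize pc (A*Q/B) Q k = P2 at *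
    generalize pc (A*Q/C) Q k = P3 at *
    generalize pc (A*(Q^n*Q)) Q k = P4 at *
    generalize pc (Q^n)⁻¹ Q k = P5
    generalize pc (A*Q/(B*C)) Q k = P6
    clear r1 r2 r2' s2 s4 ih h1 h2 h3 h4
    generalize Q^n = y at *
    generalize Q^k = x at *
    have e2' : B - A*Q*y ≠ 0 := by
      intro h; apply e2; field_simp; linear_combination h
    have e3' : C - A*Q*y ≠ 0 := by
      intro h; apply e3; field_simp; linear_combination h
    have q2' : B - A*Q*x ≠ 0 := by
      intro h; apply q2; field_simp; linear_combination h
    have q3' : C - A*Q*x ≠ 0 := by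
      intro h; apply q3; field_simp; linear_combination h
    have t1 : 1 - A*Q/B*y = (B - A*Q*y)/B := by field_simp
    have t2 : 1 - A*Q/C*y = (C - A*Q*y)/C := by field_simp
    have t3 : 1 - A*Q/B*x = (B - A*Q*x)/B := by field_simp
    have t4 : 1 - A*Q/C*x = (C - A*Q*x)/C := by field_simp
    rw [t1, t2, t3, t4]
    clear t1 t2 t3 t4 e2 e3 q2 q3
    field_simp
    ring

lemma sum3 (A B C Q : F) (hA : A ≠ 0) (hB : B ≠ 0) (hC : C ≠ 0) (hQ : Q ≠ 0)
    (h1 : ∀ i, 1 - Q * Q^i ≠ 0) (h2 : ∀ i, 1 - A*Q/B * Q^i ≠ 0) (h3 : ∀ i, 1 - A*Q/C * Q^i ≠ 0)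
    (h4 : ∀ i, 1 - A*Q^i ≠ 0) (n : ℕ) :
    ∑ i ∈ range (n+1), g3 A B C Q n i =
      pc B Q n * pc C Q n / (pc (A*Q/B) Q n * pc (A*Q/C) Q n) * (A*Q/(B*C))^n := by
  induction n with
  | zero => simp [g3, pc_zero]
  | succ n ih =>
    have h := sum3_step A B C Q hA hB hC hQ h1 h2 h3 h4 n (n+1)
    have hy : Q^n ≠ 0 := pow_ne_zero _ hQ
    have z : pc (Q^n)⁻¹ Q (n+1) = 0 := pc_eq_zero (Nat.lt_succ_self n) (inv_mul_cancel₀ hy)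
    rw [G3, z, sum_sub_distrib, ← mul_sum, sum_range_succ (fun i => g3 A B C Q n i) (n+1), ih] at h
    have z' : g3 A B C Q n (n+1) = 0 := by rw [g3, z]; simp
    rw [z'] at h
    have h' := sub_eq_zero.1 (h.trans (by simp))
    rw [h', sg3]
    simp only [pc_succ _ _ n, pow_succ]
    rw [add_zero, mul_mul_mul_comm, div_mul_div_comm]
    congr 1
    · congr 1 <;> ring
    · ring
end hyper

open Finset
section watson
variable {F : Type*} [Field F]

lemma pc_inv_shift (Q : F) (hQ : Q ≠ 0) (h1 : ∀ i, 1 - Q * Q^i ≠ 0) (j i : ℕ) :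
    pc (Q^(j+i))⁻¹ Q j * (pc Q Q i * pc Q Q j * Q^(i*j)) = pc (Q^j)⁻¹ Q j * pc Q Q (j+i) := by
  induction i with
  | zero => simp [pc_zero]
  | succ i ih =>
    have a1 : pc (Q^(j+i+1))⁻¹ Q (j+1) = (1 - (Q^(j+i+1))⁻¹) * pc (Q^(j+i))⁻¹ Q j := by
      rw [pc_succ']; congr 2; field_simp; ring
    rw [pc_succ] at a1
    have hj : Q^j ≠ 0 := pow_ne_zero _ hQ
    have hi : Q^i ≠ 0 := pow_ne_zero _ hQ
    have a2 : pc (Q^(j+i+1))⁻¹ Q j * (1 - Q*Q^i) * Q^j = (1 - Q*Q^(j+i)) * pc (Q^(j+i))⁻¹ Q j := by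
      have e : (Q^(j+i+1))⁻¹ * Q^j = (Q*Q^i)⁻¹ := by
        field_simp; ring
      rw [e] at a1
      have : (1 - Q*Q^(j+i)) = - (Q*Q^(j+i)) * (1 - (Q^(j+i+1))⁻¹) := by
        field_simp; ring
      rw [this, mul_assoc (-(Q*Q^(j+i))), ← a1]
      rw [pow_add]
      field_simp
      ring
    rw [← add_assoc, pc_succ Q Q i, pc_succ Q Q (j+i)]
    calc pc (Q ^ (j + i + 1))⁻¹ Q j * (pc Q Q i * (1 - Q * Q ^ i) * pc Q Q j * Q ^ ((i + 1) * j))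
        = (pc (Q ^ (j + i + 1))⁻¹ Q j * (1 - Q * Q ^ i) * Q^j) * (pc Q Q i * pc Q Q j * Q ^ (i * j)) := by ring
      _ = _ := by rw [a2]; linear_combination (1 - Q*Q^(j+i)) * ih

def cW (A B C D E Q : F) (r j : ℕ) : F :=
  pc A Q (2*j) * (pc D Q j * pc E Q j * pc (Q^r)⁻¹ Q j * pc (Q^j)⁻¹ Q j * pc (A*Q/(B*C)) Q j) /
   (pc Q Q j * pc Q Q j * pc (A*Q/B) Q j * pc (A*Q/C) Q j * pc (A*Q/D) Q j * pc (A*Q/E) Q j *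
    pc (A*Q^(r+1)) Q j) * (A*Q^(r+1)/(D*E))^j * Q^j

lemma term_split (A B C D E Q : F) (hD : D ≠ 0) (hE : E ≠ 0) (hQ : Q ≠ 0)
    (h1 : ∀ i, 1 - Q * Q^i ≠ 0) (j i m : ℕ) :
    f6 A D E Q (j+m) (j+i) * g3 A B C Q (j+i) j =
      cW A B C D E Q (j+m) j * f6 (A*Q^(2*j)) (D*Q^j) (E*Q^j) Q m i := by
  have hj : Q^j ≠ 0 := pow_ne_zero _ hQ
  have hi : Q^i ≠ 0 := pow_ne_zero _ hQ
  have p1 : ∀ k, pc Q Q k ≠ 0 := fun k => pc_ne fun i _ => h1 i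
  have sh := pc_inv_shift Q hQ h1 j i
  have sh' : pc (Q^(j+i))⁻¹ Q j / pc Q Q (j+i) = pc (Q^j)⁻¹ Q j /(pc Q Q i * pc Q Q j * Q^(i*j)) := by
    rw [div_eq_div_iff (p1 _) (by simp [p1, hQ])]; exact sh
  have b1 : pc A Q (j+i) * pc (A*Q^(j+i)) Q j = pc A Q (2*j) * pc (A*Q^(2*j)) Q i := by
    rw [← pc_add, ← pc_add]; congr 1; ring
  have b2 : pc (A*Q^(j+m+1)) Q (j+i) = pc (A*Q^(j+m+1)) Q j * pc (A*Q^(2*j)*Q^(m+1)) Q i := by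
    rw [pc_add]; congr 2; ring
  have b3 : pc (A*Q/D) Q (j+i) = pc (A*Q/D) Q j * pc (A*Q^(2*j)*Q/(D*Q^j)) Q i := by
    rw [pc_add]; congr 2; field_simp; ring
  have b4 : pc (A*Q/E) Q (j+i) = pc (A*Q/E) Q j * pc (A*Q^(2*j)*Q/(E*Q^j)) Q i := by
    rw [pc_add]; congr 2; field_simp; ring
  have b5 : pc (Q^(j+m))⁻¹ Q (j+i) = pc (Q^(j+m))⁻¹ Q j * pc (Q^m)⁻¹ Q i := by
    rw [pc_add]; congr 2; field_simp; ring
  have b6 : (A*Q^(j+m+1)/(D*E))^(j+i) / Q^(i*j) =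
      (A*Q^(j+m+1)/(D*E))^j * (A*Q^(2*j)*Q^(m+1)/(D*Q^j*(E*Q^j)))^i := by
    rw [pow_add (A*Q^(j+m+1)/(D*E)), mul_div_assoc]; congr 1
    have : Q^(i*j) = (Q^j)^i := by rw [← pow_mul]; congr 1; ring
    rw [this, ← div_pow]; congr 1
    field_simp; ring
  calc _ = (1 - A*Q^(2*(j+i))) * (pc A Q (j+i) * pc (A*Q^(j+i)) Q j) * pc D Q (j+i) * pc E Q (j+i)
        * pc (Q^(j+m))⁻¹ Q (j+i) * pc (A*Q/(B*C)) Q j * (pc (Q^(j+i))⁻¹ Q j / pc Q Q (j+i))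
        / (pc (A*Q/D) Q (j+i) * pc (A*Q/E) Q (j+i) * pc (A*Q^(j+m+1)) Q (j+i) *
          (pc Q Q j * pc (A*Q/B) Q j * pc (A*Q/C) Q j)) * (A*Q^(j+m+1)/(D*E))^(j+i) * Q^j := by
          rw [f6, g3]
          simp only [div_eq_mul_inv, mul_inv]
          ring
    _ = (1 - A*Q^(2*(j+i))) * (pc A Q (j+i) * pc (A*Q^(j+i)) Q j) * pc D Q (j+i) * pc E Q (j+i)
        * pc (Q^(j+m))⁻¹ Q (j+i) * pc (A*Q/(B*C)) Q j * (pc (Q^j)⁻¹ Q j /(pc Q Q i * pc Q Q j))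
        / (pc (A*Q/D) Q (j+i) * pc (A*Q/E) Q (j+i) * pc (A*Q^(j+m+1)) Q (j+i) *
          (pc Q Q j * pc (A*Q/B) Q j * pc (A*Q/C) Q j)) * ((A*Q^(j+m+1)/(D*E))^(j+i) / Q^(i*j)) * Q^j := by
          rw [sh']
          simp only [div_eq_mul_inv, mul_inv]
          ring
    _ = _ := by
          rw [b1, b2, b3, b4, b5, b6, pc_add D, pc_add E, cW, f6]
          have : A*Q^(2*(j+i)) = A*Q^(2*j)*Q^(2*i) := by ring
          rw [this]
          generalize (A*Q^(2*j)*Q^(m+1)/(D*Q^j*(E*Q^j)))^i = Z1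
          generalize (A*Q^(j+m+1)/(D*E))^j = Z2
          generalize 1 - A*Q^(2*j)*Q^(2*i) = Z3
          simp only [div_eq_mul_inv, mul_inv]
          ring

/-- summand of 8phi7 -/
def t8 (A B C D E Q : F) (r k : ℕ) : F :=
  f6 A D E Q r k * (pc B Q k * pc C Q k / (pc (A*Q/B) Q k * pc (A*Q/C) Q k) * (A*Q/(B*C))^k)

lemma watson (A B C D E Q : F) (hA : A ≠ 0) (hB : B ≠ 0) (hC : C ≠ 0) (hD : D ≠ 0) (hE : E ≠ 0) (hQ : Q ≠ 0)
    (h1 : ∀ i, 1 - Q * Q^i ≠ 0) (hb : ∀ i, 1 - A*Q/B * Q^i ≠ 0) (hc : ∀ i, 1 - A*Q/C * Q^i ≠ 0)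
    (h2 : ∀ i, 1 - A*Q/D * Q^i ≠ 0) (h3 : ∀ i, 1 - A*Q/E * Q^i ≠ 0)
    (h4 : ∀ i, 1 - A*Q^i ≠ 0) (r : ℕ) :
    ∑ k ∈ range (r+1), t8 A B C D E Q r k =
      ∑ j ∈ range (r+1), cW A B C D E Q r j *
        (pc (A*Q^(2*j)) Q (r-j+1) * pc (A*Q/(D*E)) Q (r-j) /
          (pc (A*Q/D*Q^j) Q (r-j) * pc (A*Q/E*Q^j) Q (r-j))) := by
  have s1 : ∀ k, t8 A B C D E Q r k = ∑ j ∈ range (k+1), f6 A D E Q r k * g3 A B C Q k j := by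
    intro k
    rw [t8, ← sum3 A B C Q hA hB hC hQ h1 hb hc h4, mul_sum]
  simp_rw [s1]
  have sw : ∑ k ∈ range (r+1), ∑ j ∈ range (k+1), f6 A D E Q r k * g3 A B C Q k j
     = ∑ j ∈ range (r+1), ∑ k ∈ Ico j (r+1), f6 A D E Q r k * g3 A B C Q k j := by
    apply Finset.sum_comm'
    intro x y
    simp only [mem_range, mem_Ico]
    omega
  rw [sw]
  apply sum_congr rfl
  intro j hj
  have hj' : j ≤ r := by simpa [Nat.lt_succ_iff] using hj
  obtain ⟨m, rfl⟩ := Nat.exists_eq_add_of_le hj'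
  have hjn : Q^j ≠ 0 := pow_ne_zero _ hQ
  rw [sum_Ico_eq_sum_range]
  have : j + m + 1 - j = m + 1 := by omega
  rw [this]
  simp_rw [term_split A B C D E Q hD hE hQ h1]
  have d1 : A*Q^(2*j)*Q/(D*Q^j) = A*Q/D*Q^j := by field_simp; ring
  have d2 : A*Q^(2*j)*Q/(E*Q^j) = A*Q/E*Q^j := by field_simp; ring
  have d3 : A*Q^(2*j)*Q/(D*Q^j*(E*Q^j)) = A*Q/(D*E) := by field_simp; ring
  rw [← mul_sum, sum6 (A*Q^(2*j)) (D*Q^j) (E*Q^j) Q (by simp [hA, hQ]) (by simp [hD, hQ]) (by simp [hE, hQ]) hQ h1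
    (fun i => by rw [d1, mul_assoc, ← pow_add]; exact h2 _)
    (fun i => by rw [d2, mul_assoc, ← pow_add]; exact h3 _)
    (fun i => by rw [mul_assoc, ← pow_add]; exact h4 _), d1, d2, d3]
  have : j + m - j = m := by omega
  rw [this]

/-- Reflection -/
def wx (x A Q : F) (k : ℕ) : F := pc (x*A) Q k / pc (Q/x) Q k

lemma wx_refl0 (x A Q : F) (hx : x ≠ 0) (hQ : Q ≠ 0) (r : ℕ) (hA : A * Q^r = 1)
    (h : ∀ i < r, 1 - Q/x*Q^i ≠ 0) : 
    pc (x*A) Q r * ∏ i ∈ range r, Q^(i+1) = (-x)^r * pc (Q/x) Q r := by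
  have e : pc (x*A) Q r = ∏ i ∈ range r, (1 - x * (Q^(i+1))⁻¹) := by
    rw [pc, ← prod_range_reflect]
    apply prod_congr rfl
    intro i hi
    have hi := mem_range.1 hi
    have : A * Q^(r-1-i) = (Q^(i+1))⁻¹ := by
      apply eq_inv_of_mul_eq_one_left
      rw [mul_assoc, ← pow_add, ← hA]; congr 2; omega
    rw [mul_assoc, this]
  rw [e, ← prod_mul_distrib, pc, ← card_range r, ← prod_const, card_range, ← prod_mul_distrib]
  apply prod_congr rfl
  intro i _
  have : Q^(i+1) ≠ 0 := pow_ne_zero _ hQ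
  field_simp
  ring

lemma wx_refl (x A Q : F) (hx : x ≠ 0) (hQ : Q ≠ 0) (r : ℕ) (hA : A * Q^r = 1)
    (h : ∀ i < r, 1 - Q/x*Q^i ≠ 0) (k : ℕ) (hk : k ≤ r) :
    wx x A Q (r-k) * x^(2*k) * ∏ i ∈ range r, Q^(i+1) = wx x A Q k * (-x)^r * Q^(k*(r+1)) := by
  induction k with
  | zero =>
    have := wx_refl0 x A Q hx hQ r hA h
    have hp : pc (Q/x) Q r ≠ 0 := pc_ne h
    simp only [wx, Nat.sub_zero, mul_zero, pow_zero, zero_mul, pc_zero, mul_one, div_one, one_mul]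
    rw [div_mul_eq_mul_div, this]
    field_simp
  | succ k ih =>
    have ih := ih (by omega)
    obtain ⟨m, rfl⟩ : ∃ m, r = m + (k+1) := ⟨r-(k+1), by omega⟩
    have e1 : m + (k+1) - k = m + 1 := by omega
    have e2 : m + (k+1) - (k+1) = m := by omega
    rw [e1] at ih
    rw [e2]
    generalize ∏ i ∈ range (m+(k+1)), Q^(i+1) = P at *
    have hm := h m (by omega)
    have hk' := h k (by omega)
    have s1 : wx x A Q (m+1) = wx x A Q m * ((1 - x*A*Q^m)/(1 - Q/x*Q^m)) := by
      rw [wx, wx, pc_succ, pc_succ, mul_div_mul_comm]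
    have s2 : wx x A Q (k+1) = wx x A Q k * ((1 - x*A*Q^k)/(1 - Q/x*Q^k)) := by
      rw [wx, wx, pc_succ, pc_succ, mul_div_mul_comm]
    rw [s1] at ih
    rw [s2]
    -- relations
    have r1 : (1 - x*A*Q^m) * (Q^(k+1)) = -x * (1 - Q/x*Q^k) := by
      have : A*Q^m*Q^(k+1) = 1 := by rw [mul_assoc, ← pow_add]; exact hA
      have h2 : Q/x*x = Q := by field_simp
      linear_combination (-x) * this - Q^k * h2
    have r2 : (1 - x*A*Q^k) * (Q^(m+1)) = -x * (1 - Q/x*Q^m) := by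
      have : A*Q^k*Q^(m+1) = 1 := by rw [mul_assoc, ← pow_add, ← hA]; congr 2; omega
      have h2 : Q/x*x = Q := by field_simp
      linear_combination (-x) * this - Q^m * h2
    have hq1 : Q^(k+1) ≠ 0 := pow_ne_zero _ hQ
    have hq2 : Q^(m+1) ≠ 0 := pow_ne_zero _ hQ
    have r1' : (1 - x*A*Q^m) = -x * (1 - Q/x*Q^k) / Q^(k+1) := by rw [eq_div_iff hq1, r1]
    have r2' : (1 - x*A*Q^k) = -x * (1 - Q/x*Q^m) / Q^(m+1) := by rw [eq_div_iff hq2, r2]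
    rw [r1'] at ih
    rw [r2']
    have s3 : Q^((k+1)*(m+(k+1)+1)) = Q^(k*(m+(k+1)+1)) * Q^(k+1)*Q^(m+1) := by ring
    have s4 : x^(2*(k+1)) = x^(2*k)*x*x := by ring
    rw [s3, s4]
    generalize 1 - Q/x*Q^k = U at *
    generalize 1 - Q/x*Q^m = V at *
    generalize Q^(k+1) = Y at *
    generalize Q^(m+1) = Y' at *
    have ih' : wx x A Q m * x^(2*k) * P * (-x * U) = wx x A Q k * (-x)^(m+(k+1)) * Q^(k*(m+(k+1)+1)) * (V * Y) := by
      rw [← ih]; field_simp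
    field_simp
    linear_combination (-1) * ih'
end watson

open Finset
section refl
variable {F : Type*} [Field F]

/-- canonical summand -/
def TT (q Q a b e z : F) (k : ℕ) : F :=
  (1 - q * Q^(2*k)) * (pc (a*q) Q k * pc (q/a) Q k * pc (b*q) Q k * pc (q/b) Q k * pc q Q k * pc (q/e) Q k) /
    (pc (a*Q) Q k * pc (Q/a) Q k * pc (b*Q) Q k * pc (Q/b) Q k * pc Q Q k * pc (e*Q) Q k) * (z*e)^k

lemma TT_wx (q Q a b e z : F) (k : ℕ) :
    TT q Q a b e z k = (1 - q * Q^(2*k)) * (wx a q Q k * wx a⁻¹ q Q k * wx b q Q k * wx b⁻¹ q Q k *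
      wx 1 q Q k * wx e⁻¹ q Q k) * (z*e)^k := by
  have h1 : ∀ x : F, q/x = x⁻¹ * q := fun x => by ring
  have h2 : ∀ x : F, Q/x⁻¹ = x * Q := fun x => by simp; ring
  simp only [TT, wx, h1, h2, one_mul, div_one]
  simp only [div_eq_mul_inv, mul_inv]
  ring

lemma TT_anti (q Q a b e z : F) (ha : a ≠ 0) (hb : b ≠ 0) (he : e ≠ 0) (hQ : Q ≠ 0)
    (r k : ℕ) (hk : k ≤ r) (hA : q * Q^r = 1) (hz : z = Q^(2+3*r))
    (h1 : ∀ i < r, 1 - a*Q*Q^i ≠ 0) (h2 : ∀ i < r, 1 - Q/a*Q^i ≠ 0)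
    (h3 : ∀ i < r, 1 - b*Q*Q^i ≠ 0) (h4 : ∀ i < r, 1 - Q/b*Q^i ≠ 0)
    (h5 : ∀ i < r, 1 - Q*Q^i ≠ 0) (h6 : ∀ i < r, 1 - e*Q*Q^i ≠ 0) :
    TT q Q a b e z (r-k) = - TT q Q a b e z k := by
  have e2 : ∀ x : F, Q/x⁻¹ = x * Q := fun x => by simp; ring
  have w1 := wx_refl a q Q ha hQ r hA h2 k hk
  have w2 := wx_refl a⁻¹ q Q (inv_ne_zero ha) hQ r hA (by simpa only [e2] using h1) k hk
  have w3 := wx_refl b q Q hb hQ r hA h4 k hk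
  have w4 := wx_refl b⁻¹ q Q (inv_ne_zero hb) hQ r hA (by simpa only [e2] using h3) k hk
  have w5 := wx_refl 1 q Q one_ne_zero hQ r hA (by simpa only [div_one] using h5) k hk
  have w6 := wx_refl e⁻¹ q Q (inv_ne_zero he) hQ r hA (by simpa only [e2] using h6) k hk
  have hP : (∏ i ∈ range r, Q^(i+1))^2 = Q^(r*(r+1)) := by
    clear w1 w2 w3 w4 w5 w6
    have : ∀ r, (∏ i ∈ range r, Q^(i+1))^2 = Q^(r*(r+1)) := by
      intro r
      induction r with
      | zero => simp
      | succ r ih => rw [prod_range_succ, mul_pow, ih]; ring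
    exact this r
  generalize ∏ i ∈ range r, Q^(i+1) = P at *
  obtain ⟨m, rfl⟩ := Nat.exists_eq_add_of_le hk
  have em : k + m - k = m := by omega
  rw [em] at w1 w2 w3 w4 w5 w6 ⊢
  rw [TT_wx, TT_wx]
  have W := congrArg₂ (· * ·) (congrArg₂ (· * ·) (congrArg₂ (· * ·) w1 w2) (congrArg₂ (· * ·) w3 w4)) (congrArg₂ (· * ·) w5 w6)
  beta_reduce at W
  set W1 := wx a q Q m * wx a⁻¹ q Q m * wx b q Q m * wx b⁻¹ q Q m * wx 1 q Q m * wx e⁻¹ q Q m with hW1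
  set W2 := wx a q Q k * wx a⁻¹ q Q k * wx b q Q k * wx b⁻¹ q Q k * wx 1 q Q k * wx e⁻¹ q Q k with hW2
  have i1 : ∀ n, (a⁻¹)^n * a^n = 1 := fun n => by rw [← mul_pow, inv_mul_cancel₀ ha, one_pow]
  have i2 : ∀ n, (b⁻¹)^n * b^n = 1 := fun n => by rw [← mul_pow, inv_mul_cancel₀ hb, one_pow]
  have i3 : ∀ n, (e⁻¹)^n * e^n = 1 := fun n => by rw [← mul_pow, inv_mul_cancel₀ he, one_pow]
  have neg : ∀ x : F, (-x)^(k+m) = (-1)^(k+m) * x^(k+m) := fun x => by rw [← mul_pow]; congr 1; ring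
  have sg : ((-1:F)^(k+m))^6 = 1 := by rw [← pow_mul, mul_comm, pow_mul]; norm_num
  have W' : W1 * (e⁻¹)^(2*k) * Q^(3*((k+m)*(k+m+1))) = W2 * (e⁻¹)^(k+m) * Q^(6*(k*(k+m+1))) := by
    have l : W1 * (e⁻¹)^(2*k) * Q^(3*((k+m)*(k+m+1))) =
      W1 * (e⁻¹)^(2*k) * (((a⁻¹)^(2*k)*a^(2*k)) * ((b⁻¹)^(2*k)*b^(2*k)) * (P^2)^3) := by
      rw [i1, i2, hP, ← pow_mul]; ring
    have r : W2 * (e⁻¹)^(k+m) * Q^(6*(k*(k+m+1))) = W2 * (e⁻¹)^(k+m) * Q^(6*(k*(k+m+1))) *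
        (((a⁻¹)^(k+m)*a^(k+m)) * ((b⁻¹)^(k+m)*b^(k+m)) * ((-1:F)^(k+m))^6) := by
      rw [i1, i2, sg]; ring
    rw [l, r]
    rw [neg a, neg a⁻¹, neg b, neg b⁻¹, neg e⁻¹, one_pow] at W
    rw [hW1, hW2]
    have q6 : Q^(6*(k*(k+m+1))) = (Q^(k*(k+m+1)))^6 := by rw [← pow_mul]; ring
    rw [q6]
    generalize (-1:F)^(k+m) = s at *
    generalize a^(k+m) = s1 at *
    generalize a⁻¹^(k+m) = s2 at *
    generalize b^(k+m) = s3 at *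
    generalize b⁻¹^(k+m) = s4 at *
    generalize e⁻¹^(k+m) = s5 at *
    generalize a^(2*k) = u1 at *
    generalize a⁻¹^(2*k) = u2 at *
    generalize b^(2*k) = u3 at *
    generalize b⁻¹^(2*k) = u4 at *
    generalize e⁻¹^(2*k) = u5 at *
    generalize Q^(k*(k+m+1)) = y at *
    generalize wx a q Q m = x1 at *
    generalize wx a⁻¹ q Q m = x2 at *
    generalize wx b q Q m = x3 at *
    generalize wx b⁻¹ q Q m = x4 at *
    generalize wx 1 q Q m = x5 at *
    generalize wx e⁻¹ q Q m = x6 at *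
    generalize wx a q Q k = y1 at *
    generalize wx a⁻¹ q Q k = y2 at *
    generalize wx b q Q k = y3 at *
    generalize wx b⁻¹ q Q k = y4 at *
    generalize wx 1 q Q k = y5 at *
    generalize wx e⁻¹ q Q k = y6 at *
    linear_combination W
  have W'' : W1 * e^m * Q^(3*((k+m)*(k+m+1))) = W2 * e^k * Q^(6*(k*(k+m+1))) := by
    have h1 := i3 (2*k)
    have h2 := i3 (k+m)
    have := congrArg (· * (e^(2*k) * e^m)) W'
    have ee : e^(2*k)*e^m = e^(k+m)*e^k := by ring
    calc _ = W1 * (e⁻¹)^(2*k) * Q^(3*((k+m)*(k+m+1))) * (e^(2*k)*e^m) := by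
            linear_combination (-(W1 * e^m * Q^(3*((k+m)*(k+m+1))))) * h1
      _ = W2 * (e⁻¹)^(k+m) * Q^(6*(k*(k+m+1))) * (e^(k+m)*e^k) := by rw [W', ee]
      _ = _ := by linear_combination (W2 * e^k * Q^(6*(k*(k+m+1)))) * h2
  have hq : q = (Q^(k+m))⁻¹ := eq_inv_of_mul_eq_one_left hA
  have n1 : Q^(3*((k+m)*(k+m+1))) ≠ 0 := pow_ne_zero _ hQ
  apply mul_right_cancel₀ n1
  rw [mul_pow, mul_pow]
  have g1 : (1 - q*Q^(2*m)) * Q^k = Q^k - Q^m := by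
    have : q*Q^(2*m)*Q^k = Q^m := by
      linear_combination (Q^m) * hA
    linear_combination -this
  have g2 : (1 - q*Q^(2*k)) * Q^m = Q^m - Q^k := by
    have : q*Q^(2*k)*Q^m = Q^k := by
      linear_combination (Q^k) * hA
    linear_combination -this
  have n2 : Q^k * Q^m ≠ 0 := mul_ne_zero (pow_ne_zero _ hQ) (pow_ne_zero _ hQ)
  apply mul_right_cancel₀ n2
  calc (1 - q*Q^(2*m)) * W1 * (z^m*e^m) * Q^(3*((k+m)*(k+m+1))) * (Q^k*Q^m)
      = ((1 - q*Q^(2*m)) * Q^k) * (W1 * e^m * Q^(3*((k+m)*(k+m+1)))) * z^m * Q^m := by ring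
    _ = (Q^k-Q^m) * (W2 * e^k * Q^(6*(k*(k+m+1)))) * z^m * Q^m := by rw [g1, W'']
    _ = (Q^k-Q^m) * W2 * e^k * (z^k * Q^(3*((k+m)*(k+m+1)))*Q^k) := by
        rw [hz, ← pow_mul, ← pow_mul]
        have : Q^(6*(k*(k+m+1))) * Q^((2+3*(k+m))*m) * Q^m = Q^((2+3*(k+m))*k) * Q^(3*((k+m)*(k+m+1))) * Q^k := by
          rw [← pow_add, ← pow_add, ← pow_add, ← pow_add]; congr 1; ring
        linear_combination ((Q^k-Q^m) * W2 * e^k) * this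
    _ = - (((1 - q*Q^(2*k)) * Q^m) * W2 * (z^k*e^k) * Q^(3*((k+m)*(k+m+1))) * Q^k) := by
        rw [g2]; ring
    _ = _ := by ring

lemma TT_sum [CharZero F] (q Q a b e z : F) (ha : a ≠ 0) (hb : b ≠ 0) (he : e ≠ 0) (hQ : Q ≠ 0)
    (r M : ℕ) (hM : r < M) (hA : q * Q^r = 1) (hz : z*q^3 = Q^2)
    (h1 : ∀ i < r, 1 - a*Q*Q^i ≠ 0) (h2 : ∀ i < r, 1 - Q/a*Q^i ≠ 0)
    (h3 : ∀ i < r, 1 - b*Q*Q^i ≠ 0) (h4 : ∀ i < r, 1 - Q/b*Q^i ≠ 0)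
    (h5 : ∀ i < r, 1 - Q*Q^i ≠ 0) (h6 : ∀ i < r, 1 - e*Q*Q^i ≠ 0) :
    ∑ k ∈ range M, TT q Q a b e z k = 0 := by
  have hz' : z = Q^(2+3*r) := by
    have : q^3 * Q^(3*r) = 1 := by
      have : q^3 * Q^(3*r) = (q*Q^r)^3 := by ring
      rw [this, hA, one_pow]
    rw [pow_add, ← hz]; linear_combination (-z) * this
  have e1 : ∑ k ∈ range M, TT q Q a b e z k = ∑ k ∈ range (r+1), TT q Q a b e z k := by
    symm
    apply sum_subset
    · intro x; simp only [mem_range]; omega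
    · intro x _ hx
      simp only [mem_range, not_lt] at hx
      have : pc q Q x = 0 := pc_eq_zero hx hA
      simp [TT, this]
  rw [e1]
  have e2 : ∑ k ∈ range (r+1), TT q Q a b e z k = - ∑ k ∈ range (r+1), TT q Q a b e z k := by
    conv_lhs => rw [← sum_range_reflect]
    rw [← sum_neg_distrib]
    apply sum_congr rfl
    intro k hk
    have hk := mem_range.1 hk
    have := TT_anti q Q a b e z ha hb he hQ r k (by omega) hA hz' h1 h2 h3 h4 h5 h6
    rw [← this]; congr 1
  exact self_eq_neg.1 e2
end refl

open Finset
noncomputable section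

abbrev am : R →+* K := algebraMap R K

lemma am_inj : Function.Injective am := IsFractionRing.injective R K

section rel
variable {κ : Type*} [Field κ] (φ : R →+* κ)

/-- `x` is regular at the prime `ker φ`, with residue `y`. -/
def Rs (x : K) (y : κ) : Prop := ∃ f g : R, φ g ≠ 0 ∧ x * am g = am f ∧ y * φ g = φ f

variable {φ}
lemma Rs.of (f : R) : Rs φ (am f) (φ f) := ⟨f, 1, by simp, by simp, by simp⟩
lemma Rs.zero : Rs φ 0 0 := by simpa using Rs.of (φ := φ) 0
lemma Rs.one : Rs φ 1 1 := by simpa using Rs.of (φ := φ) 1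
lemma Rs.add {x x' : K} {y y' : κ} (h : Rs φ x y) (h' : Rs φ x' y') : Rs φ (x + x') (y + y') := by
  obtain ⟨f, g, h1, h2, h3⟩ := h
  obtain ⟨f', g', h1', h2', h3'⟩ := h'
  refine ⟨f * g' + f' * g, g * g', ?_, ?_, ?_⟩
  · rw [map_mul]; exact mul_ne_zero h1 h1'
  · rw [map_add, map_mul, map_mul, map_mul, ← h2, ← h2']; ring
  · rw [map_add, map_mul, map_mul, map_mul, ← h3, ← h3']; ring
lemma Rs.mul {x x' : K} {y y' : κ} (h : Rs φ x y) (h' : Rs φ x' y') : Rs φ (x * x') (y * y') := by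
  obtain ⟨f, g, h1, h2, h3⟩ := h
  obtain ⟨f', g', h1', h2', h3'⟩ := h'
  refine ⟨f * f', g * g', ?_, ?_, ?_⟩
  · rw [map_mul]; exact mul_ne_zero h1 h1'
  · rw [map_mul, map_mul, ← h2, ← h2']; ring
  · rw [map_mul, map_mul, ← h3, ← h3']; ring
lemma Rs.neg {x : K} {y : κ} (h : Rs φ x y) : Rs φ (-x) (-y) := by
  obtain ⟨f, g, h1, h2, h3⟩ := h
  exact ⟨-f, g, h1, by rw [map_neg, ← h2]; ring, by rw [map_neg, ← h3]; ring⟩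
lemma Rs.sub {x x' : K} {y y' : κ} (h : Rs φ x y) (h' : Rs φ x' y') : Rs φ (x - x') (y - y') := by
  simpa only [sub_eq_add_neg] using h.add h'.neg
lemma Rs.inv {x : K} {y : κ} (h : Rs φ x y) (hy : y ≠ 0) : Rs φ x⁻¹ y⁻¹ := by
  obtain ⟨f, g, h1, h2, h3⟩ := h
  have hf : φ f ≠ 0 := by rw [← h3]; exact mul_ne_zero hy h1
  have hf' : am f ≠ 0 := fun h0 => hf (by rw [am_inj (h0.trans (map_zero am).symm)]; simp)
  have hx : x ≠ 0 := by rintro rfl; apply hf'; rw [← h2]; simp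
  refine ⟨g, f, hf, ?_, ?_⟩
  · rw [← h2]; field_simp
  · rw [← h3]; field_simp
lemma Rs.div {x x' : K} {y y' : κ} (h : Rs φ x y) (h' : Rs φ x' y') (hy : y' ≠ 0) :
    Rs φ (x / x') (y / y') := by
  simpa only [div_eq_mul_inv] using h.mul (h'.inv hy)
lemma Rs.pow {x : K} {y : κ} (h : Rs φ x y) (k : ℕ) : Rs φ (x ^ k) (y ^ k) := by
  induction k with
  | zero => simpa using Rs.one
  | succ k ih => simpa only [pow_succ] using ih.mul h
lemma Rs.sum {ι : Type*} (s : Finset ι) {x : ι → K} {y : ι → κ} (h : ∀ i ∈ s, Rs φ (x i) (y i)) :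
    Rs φ (∑ i ∈ s, x i) (∑ i ∈ s, y i) := by
  classical
  induction s using Finset.induction_on with
  | empty => simpa using Rs.zero
  | insert a s ha ih =>
    rw [sum_insert ha, sum_insert ha]
    exact (h a (mem_insert_self _ _)).add (ih fun i hi => h i (mem_insert_of_mem hi))
lemma Rs.prod {ι : Type*} (s : Finset ι) {x : ι → K} {y : ι → κ} (h : ∀ i ∈ s, Rs φ (x i) (y i)) :
    Rs φ (∏ i ∈ s, x i) (∏ i ∈ s, y i) := by
  classical
  induction s using Finset.induction_on with
  | empty => simpa using Rs.one
  | insert a s ha ih =>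
    rw [prod_insert ha, prod_insert ha]
    exact (h a (mem_insert_self _ _)).mul (ih fun i hi => h i (mem_insert_of_mem hi))
lemma Rs.pc {x Q : K} {y Q' : κ} (h : Rs φ x y) (hQ : Rs φ Q Q') (k : ℕ) :
    Rs φ (pc x Q k) (pc y Q' k) :=
  Rs.prod _ fun i _ => Rs.one.sub (h.mul (hQ.pow i))

lemma Rs.ne {x : K} {y : κ} (h : Rs φ x y) (hy : y ≠ 0) : x ≠ 0 := by
  obtain ⟨f, g, h1, h2, h3⟩ := h
  rintro rfl
  rw [zero_mul] at h2
  have : f = 0 := am_inj (h2.symm.trans (map_zero am).symm)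
  rw [this, map_zero] at h3
  exact (mul_ne_zero hy h1) h3

/-- divisible by `p^e` at the prime `ker φ` -/
def In (φ : R →+* κ) (p : R) (e : ℕ) (x : K) : Prop := ∃ z y, Rs φ z y ∧ x = am p ^ e * z

lemma Rs.in0 {x : K} {y : κ} (h : Rs φ x y) (p : R) : In φ p 0 x := ⟨x, y, h, by simp⟩
lemma Rs.in1 {x : K} {p : R} (hp : ∀ f, φ f = 0 → p ∣ f) (h : Rs φ x 0) : In φ p 1 x := by
  obtain ⟨f, g, h1, h2, h3⟩ := h
  rw [zero_mul] at h3
  obtain ⟨f', rfl⟩ := hp f h3.symm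
  have : am g ≠ 0 := fun h0 => h1 (by rw [am_inj (h0.trans (map_zero am).symm)]; simp)
  refine ⟨am f' / am g, φ f' / φ g, (Rs.of _).div (Rs.of _) h1, ?_⟩
  rw [eq_comm, pow_one, ← mul_div_assoc, ← map_mul, ← h2]; field_simp
lemma In.mul {x x' : K} {p : R} {e e' : ℕ} (h : In φ p e x) (h' : In φ p e' x') :
    In φ p (e + e') (x * x') := by
  obtain ⟨z, y, h1, rfl⟩ := h
  obtain ⟨z', y', h1', rfl⟩ := h'
  exact ⟨z * z', y * y', h1.mul h1', by ring⟩
lemma In.add {x x' : K} {p : R} {e : ℕ} (h : In φ p e x) (h' : In φ p e x') :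
    In φ p e (x + x') := by
  obtain ⟨z, y, h1, rfl⟩ := h
  obtain ⟨z', y', h1', rfl⟩ := h'
  exact ⟨z + z', y + y', h1.add h1', by ring⟩
lemma In.sum {ι : Type*} (s : Finset ι) {x : ι → K} {p : R} {e : ℕ} (h : ∀ i ∈ s, In φ p e (x i)) :
    In φ p e (∑ i ∈ s, x i) := by
  classical
  induction s using Finset.induction_on with
  | empty => exact ⟨0, 0, Rs.zero, by simp⟩
  | insert a s ha ih =>
    rw [sum_insert ha]
    exact (h a (mem_insert_self _ _)).add (ih fun i hi => h i (mem_insert_of_mem hi))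
lemma In.mulr {x x' : K} {p : R} {e : ℕ} {y : κ} (h : In φ p e x) (h' : Rs φ x' y) :
    In φ p e (x * x') := h.mul (h'.in0 p)
end rel

lemma final {ι : Type*} (s : Finset ι) (p : ι → R) (e : ι → ℕ) (hp : ∀ i ∈ s, Prime (p i))
    (hr : ∀ i ∈ s, ∀ j ∈ s, i ≠ j → ¬ p i ∣ p j) (x : K)
    (h : ∀ i ∈ s, ∃ f g : R, ¬ p i ∣ g ∧ x * am g = am (p i ^ e i * f)) :
    modCong (∏ i ∈ s, p i ^ e i) x := by
  obtain ⟨num, den, hc, hx⟩ := IsFractionRing.exists_reduced_fraction (A := R) (K := K) x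
  have hd : (den : R) ≠ 0 := nonZeroDivisors.ne_zero den.2
  have hx' : x * am den = am num := by
    rw [← hx]; exact IsLocalization.mk'_spec K num den
  have hdv : (∏ i ∈ s, p i ^ e i) ∣ num := by
    apply Finset.prod_dvd_of_isRelPrime
    · intro i hi j hj hij
      apply IsRelPrime.pow
      exact ((hp i hi).irreducible.isRelPrime_iff_not_dvd).2 (hr i hi j hj hij)
    · intro i hi
      obtain ⟨f, g, hg, hxg⟩ := h i hi
      have : num * g = p i ^ e i * (f * den) := by
        apply am_inj
        rw [map_mul, ← hx', mul_right_comm, hxg, map_mul, map_mul, map_mul]; ring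
      exact (hp i hi).pow_dvd_of_dvd_mul_right _ hg ⟨_, this⟩
  obtain ⟨f, hf⟩ := hdv
  refine ⟨f, den, hd, ?_, by rw [← hf]; exact hx'⟩
  intro P hP hPM hPd
  exact hP.not_isUnit (hc (hPM.trans ⟨f, hf⟩) hPd)

lemma Phi_eq (m : ℕ) : Phi m = Polynomial.aeval (MvPolynomial.X 0 : R) (Polynomial.cyclotomic m ℚ) := rfl

lemma Phi_prime (m : ℕ) (hm : 0 < m) : Prime (Phi m) := by
  have h1 : Prime (Polynomial.cyclotomic m ℚ) := (Polynomial.cyclotomic.irreducible_rat hm).prime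
  have h2 : Prime ((MvPolynomial.uniqueAlgEquiv ℚ ({0} : Set (Fin 4))).symm (Polynomial.cyclotomic m ℚ)) :=
    (MulEquiv.prime_iff (MvPolynomial.uniqueAlgEquiv ℚ ({0} : Set (Fin 4))).symm.toMulEquiv).2 h1
  have h3 := (MvPolynomial.prime_rename_iff (σ := Fin 4) ({0} : Set (Fin 4))).2 h2
  convert h3 using 1
  rw [Phi_eq]
  have : Polynomial.aeval (MvPolynomial.X 0 : R) = ((MvPolynomial.rename (R := ℚ) ((↑) : ({0} : Set (Fin 4)) → Fin 4)).comp
     (MvPolynomial.uniqueAlgEquiv ℚ ({0} : Set (Fin 4))).symm.toAlgHom) := by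
    ext
    simp
  rw [this]; rfl

/-- evaluation at complex numbers -/
def ev (z a b : ℂ) : R →+* ℂ := MvPolynomial.eval₂Hom (algebraMap ℚ ℂ) ![z, a, b, 0]
@[simp] lemma ev_X0 (z a b : ℂ) : ev z a b (MvPolynomial.X 0) = z := by simp [ev]
@[simp] lemma ev_X1 (z a b : ℂ) : ev z a b (MvPolynomial.X 1) = a := by simp [ev]
@[simp] lemma ev_X2 (z a b : ℂ) : ev z a b (MvPolynomial.X 2) = b := by simp [ev]
lemma ev_Phi (z a b : ℂ) (m : ℕ) : ev z a b (Phi m) = (Polynomial.cyclotomic m ℂ).eval z := by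
  rw [Phi, Polynomial.hom_eval₂, ev_X0, ← Polynomial.map_cyclotomic m (algebraMap ℚ ℂ), Polynomial.eval_map]
  congr 1
  ext; simp [ev]

def zt (m : ℕ) : ℂ := Complex.exp (2 * Real.pi * Complex.I / m)
lemma zt_prim (m : ℕ) (hm : 0 < m) : IsPrimitiveRoot (zt m) m := Complex.isPrimitiveRoot_exp m hm.ne'

lemma ev_zt (a b : ℂ) (m : ℕ) (hm : 0 < m) : ev (zt m) a b (Phi m) = 0 := by
  rw [ev_Phi]; exact (zt_prim m hm).isRoot_cyclotomic hm

lemma Phi_not_dvd (m m' : ℕ) (hm : 0 < m) (h' : 0 < m') (h : m ≠ m') : ¬ Phi m ∣ Phi m' := by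
  intro hd
  have h1 := map_dvd (ev (zt m) 0 0) hd
  rw [ev_zt _ _ m hm, zero_dvd_iff, ev_Phi] at h1
  have : NeZero ((m' : ℕ) : ℂ) := ⟨by exact_mod_cast h'.ne'⟩
  have h2 := (Polynomial.isRoot_cyclotomic_iff (R := ℂ)).1 h1
  exact h ((zt_prim m hm).unique h2)

/-- `φ` is the reduction modulo `Phi m`. -/
structure Sp {κ : Type*} [Field κ] (φ : R →+* κ) (m : ℕ) : Prop where
  pos : 0 < m
  ker : ∀ f, φ f = 0 ↔ Phi m ∣ f

lemma exSp (m : ℕ) (hm : 0 < m) : ∃ (κ : Type) (_ : Field κ) (_ : CharZero κ) (φ : R →+* κ), Sp φ m := by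
  have hp := Phi_prime m hm
  have : (Ideal.span {Phi m}).IsPrime := (Ideal.span_singleton_prime hp.ne_zero).2 hp
  refine ⟨FractionRing (R ⧸ Ideal.span {Phi m}), inferInstance, algebraRat.charZero _,
    (algebraMap (R ⧸ Ideal.span {Phi m}) _).comp (Ideal.Quotient.mk _), hm, ?_⟩
  intro f
  rw [RingHom.comp_apply, FaithfulSMul.algebraMap_eq_zero_iff, Ideal.Quotient.eq_zero_iff_mem, Ideal.mem_span_singleton]

namespace Sp
variable {κ : Type*} [Field κ] {φ : R →+* κ} {m : ℕ}
lemma ne_of_ev (S : Sp φ m) {f : R} (a b : ℂ) (h : ev (zt m) a b f ≠ 0) : φ f ≠ 0 := by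
  intro h0
  have h1 := map_dvd (ev (zt m) a b) ((S.ker f).1 h0)
  rw [ev_zt _ _ m S.pos, zero_dvd_iff] at h1
  exact h h1
end Sp
end

open Finset
noncomputable section
namespace Sp
variable {κ : Type*} [Field κ] {φ : R →+* κ} {m : ℕ}
open MvPolynomial (X)

lemma a_ne (S : Sp φ m) : φ (X 1) ≠ 0 := S.ne_of_ev 1 1 (by simp)
lemma b_ne (S : Sp φ m) : φ (X 2) ≠ 0 := S.ne_of_ev 1 1 (by simp)
lemma q_ne (S : Sp φ m) : φ (X 0) ≠ 0 :=
  S.ne_of_ev 1 1 (by simpa using (zt_prim m S.pos).ne_zero S.pos.ne')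
lemma q_pow (S : Sp φ m) : φ (X 0) ^ m = 1 := by
  have h : Phi m ∣ (X 0 : R) ^ m - 1 := by
    have := map_dvd (Polynomial.aeval (X 0 : R)) (Polynomial.cyclotomic.dvd_X_pow_sub_one m ℚ)
    simpa [Phi_eq] using this
  have := (S.ker _).2 h
  rw [map_sub, map_pow, map_one] at this
  exact sub_eq_zero.1 this
lemma q_pow_dvd (S : Sp φ m) {j : ℕ} (h : m ∣ j) : φ (X 0) ^ j = 1 := by
  obtain ⟨c, rfl⟩ := h
  rw [pow_mul, S.q_pow, one_pow]
lemma dvd_of_q_pow (S : Sp φ m) {j : ℕ} (h : φ (X 0) ^ j = 1) : m ∣ j := by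
  by_contra hj
  refine S.ne_of_ev (f := X 0 ^ j - 1) 0 0 ?_ (by simp [h])
  simp only [map_sub, map_pow, ev_X0, map_one]
  intro h0
  exact hj (((zt_prim m S.pos).pow_eq_one_iff_dvd j).1 (sub_eq_zero.1 h0))
lemma one_sub_ne (S : Sp φ m) {j : ℕ} (h : ¬ m ∣ j) : 1 - φ (X 0) ^ j ≠ 0 :=
  fun h0 => h (S.dvd_of_q_pow (sub_eq_zero.1 h0).symm)
lemma one_sub_a_ne (S : Sp φ m) (j : ℕ) : 1 - φ (X 1) * φ (X 0) ^ j ≠ 0 := by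
  have := S.ne_of_ev (f := 1 - X 1 * X 0 ^ j) 0 0 (by simp)
  simpa using this
lemma one_sub_b_ne (S : Sp φ m) (j : ℕ) : 1 - φ (X 2) * φ (X 0) ^ j ≠ 0 := by
  have := S.ne_of_ev (f := 1 - X 2 * X 0 ^ j) 0 0 (by simp)
  simpa using this
lemma one_sub_a'_ne (S : Sp φ m) (j : ℕ) : 1 - φ (X 0) ^ j / φ (X 1) ≠ 0 := by
  have := S.ne_of_ev (f := X 1 - X 0 ^ j) 0 0
    (by simpa using fun h => absurd h ((zt_prim m S.pos).ne_zero S.pos.ne'))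
  have h1 := S.a_ne
  intro h
  apply this
  rw [map_sub, map_pow]
  field_simp at h
  simpa using h
lemma one_sub_b'_ne (S : Sp φ m) (j : ℕ) : 1 - φ (X 0) ^ j / φ (X 2) ≠ 0 := by
  have := S.ne_of_ev (f := X 2 - X 0 ^ j) 0 0
    (by simpa using fun h => absurd h ((zt_prim m S.pos).ne_zero S.pos.ne'))
  have h1 := S.b_ne
  intro h
  apply this
  rw [map_sub, map_pow]
  field_simp at h
  simpa using h
end Sp

section blk
variable {F : Type*} [Field F]
/-- the part of the summand with `a`, `b` -/
def pA (q Q a b : F) (k : ℕ) : F :=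
  (pc (a*q) Q k * pc (q/a) Q k * pc (b*q) Q k * pc (q/b) Q k) /
    (pc (a*Q) Q k * pc (Q/a) Q k * pc (b*Q) Q k * pc (Q/b) Q k)
def pW (q Q : F) (k : ℕ) : F := pc q Q k / pc Q Q k
def pAs (q Q a b s : F) (k : ℕ) : F :=
  (pc (a*q*s) Q k * pc (q/a*s) Q k * pc (b*q*s) Q k * pc (q/b*s) Q k) /
    (pc (a*Q*s) Q k * pc (Q/a*s) Q k * pc (b*Q*s) Q k * pc (Q/b*s) Q k)
def pWs (q Q s : F) (k : ℕ) : F := pc (q*s) Q k / pc (Q*s) Q k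
lemma pAs_one (q Q a b : F) (k : ℕ) : pAs q Q a b 1 k = pA q Q a b k := by
  simp only [pA, pAs, mul_one]
lemma pWs_one (q Q : F) (k : ℕ) : pWs q Q 1 k = pW q Q k := by
  simp only [pW, pWs, mul_one]
lemma pA_add (q Q a b : F) (k l : ℕ) : pA q Q a b (k+l) = pA q Q a b k * pAs q Q a b (Q^k) l := by
  simp only [pA, pAs, pc_add, div_eq_mul_inv, mul_inv]; ring
lemma pW_add (q Q : F) (k l : ℕ) : pW q Q (k+l) = pW q Q k * pWs q Q (Q^k) l := by
  simp only [pW, pWs, pc_add, div_eq_mul_inv, mul_inv]; ring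
lemma TT_one (q Q a b z : F) (k : ℕ) :
    TT q Q a b 1 z k = (1 - q * Q^(2*k)) * pA q Q a b k * pW q Q k ^ 2 * z^k := by
  simp only [TT, pA, pW, div_eq_mul_inv, mul_inv, one_mul, mul_one, inv_one]; ring
end blk

section modm
variable {κ : Type*} [Field κ] {φ : R →+* κ} {m : ℕ}
open MvPolynomial (X)

lemma rq : Rs φ qv (φ (X 0)) := Rs.of _
lemma ra : Rs φ av (φ (X 1)) := Rs.of _
lemma rb : Rs φ bv (φ (X 2)) := Rs.of _

lemma pAs_rel (S : Sp φ m) (d : ℕ) {s : K} (hs : Rs φ s 1) (k : ℕ) :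
    Rs φ (pAs qv (qv^d) av bv s k) (pA (φ (X 0)) (φ (X 0)^d) (φ (X 1)) (φ (X 2)) k) := by
  have hQ : Rs φ (qv^d) (φ (X 0)^d) := rq.pow d
  have M : ∀ {x : K} {y : κ}, Rs φ x y → Rs φ (x*s) y := fun h => by simpa using h.mul hs
  have e : ∀ (x : κ) (i : ℕ), x * φ (X 0)^d * (φ (X 0)^d)^i = x * φ (X 0)^(d*(i+1)) := fun x i => by ring
  have e' : ∀ (x : κ) (i : ℕ), φ (X 0)^d / x * (φ (X 0)^d)^i = φ (X 0)^(d*(i+1)) / x := fun x i => by ring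
  refine Rs.div ((((M (ra.mul rq)).pc hQ k).mul ((M (rq.div ra S.a_ne)).pc hQ k)).mul ((M (rb.mul rq)).pc hQ k)
    |>.mul ((M (rq.div rb S.b_ne)).pc hQ k))
    ((((M (ra.mul hQ)).pc hQ k).mul ((M (hQ.div ra S.a_ne)).pc hQ k)).mul ((M (rb.mul hQ)).pc hQ k)
    |>.mul ((M (hQ.div rb S.b_ne)).pc hQ k)) ?_
  refine mul_ne_zero (mul_ne_zero (mul_ne_zero (pc_ne fun i _ => ?_) (pc_ne fun i _ => ?_)) (pc_ne fun i _ => ?_)) (pc_ne fun i _ => ?_)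
  · rw [e]; exact S.one_sub_a_ne _
  · rw [e']; exact S.one_sub_a'_ne _
  · rw [e]; exact S.one_sub_b_ne _
  · rw [e']; exact S.one_sub_b'_ne _

lemma pcQ_ne (S : Sp φ m) (d : ℕ) (hd : Nat.Coprime m d) (k : ℕ) (hk : k < m) :
    pc (φ (X 0)^d) (φ (X 0)^d) k ≠ 0 := by
  refine pc_ne fun i hi => ?_
  have : φ (X 0)^d * (φ (X 0)^d)^i = φ (X 0)^(d*(i+1)) := by ring
  rw [this]
  refine S.one_sub_ne fun h => ?_
  have := Nat.le_of_dvd (by omega) (hd.dvd_of_dvd_mul_left h)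
  omega

lemma pWs_rel (S : Sp φ m) (d : ℕ) (hd : Nat.Coprime m d) {s : K} (hs : Rs φ s 1) (k : ℕ) (hk : k < m) :
    Rs φ (pWs qv (qv^d) s k) (pW (φ (X 0)) (φ (X 0)^d) k) := by
  have hQ : Rs φ (qv^d) (φ (X 0)^d) := rq.pow d
  have M : ∀ {x : K} {y : κ}, Rs φ x y → Rs φ (x*s) y := fun h => by simpa using h.mul hs
  exact Rs.div ((M rq).pc hQ k) ((M hQ).pc hQ k) (pcQ_ne S d hd k hk)

lemma Q_rel (S : Sp φ m) (j : ℕ) (h : m ∣ j) : Rs φ (qv^j) 1 := by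
  rw [← S.q_pow_dvd h]; exact rq.pow j

lemma qv_ne : qv ≠ 0 := fun h => MvPolynomial.X_ne_zero (R := ℚ) (0 : Fin 4) (am_inj (h.trans (map_zero am).symm))
lemma qv_pow_ne (j : ℕ) (hj : 0 < j) : (1:K) - qv^j ≠ 0 := by
  intro h
  have h1 : (1 : R) - X 0 ^ j = 0 := am_inj (by rw [map_sub, map_pow, map_one, map_zero]; exact h)
  have h2 := congrArg (ev 0 0 0) h1
  simp [hj.ne'] at h2

lemma geom_rel (S : Sp φ m) (e : ℕ) : Rs φ (∑ j ∈ range e, (qv^m)^j) (e : κ) := by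
  have := Rs.sum (φ := φ) (range e) (x := fun j => (qv^m)^j) (y := fun _ => 1)
    (fun j _ => by simpa using (Q_rel S m dvd_rfl).pow j)
  simpa using this

lemma one_sub_geom (e : ℕ) : (1:K) - qv^(m*e) = (1 - qv^m) * ∑ j ∈ range e, (qv^m)^j := by
  rw [pow_mul, mul_comm, geom_sum_mul_neg]

/-- a full period of the `q`-factorial ratio is regular -/
lemma period [CharZero κ] (S : Sp φ m) (d : ℕ) (hd0 : 0 < d) (hd : Nat.Coprime m d) (r t : ℕ) (hr : r < m)
    (ht : 1 + d * r = m * t) (u : ℕ) : ∃ y, Rs φ (pWs qv (qv^d) ((qv^d)^(u*m)) m) y := by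
  have hQ : Rs φ (qv^d) (φ (X 0)^d) := rq.pow d
  have hs : Rs φ ((qv^d)^(u*m)) 1 := by
    rw [← pow_mul]; exact Q_rel S _ ⟨d*u, by ring⟩
  have M : ∀ {x : K} {y : κ}, Rs φ x y → Rs φ (x*(qv^d)^(u*m)) y := fun h => by simpa using h.mul hs
  obtain ⟨m', rfl⟩ : ∃ m', m = m' + 1 := ⟨m - 1, by have := S.pos; omega⟩
  set m := m' + 1 with hm
  have hm0 : (1:K) - qv^m ≠ 0 := qv_pow_ne m (by omega)
  have hden : pc (qv^d * (qv^d)^(u*m)) (qv^d) m = (1 - qv^m) *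
      (pc (qv^d * (qv^d)^(u*m)) (qv^d) m' * ∑ j ∈ range (d*(u+1)), (qv^m)^j) := by
    rw [hm, pc_succ, ← hm]
    have : qv^d * (qv^d)^(u*m) * (qv^d)^m' = qv^(m*(d*(u+1))) := by
      rw [← pow_mul, ← pow_mul, ← pow_add, ← pow_add]; congr 1; rw [hm]; ring
    rw [this, one_sub_geom]; ring
  have hnum : pc (qv * (qv^d)^(u*m)) (qv^d) m = (1 - qv^m) *
      ((∑ j ∈ range (t+d*u), (qv^m)^j) * ∏ i ∈ (range m).erase r, (1 - qv * (qv^d)^(u*m) * (qv^d)^i)) := by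
    rw [pc, ← mul_prod_erase _ _ (mem_range.2 hr)]
    have : qv * (qv^d)^(u*m) * (qv^d)^r = qv^(m*(t+d*u)) := by
      have e : m * (t + d*u) = 1 + d*r + d*(u*m) := by rw [ht]; ring
      rw [e]; ring
    rw [this, one_sub_geom]; ring
  rw [pWs, hden, hnum, mul_div_mul_left _ _ hm0]
  refine ⟨_, Rs.div ((geom_rel S _).mul (Rs.prod _ fun i _ => Rs.one.sub ((M rq).mul (hQ.pow i))))
    (((M hQ).pc hQ m').mul (geom_rel S _)) (mul_ne_zero (pcQ_ne S d hd m' (by omega)) ?_)⟩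
  have : d * (u+1) ≠ 0 := by positivity
  exact_mod_cast this

lemma pW_int [CharZero κ] (S : Sp φ m) (d : ℕ) (hd0 : 0 < d) (hd : Nat.Coprime m d) (r t : ℕ) (hr : r < m)
    (ht : 1 + d * r = m * t) (u : ℕ) : ∃ y, Rs φ (pW qv (qv^d) (u*m)) y := by
  induction u with
  | zero => exact ⟨1, by simpa [pW, pc_zero] using Rs.one⟩
  | succ u ih =>
    obtain ⟨y, hy⟩ := ih
    obtain ⟨y', hy'⟩ := period S d hd0 hd r t hr ht u
    exact ⟨y * y', by rw [add_mul, one_mul, pW_add]; exact hy.mul hy'⟩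

lemma exists_r (m d : ℕ) (hm : 0 < m) (hd : Nat.Coprime m d) : ∃ r t, r < m ∧ 1 + d * r = m * t := by
  obtain ⟨r, hr, h⟩ := Nat.exists_mul_mod_eq_of_coprime (m-1) hd.symm hm.ne'
  rw [Nat.mod_eq_of_lt (show m - 1 < m by omega)] at h
  refine ⟨r, d*r/m + 1, hr, ?_⟩
  have := Nat.div_add_mod (d*r) m
  rw [h] at this
  rw [mul_add]; omega

lemma modm [CharZero κ] (S : Sp φ m) (d : ℕ) (hd3 : 3 ≤ d) (hd : Nat.Coprime m d) (c : ℕ) :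
    Rs φ (∑ k ∈ range (c*m), TT qv (qv^d) av bv 1 (qv^(2*d-3)) k) 0 := by
  obtain ⟨r, t, hr, ht⟩ := exists_r m d S.pos hd
  have hQ : Rs φ (qv^d) (φ (X 0)^d) := rq.pow d
  have e : ∀ (x : κ) (i : ℕ), x * φ (X 0)^d * (φ (X 0)^d)^i = x * φ (X 0)^(d*(i+1)) := fun x i => by ring
  have e' : ∀ (x : κ) (i : ℕ), φ (X 0)^d / x * (φ (X 0)^d)^i = φ (X 0)^(d*(i+1)) / x := fun x i => by ring
  have en : ∀ i < r, 1 - φ (X 0)^(d*(i+1)) ≠ 0 := by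
    intro i hi
    refine S.one_sub_ne fun h => ?_
    have := Nat.le_of_dvd (by omega) (hd.dvd_of_dvd_mul_left h)
    omega
  have hz : φ (X 0) ^ (2*d-3) * φ (X 0)^3 = (φ (X 0)^d)^2 := by
    rw [← pow_add, ← pow_mul]; congr 1; omega
  have hsum : ∑ k ∈ range m, TT (φ (X 0)) (φ (X 0)^d) (φ (X 1)) (φ (X 2)) 1 (φ (X 0)^(2*d-3)) k = 0 := by
    apply TT_sum _ _ _ _ _ _ S.a_ne S.b_ne one_ne_zero (pow_ne_zero _ S.q_ne) r m hr
    · rw [← pow_mul, ← pow_succ', add_comm, ht]; exact S.q_pow_dvd ⟨_, rfl⟩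
    · exact hz
    · intro i _; rw [e]; exact S.one_sub_a_ne _
    · intro i _; rw [e']; exact S.one_sub_a'_ne _
    · intro i _; rw [e]; exact S.one_sub_b_ne _
    · intro i _; rw [e']; exact S.one_sub_b'_ne _
    · intro i hi; have := en i hi; have e0 := e 1 i; rw [one_mul, one_mul] at e0; rwa [e0]
    · intro i hi; have := en i hi; rwa [e, one_mul]
  induction c with
  | zero => simpa using Rs.zero
  | succ c ih =>
    rw [add_mul, one_mul, sum_range_add]
    have hs : Rs φ ((qv^d)^(c*m)) 1 := by
      rw [← pow_mul]; exact Q_rel S _ ⟨d*c, by ring⟩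
    have hA := pAs_rel S d Rs.one (c*m)
    rw [pAs_one] at hA
    obtain ⟨w, hW⟩ := pW_int S d (by omega) hd r t hr ht c
    have hC := (hA.mul (hW.pow 2)).mul ((rq (φ := φ)).pow ((2*d-3)*(c*m)))
    have hS := Rs.sum (φ := φ) (range m) (x := fun v => (1 - qv * (qv^d)^(2*v) * ((qv^d)^(c*m))^2) * pAs qv (qv^d) av bv ((qv^d)^(c*m)) v *
      pWs qv (qv^d) ((qv^d)^(c*m)) v ^ 2 * (qv^(2*d-3))^v)
      (y := fun v => TT (φ (X 0)) (φ (X 0)^d) (φ (X 1)) (φ (X 2)) 1 (φ (X 0)^(2*d-3)) v) (by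
        intro v hv
        rw [TT_one]
        refine Rs.mul (Rs.mul (Rs.mul (Rs.one.sub ?_) (pAs_rel S d hs v)) ((pWs_rel S d hd hs v (mem_range.1 hv)).pow 2)) ((rq.pow _).pow v)
        simpa using (rq.mul (hQ.pow (2*v))).mul (hs.pow 2))
    rw [hsum] at hS
    have := hC.mul hS
    rw [mul_zero] at this
    convert ih.add this using 1
    · congr 1
      rw [mul_sum]
      apply sum_congr rfl
      intro v _
      rw [TT_one, pA_add, pW_add]
      have e1 : qv * (qv^d)^(2*(c*m+v)) = qv * (qv^d)^(2*v) * ((qv^d)^(c*m))^2 := by ring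
      rw [e1, pow_add, ← pow_mul qv (2*d-3)]; ring
    · simp
end modm
end

open Finset
noncomputable section
section sq
open MvPolynomial (X)
variable {κ : Type*} [Field κ] {φ : R →+* κ}

lemma av_ne : av ≠ 0 := fun h => MvPolynomial.X_ne_zero (R := ℚ) (1 : Fin 4) (am_inj (h.trans (map_zero am).symm))
lemma bv_ne : bv ≠ 0 := fun h => MvPolynomial.X_ne_zero (R := ℚ) (2 : Fin 4) (am_inj (h.trans (map_zero am).symm))

lemma watson_term {n : ℕ} (S : Sp φ n) (d s r : ℕ) (hd3 : 3 ≤ d) (hd : Nat.Coprime n d)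
    (hs : n + 1 = d * s) (hr : r + s = n) (j : ℕ) (hj : j < r + 1) :
    In φ (Phi n) 2 (cW qv (bv*qv) (qv/bv) (av*qv) (qv/av) (qv^d) r j *
      (pc (qv*(qv^d)^(2*j)) (qv^d) (r-j+1) * pc (qv*qv^d/(av*qv*(qv/av))) (qv^d) (r-j) /
       (pc (qv*qv^d/(av*qv)*(qv^d)^j) (qv^d) (r-j) * pc (qv*qv^d/(qv/av)*(qv^d)^j) (qv^d) (r-j)))) := by
  have q0 := qv_ne
  have a0 := av_ne
  have b0 := bv_ne
  have hs0 : 0 < s := by rcases Nat.eq_zero_or_pos s with h | h; · simp [h] at hs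
                         · exact h
  have h3s : 3 * s ≤ n + 1 := by rw [hs]; exact Nat.mul_le_mul_right s hd3
  have qd : qv^d = qv * qv^(d-1) := by rw [← pow_succ']; congr 1; omega
  have x1 : qv*qv^d/(av*qv*(qv/av)) = qv^(d-1) := by rw [qd]; field_simp
  have x2 : qv*qv^d/(bv*qv*(qv/bv)) = qv^(d-1) := by rw [qd]; field_simp
  have x3 : qv*qv^d/(av*qv) = qv^d/av := by field_simp
  have x4 : qv*qv^d/(qv/av) = av*qv^d := by field_simp
  have x5 : qv*qv^d/(bv*qv) = qv^d/bv := by field_simp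
  have x6 : qv*qv^d/(qv/bv) = bv*qv^d := by field_simp
  rw [cW, x1, x2, x3, x4, x5, x6]
  have hQ : Rs φ (qv^d) (φ (X 0)^d) := rq.pow d
  have hQ0 : φ (X 0)^d ≠ 0 := pow_ne_zero _ S.q_ne
  have dr : 1 + d * r = n * (d - 1) := by
    have h1 : d * r + d * s = d * n := by rw [← mul_add, hr]
    have h2 : n * (d-1) + n = d * n := by
      obtain ⟨d', rfl⟩ : ∃ d', d = d'+1 := ⟨d-1, by omega⟩
      simp; ring
    omega
  have e : ∀ (x : κ) (i : ℕ), x * φ (X 0)^d * (φ (X 0)^d)^i = x * φ (X 0)^(d*(i+1)) := fun x i => by ring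
  have e' : ∀ (x : κ) (i : ℕ), φ (X 0)^d / x * (φ (X 0)^d)^i = φ (X 0)^(d*(i+1)) / x := fun x i => by ring
  have na : ∀ k, pc (φ (X 1) * φ (X 0)^d) (φ (X 0)^d) k ≠ 0 := fun k => pc_ne fun i _ => by
    rw [e]; exact S.one_sub_a_ne _
  have nb : ∀ k, pc (φ (X 2) * φ (X 0)^d) (φ (X 0)^d) k ≠ 0 := fun k => pc_ne fun i _ => by
    rw [e]; exact S.one_sub_b_ne _
  have na' : ∀ k, pc (φ (X 0)^d / φ (X 1)) (φ (X 0)^d) k ≠ 0 := fun k => pc_ne fun i _ => by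
    rw [e']; exact S.one_sub_a'_ne _
  have nb' : ∀ k, pc (φ (X 0)^d / φ (X 2)) (φ (X 0)^d) k ≠ 0 := fun k => pc_ne fun i _ => by
    rw [e']; exact S.one_sub_b'_ne _
  have sa : ∀ l k, pc (φ (X 1) * φ (X 0)^d * (φ (X 0)^d)^l) (φ (X 0)^d) k ≠ 0 := fun l k h =>
    na (l+k) (by rw [pc_add, h, mul_zero])
  have sa' : ∀ l k, pc (φ (X 0)^d / φ (X 1) * (φ (X 0)^d)^l) (φ (X 0)^d) k ≠ 0 := fun l k h =>
    na' (l+k) (by rw [pc_add, h, mul_zero])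
  have nQ := pcQ_ne S d hd j (by omega)
  have nN : pc (φ (X 0) * (φ (X 0)^d)^(r+1)) (φ (X 0)^d) j ≠ 0 := by
    refine pc_ne fun i hi => ?_
    have : φ (X 0) * (φ (X 0)^d)^(r+1) * (φ (X 0)^d)^i = φ (X 0)^(n*(d-1)) * φ (X 0)^(d*(i+1)) := by
      rw [← dr]; ring
    rw [this, S.q_pow_dvd ⟨_, rfl⟩, one_mul]
    refine S.one_sub_ne fun h => ?_
    have := Nat.le_of_dvd (by omega) (hd.dvd_of_dvd_mul_left h)
    omega
  have I1 : In φ (Phi n) 1 (pc qv (qv^d) (r+j+1)) := by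
    refine Rs.in1 (fun f => (S.ker f).1) ?_
    have : pc (φ (X 0)) (φ (X 0)^d) (r+j+1) = 0 := by
      apply pc_eq_zero (i := r) (by omega)
      rw [← pow_mul, ← pow_succ', add_comm, dr]; exact S.q_pow_dvd ⟨_, rfl⟩
    rw [← this]; exact rq.pc hQ _
  have I2 : In φ (Phi n) 1 (pc (qv^(d-1)) (qv^d) j * pc (qv^(d-1)) (qv^d) (r-j)) := by
    refine Rs.in1 (fun f => (S.ker f).1) ?_
    have h0 : ∀ i, s ≤ i → pc (φ (X 0)^(d-1)) (φ (X 0)^d) i = 0 := by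
      intro i hi
      apply pc_eq_zero (i := s-1) (by omega)
      rw [← pow_mul, ← pow_add]
      have : d - 1 + d*(s-1) = n := by
        obtain ⟨s', rfl⟩ : ∃ s', s = s'+1 := ⟨s-1, by omega⟩
        rw [mul_add] at hs; simp; omega
      rw [this]; exact S.q_pow
    have : pc (φ (X 0)^(d-1)) (φ (X 0)^d) j * pc (φ (X 0)^(d-1)) (φ (X 0)^d) (r-j) = 0 := by
      rcases Nat.lt_or_ge j s with h | h
      · rw [h0 (r-j) (by omega), mul_zero]
      · rw [h0 j h, zero_mul]
    rw [← this]; exact ((rq.pow _).pc hQ _).mul ((rq.pow _).pc hQ _)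
  have G := (((((ra.mul rq).pc hQ j).mul ((rq.div ra S.a_ne).pc hQ j)).mul
      (((hQ.pow r).inv (pow_ne_zero _ hQ0)).pc hQ j)).mul (((hQ.pow j).inv (pow_ne_zero _ hQ0)).pc hQ j)).div
    (((((((hQ.pc hQ j).mul (hQ.pc hQ j)).mul ((hQ.div rb S.b_ne).pc hQ j)).mul ((rb.mul hQ).pc hQ j)).mul
      ((hQ.div ra S.a_ne).pc hQ j)).mul ((ra.mul hQ).pc hQ j)).mul ((rq.mul (hQ.pow (r+1))).pc hQ j))
      (mul_ne_zero (mul_ne_zero (mul_ne_zero (mul_ne_zero (mul_ne_zero (mul_ne_zero nQ nQ) (nb' j)) (nb j)) (na' j)) (na j)) nN)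
  have G2 := ((((rq.mul (hQ.pow (r+1))).div ((ra.mul rq).mul (rq.div ra S.a_ne))
    (mul_ne_zero (mul_ne_zero S.a_ne S.q_ne) (div_ne_zero S.q_ne S.a_ne))).pow j).mul (hQ.pow j)).mul
     ((((hQ.div ra S.a_ne).mul (hQ.pow j)).pc hQ (r-j)).mul (((ra.mul hQ).mul (hQ.pow j)).pc hQ (r-j)) |>.inv
      (mul_ne_zero (sa' j _) (sa j _)))
  have := ((I1.mul I2).mulr G).mulr G2
  convert this using 1
  have ee : r + j + 1 = 2*j + (r-j+1) := by omega
  rw [ee, pc_add qv (qv^d) (2*j) (r-j+1)]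
  generalize (qv * (qv ^ d) ^ (r + 1) / (av * qv * (qv / av))) ^ j = Y
  generalize (qv ^ d) ^ j = Y'
  simp only [div_eq_mul_inv, mul_inv]
  ring

lemma Sq {n : ℕ} (S : Sp φ n) (d s r : ℕ) (hd3 : 3 ≤ d) (hd : Nat.Coprime n d)
    (hs : n + 1 = d * s) (hr : r + s = n) :
    In φ (Phi n) 2 (∑ k ∈ range n, TT qv (qv^d) av bv (qv^(1+d*r)) (qv^(2*d-3)) k) := by
  have q0 := qv_ne
  have a0 := av_ne
  have b0 := bv_ne
  have hs0 : 0 < s := by rcases Nat.eq_zero_or_pos s with h | h; · simp [h] at hs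
                         · exact h
  have Q0 : qv^d ≠ 0 := pow_ne_zero _ q0
  have ra' : ∀ j, (1:K) - av * qv^j ≠ 0 := fun j =>
    Rs.ne (Rs.one.sub (ra.mul (rq.pow j))) (S.one_sub_a_ne j)
  have rb' : ∀ j, (1:K) - bv * qv^j ≠ 0 := fun j =>
    Rs.ne (Rs.one.sub (rb.mul (rq.pow j))) (S.one_sub_b_ne j)
  have ra'' : ∀ j, (1:K) - qv^j / av ≠ 0 := fun j =>
    Rs.ne (Rs.one.sub ((rq.pow j).div ra S.a_ne)) (S.one_sub_a'_ne j)
  have rb'' : ∀ j, (1:K) - qv^j / bv ≠ 0 := fun j =>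
    Rs.ne (Rs.one.sub ((rq.pow j).div rb S.b_ne)) (S.one_sub_b'_ne j)
  have x3 : qv*qv^d/(av*qv) = qv^d/av := by field_simp
  have x4 : qv*qv^d/(qv/av) = av*qv^d := by field_simp
  have x5 : qv*qv^d/(bv*qv) = qv^d/bv := by field_simp
  have x6 : qv*qv^d/(qv/bv) = bv*qv^d := by field_simp
  have e : ∀ (x : K) (i : ℕ), x * qv^d * (qv^d)^i = x * qv^(d*(i+1)) := fun x i => by ring
  have e' : ∀ (x : K) (i : ℕ), qv^d / x * (qv^d)^i = qv^(d*(i+1)) / x := fun x i => by ring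
  have W := watson qv (bv*qv) (qv/bv) (av*qv) (qv/av) (qv^d) q0 (mul_ne_zero b0 q0) (div_ne_zero q0 b0)
    (mul_ne_zero a0 q0) (div_ne_zero q0 a0) Q0
    (fun i => by
      have : qv^d * (qv^d)^i = qv^(d*(i+1)) := by ring
      rw [this]; exact qv_pow_ne _ (by positivity))
    (fun i => by rw [x5, e']; exact rb'' _) (fun i => by rw [x6, e]; exact rb' _)
    (fun i => by rw [x3, e']; exact ra'' _) (fun i => by rw [x4, e]; exact ra' _)
    (fun i => by
      have : qv * (qv^d)^i = qv^(1+d*i) := by ring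
      rw [this]; exact qv_pow_ne _ (by omega)) r
  have e1 : ∑ k ∈ range n, TT qv (qv^d) av bv (qv^(1+d*r)) (qv^(2*d-3)) k =
      ∑ k ∈ range (r+1), TT qv (qv^d) av bv (qv^(1+d*r)) (qv^(2*d-3)) k := by
    symm
    apply sum_subset
    · intro x; simp only [mem_range]; omega
    · intro x _ hx
      simp only [mem_range, not_lt] at hx
      have : pc (qv/qv^(1+d*r)) (qv^d) x = 0 := by
        refine pc_eq_zero hx ?_
        rw [← pow_mul, pow_add, pow_one]; field_simp
      simp [TT, this]
  have e2 : ∀ k, TT qv (qv^d) av bv (qv^(1+d*r)) (qv^(2*d-3)) k =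
      t8 qv (bv*qv) (qv/bv) (av*qv) (qv/av) (qv^d) r k := by
    intro k
    have y1 : qv / qv^(1+d*r) = ((qv^d)^r)⁻¹ := by
      rw [← pow_mul, pow_add, pow_one]; field_simp
    have y2 : qv^(1+d*r) * qv^d = qv * (qv^d)^(r+1) := by ring
    have y3 : qv^(2*d-3) * qv^(1+d*r) = (qv * (qv^d)^(r+1) / (av*qv*(qv/av))) * (qv*qv^d/(bv*qv*(qv/bv))) := by
      have z1 : qv * (qv^d)^(r+1) / (av*qv*(qv/av)) * (qv*qv^d/(bv*qv*(qv/bv))) = (qv^(1+d*r) * (qv^d)^2) / qv^3 := by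
        field_simp; ring
      have z2 : qv^(2*d-3) * qv^3 = (qv^d)^2 := by
        rw [← pow_add, ← pow_mul]; congr 1; omega
      rw [z1, ← z2]; field_simp
    rw [TT, t8, f6, y1, y2, y3, mul_pow, x3, x4, x5, x6]
    generalize (qv * (qv^d)^(r+1) / (av*qv*(qv/av)))^k = Y
    generalize (qv*qv^d/(bv*qv*(qv/bv)))^k = Y'
    simp only [div_eq_mul_inv, mul_inv]
    ring
  rw [e1, sum_congr rfl fun k _ => e2 k, W]
  exact In.sum _ fun j hj => watson_term S d s r hd3 hd hs hr j (mem_range.1 hj)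

end sq
end

open Finset
noncomputable section
section hp
open MvPolynomial (X)

/-- numerator polynomial in the extra variable `e` -/
def Hp (n d : ℕ) (f : ℕ → R) : Polynomial R :=
  ∑ k ∈ range n, Polynomial.C (f k) * (∏ i ∈ range k, (Polynomial.X - Polynomial.C (X 0 * (X 0 ^ d) ^ i))) *
    ∏ i ∈ Ico k (n-1), (1 - Polynomial.X * Polynomial.C (X 0 ^ d * (X 0 ^ d) ^ i))

def rho {F : Type*} [Field F] (q Q a b z : F) (k : ℕ) : F :=
  (1 - q * Q^(2*k)) * pA q Q a b k * pW q Q k * z^k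

lemma Hp_eval {F : Type*} [Field F] (ψ : R →+* F) (n d : ℕ) (f : ℕ → R) (g : R) (a b z : F)
    (hf : ∀ k < n, rho (ψ (X 0)) (ψ (X 0) ^ d) a b z k * ψ g = ψ (f k)) (e : F) (he : e ≠ 0)
    (hD : pc (e * ψ (X 0) ^ d) (ψ (X 0) ^ d) (n-1) ≠ 0) :
    ((Hp n d f).map ψ).eval e = ψ g * pc (e * ψ (X 0) ^ d) (ψ (X 0) ^ d) (n-1) *
      ∑ k ∈ range n, TT (ψ (X 0)) (ψ (X 0) ^ d) a b e z k := by
  simp only [Hp, Polynomial.map_sum, Polynomial.map_mul, Polynomial.map_prod, Polynomial.map_sub,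
    Polynomial.map_C, Polynomial.map_X, Polynomial.map_one, Polynomial.eval_finsetSum, Polynomial.eval_mul,
    Polynomial.eval_prod, Polynomial.eval_sub, Polynomial.eval_C, Polynomial.eval_X, Polynomial.eval_one, Polynomial.map_pow, Polynomial.eval_pow, map_mul, map_pow]
  rw [mul_sum]
  apply sum_congr rfl
  intro k hk
  have hk := mem_range.1 hk
  rw [← hf k hk]
  generalize ψ (X 0) = q at *
  generalize q ^ d = Q at *
  have h1 : ∏ i ∈ range k, (e - q * Q^i) = pc (q/e) Q k * e^k := by
    rw [pc, ← card_range k, ← prod_const, card_range, ← prod_mul_distrib]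
    apply prod_congr rfl
    intro i _
    field_simp
  have h2 : pc (e*Q) Q (n-1) = pc (e*Q) Q k * ∏ i ∈ Ico k (n-1), (1 - e * (Q*Q^i)) := by
    rw [pc, pc, ← prod_range_mul_prod_Ico _ (show k ≤ n-1 by omega)]
    congr 1
    apply prod_congr rfl
    intro i _
    ring
  have h3 : pc (e*Q) Q k ≠ 0 := fun h => hD (by rw [h2, h, zero_mul])
  rw [h1, h2]
  have h4 : TT q Q a b e z k = rho q Q a b z k * (pc (q/e) Q k * e^k) * (pc (e*Q) Q k)⁻¹ := by
    simp only [TT, rho, pA, pW, div_eq_mul_inv, mul_inv, mul_pow]; ring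
  rw [h4]
  field_simp

variable {κ : Type*} [Field κ] {φ : R →+* κ}

lemma common (n : ℕ) (x : ℕ → K) (y : ℕ → κ) (h : ∀ k < n, Rs φ (x k) (y k)) :
    ∃ (g : R) (f : ℕ → R), φ g ≠ 0 ∧ ∀ k < n, x k * am g = am (f k) ∧ y k * φ g = φ (f k) := by
  induction n with
  | zero => exact ⟨1, 0, by simp, by simp⟩
  | succ n ih =>
    obtain ⟨g, f, hg, hf⟩ := ih fun k hk => h k (by omega)
    obtain ⟨f', g', h1, h2, h3⟩ := h n (by omega)
    refine ⟨g * g', fun k => if k = n then f' * g else f k * g', by rw [map_mul]; exact mul_ne_zero hg h1, ?_⟩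
    intro k hk
    by_cases hkn : k = n
    · subst hkn
      simp only [if_true, map_mul]
      exact ⟨by rw [← h2]; ring, by rw [← h3]; ring⟩
    · simp only [hkn, if_false, map_mul]
      obtain ⟨h4, h5⟩ := hf k (by omega)
      exact ⟨by rw [← h4]; ring, by rw [← h5]; ring⟩

lemma Hp_zero [CharZero κ] {n : ℕ} (S : Sp φ n) (d : ℕ) (hd3 : 3 ≤ d) (hd : Nat.Coprime n d)
    (f : ℕ → R) (g : R)
    (hf : ∀ k < n, rho (φ (X 0)) (φ (X 0) ^ d) (φ (X 1)) (φ (X 2)) (φ (X 0) ^ (2*d-3)) k * φ g = φ (f k)) :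
    (Hp n d f).map φ = 0 := by
  obtain ⟨r, t, hr, ht⟩ := exists_r n d S.pos hd
  have e : ∀ (x : κ) (i : ℕ), x * φ (X 0)^d * (φ (X 0)^d)^i = x * φ (X 0)^(d*(i+1)) := fun x i => by ring
  have e' : ∀ (x : κ) (i : ℕ), φ (X 0)^d / x * (φ (X 0)^d)^i = φ (X 0)^(d*(i+1)) / x := fun x i => by ring
  have en : ∀ i < r, 1 - φ (X 0)^(d*(i+1)) ≠ 0 := by
    intro i hi
    refine S.one_sub_ne fun h => ?_
    have := Nat.le_of_dvd (by omega) (hd.dvd_of_dvd_mul_left h)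
    omega
  have hz : φ (X 0) ^ (2*d-3) * φ (X 0)^3 = (φ (X 0)^d)^2 := by
    rw [← pow_add, ← pow_mul]; congr 1; omega
  set D : Polynomial κ := Polynomial.X * ∏ i ∈ range (n-1), (1 - Polynomial.X * Polynomial.C (φ (X 0)^d) * Polynomial.C (φ (X 0) ^ d) ^ i) with hDdef
  have hD0 : D ≠ 0 := by
    refine mul_ne_zero Polynomial.X_ne_zero (prod_ne_zero_iff.2 fun i _ h => ?_)
    have := congrArg (Polynomial.eval 0) h
    simp at this
  have hDe : ∀ x, D.eval x = x * pc (x * φ (X 0)^d) (φ (X 0)^d) (n-1) := by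
    intro x
    simp [hDdef, Polynomial.eval_prod, pc]
  have hm : (Hp n d f).map φ * D = 0 := by
    apply Polynomial.funext
    intro x
    rw [Polynomial.eval_mul, Polynomial.eval_zero]
    by_cases hx : D.eval x = 0
    · rw [hx, mul_zero]
    · rw [hDe] at hx
      have hx0 := left_ne_zero_of_mul hx
      have hx1 := right_ne_zero_of_mul hx
      rw [Hp_eval φ n d f g _ _ _ hf x hx0 hx1]
      have hsum : ∑ k ∈ range n, TT (φ (X 0)) (φ (X 0)^d) (φ (X 1)) (φ (X 2)) x (φ (X 0)^(2*d-3)) k = 0 := by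
        apply TT_sum _ _ _ _ _ _ S.a_ne S.b_ne hx0 (pow_ne_zero _ S.q_ne) r n hr
        · rw [← pow_mul, ← pow_succ', add_comm, ht]; exact S.q_pow_dvd ⟨_, rfl⟩
        · exact hz
        · intro i _; rw [e]; exact S.one_sub_a_ne _
        · intro i _; rw [e']; exact S.one_sub_a'_ne _
        · intro i _; rw [e]; exact S.one_sub_b_ne _
        · intro i _; rw [e']; exact S.one_sub_b'_ne _
        · intro i hi; have := en i hi; have e0 := e 1 i; rw [one_mul, one_mul] at e0; rwa [e0]
        · intro i hi h0
          exact hx1 (pc_eq_zero (i := i) (by omega) (sub_eq_zero.1 h0).symm)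
      rw [hsum, mul_zero, zero_mul]
  exact (mul_eq_zero.1 hm).resolve_right hD0

lemma modn2 [CharZero κ] {n : ℕ} (S : Sp φ n) (d s r : ℕ) (hd3 : 3 ≤ d) (hd : Nat.Coprime n d)
    (hs : n + 1 = d * s) (hr : r + s = n) :
    In φ (Phi n) 2 (∑ k ∈ range n, TT qv (qv^d) av bv 1 (qv^(2*d-3)) k) := by
  have hSq := Sq S d s r hd3 hd hs hr
  have hQ : Rs φ (qv^d) (φ (X 0)^d) := rq.pow d
  have dr : 1 + d * r = n * (d - 1) := by
    have h1 : d * r + d * s = d * n := by rw [← mul_add, hr]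
    have h2 : n * (d-1) + n = d * n := by
      obtain ⟨d', rfl⟩ : ∃ d', d = d'+1 := ⟨d-1, by omega⟩
      simp; ring
    omega
  obtain ⟨g, f, hg, hf⟩ := common (φ := φ) n (rho qv (qv^d) av bv (qv^(2*d-3)))
    (rho (φ (X 0)) (φ (X 0) ^ d) (φ (X 1)) (φ (X 2)) (φ (X 0) ^ (2*d-3))) (fun k hk => by
      have h1 := pAs_rel S d Rs.one k
      have h2 := pWs_rel S d hd Rs.one k hk
      rw [pAs_one] at h1
      rw [pWs_one] at h2
      exact (((Rs.one.sub (rq.mul (hQ.pow (2*k)))).mul h1).mul h2).mul ((rq.pow _).pow k))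
  have H0 := Hp_zero S d hd3 hd f g fun k hk => (hf k hk).2
  have hC : Polynomial.C (Phi n) ∣ Hp n d f := by
    rw [Polynomial.C_dvd_iff_dvd_coeff]
    intro i
    rw [← S.ker, ← Polynomial.coeff_map, H0, Polynomial.coeff_zero]
  obtain ⟨U, hU⟩ := hC
  have hN : Rs φ (qv^(1+d*r)) 1 := Q_rel S _ ⟨_, dr⟩
  have hdv : Phi n ∣ (X 0 : R)^(1+d*r) - 1 := by
    rw [← S.ker, map_sub, map_pow, map_one, S.q_pow_dvd ⟨_, dr⟩, sub_self]
  obtain ⟨w, hw⟩ := hdv.trans (Polynomial.sub_dvd_eval_sub ((X 0 : R)^(1+d*r)) 1 U)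
  have key : (Hp n d f).eval ((X 0 : R)^(1+d*r)) - (Hp n d f).eval 1 = Phi n ^ 2 * w := by
    rw [hU, Polynomial.eval_mul, Polynomial.eval_mul, Polynomial.eval_C, Polynomial.eval_C, ← mul_sub, hw]; ring
  have nD := pcQ_ne S d hd (n-1) (by have := S.pos; omega)
  have D1 : Rs φ (pc (1 * qv^d) (qv^d) (n-1)) (pc (φ (X 0)^d) (φ (X 0)^d) (n-1)) := by
    rw [one_mul]; exact hQ.pc hQ _
  have D2 : Rs φ (pc (qv^(1+d*r) * qv^d) (qv^d) (n-1)) (pc (φ (X 0)^d) (φ (X 0)^d) (n-1)) := by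
    have := (hN.mul hQ).pc hQ (n-1); rwa [one_mul] at this
  have E1 := Hp_eval am n d f g av bv (qv^(2*d-3)) (fun k hk => (hf k hk).1) 1 one_ne_zero (D1.ne nD)
  have E2 := Hp_eval am n d f g av bv (qv^(2*d-3)) (fun k hk => (hf k hk).1) (qv^(1+d*r)) (pow_ne_zero _ qv_ne) (D2.ne nD)
  have V : ∀ x : R, ((Hp n d f).map am).eval (am x) = am ((Hp n d f).eval x) := fun x => by
    rw [Polynomial.eval_map, Polynomial.eval₂_hom]
  have V1 := V 1
  have V2 := V ((X 0 : R)^(1+d*r))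
  rw [map_one] at V1
  rw [map_pow] at V2
  change _ = am g * pc (1 * qv^d) (qv^d) (n-1) * ∑ k ∈ range n, TT qv (qv^d) av bv 1 (qv^(2*d-3)) k at E1
  change _ = am g * pc (qv^(1+d*r) * qv^d) (qv^d) (n-1) * ∑ k ∈ range n, TT qv (qv^d) av bv (qv^(1+d*r)) (qv^(2*d-3)) k at E2
  rw [V1] at E1
  have E2' := V2.symm.trans E2
  have key' := congrArg am key
  rw [map_sub, E1, E2'] at key'
  have gn : am g ≠ 0 := (Rs.of (φ := φ) g).ne hg
  have D1n := D1.ne nD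
  have I : In φ (Phi n) 2 (am g * pc (qv^(1+d*r) * qv^d) (qv^d) (n-1) *
      (∑ k ∈ range n, TT qv (qv^d) av bv (qv^(1+d*r)) (qv^(2*d-3)) k) + am (-(Phi n ^ 2 * w))) := by
    refine In.add ?_ ⟨am (-w), φ (-w), Rs.of _, by rw [← map_pow, ← map_mul]; congr 1; ring⟩
    rw [mul_comm]; exact hSq.mulr ((Rs.of g).mul D2)
  have := I.mulr (((Rs.of (φ := φ) g).mul D1).inv (mul_ne_zero hg nD))
  convert this using 1
  rw [map_neg, ← key', eq_mul_inv_iff_mul_eq₀ (mul_ne_zero gn D1n)]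
  ring
end hp
end

open Finset
noncomputable section
open MvPolynomial (X)

lemma qintR_prod (n : ℕ) (hn : 0 < n) : qintR n = ∏ m ∈ n.divisors.erase 1, Phi m := by
  have := congrArg (Polynomial.aeval (X 0 : R)) (Polynomial.prod_cyclotomic_eq_geom_sum hn ℚ)
  rw [map_prod, map_sum] at this
  simp only [map_pow, Polynomial.aeval_X] at this
  exact this.symm

lemma In.fin {κ : Type*} [Field κ] {φ : R →+* κ} {m : ℕ} (S : Sp φ m) {e : ℕ} {x : K}
    (h : In φ (Phi m) e x) : ∃ f g : R, ¬ Phi m ∣ g ∧ x * am g = am (Phi m ^ e * f) := by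
  obtain ⟨z, y, ⟨f, g, h1, h2, _⟩, rfl⟩ := h
  refine ⟨f, g, fun h => h1 ((S.ker g).2 h), ?_⟩
  rw [map_mul, map_pow, ← h2]; ring

lemma stmt_sum (n d : ℕ) (hd : 3 ≤ d) : (∑ k ∈ Finset.range n,
          qint (2 * d * k + 1) *
            (poch (av * qv) (qv ^ (d : ℤ)) k * poch (qv / av) (qv ^ (d : ℤ)) k *
              poch (bv * qv) (qv ^ (d : ℤ)) k * poch (qv / bv) (qv ^ (d : ℤ)) k *
              poch qv (qv ^ (d : ℤ)) k ^ 2) /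
            (poch (av * qv ^ (d : ℤ)) (qv ^ (d : ℤ)) k * poch (qv ^ (d : ℤ) / av) (qv ^ (d : ℤ)) k *
              poch (bv * qv ^ (d : ℤ)) (qv ^ (d : ℤ)) k * poch (qv ^ (d : ℤ) / bv) (qv ^ (d : ℤ)) k *
              poch (qv ^ (d : ℤ)) (qv ^ (d : ℤ)) k ^ 2) *
            qv ^ ((2 * (d : ℤ) - 3) * k)) =
    (∑ k ∈ range n, TT qv (qv^d) av bv 1 (qv^(2*d-3)) k) * (1 - qv)⁻¹ := by
  rw [sum_mul]
  apply sum_congr rfl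
  intro k _
  have h1 : qv ^ ((2 * (d : ℤ) - 3) * k) = (qv^(2*d-3))^k := by
    rw [← pow_mul, ← zpow_natCast]; congr 1
    rw [Nat.cast_mul, Nat.cast_sub (by omega)]; push_cast; ring
  have h2 : qint (2 * d * k + 1) = (1 - qv * (qv^d)^(2*k)) * (1-qv)⁻¹ := by
    have : qv ^ ((2:ℤ) * d * k + 1) = qv * (qv^d)^(2*k) := by
      rw [← pow_mul, ← pow_succ', ← zpow_natCast]; congr 1
      push_cast; ring
    rw [qint, this, div_eq_mul_inv]
  have h3 : ∀ x Q k, poch x Q k = pc x Q k := fun _ _ _ => rfl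
  rw [h1, h2, zpow_natCast]
  simp only [h3, TT, div_one, one_mul, mul_one, div_eq_mul_inv, mul_inv, inv_one]
  ring

lemma main (n d : ℕ) (hn : 0 < n) (hd : 3 ≤ d) (hnd : Nat.gcd n d = 1) (x : K)
    (hx : x = (∑ k ∈ range n, TT qv (qv^d) av bv 1 (qv^(2*d-3)) k) * (1 - qv)⁻¹) :
    (((n : ℤ) ≡ -1 [ZMOD (d : ℤ)]) → modCong (qintR n * Phi n) x) ∧
    (¬ ((n : ℤ) ≡ -1 [ZMOD (d : ℤ)]) → modCong (qintR n) x) := by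
  have hinv : ∀ {κ : Type} [Field κ] {φ : R →+* κ} {m : ℕ}, Sp φ m → m ≠ 1 →
      Rs φ (1-qv)⁻¹ (1 - φ (X 0))⁻¹ := by
    intro κ _ φ m S hm
    refine (Rs.one.sub rq).inv ?_
    have := S.one_sub_ne (j := 1) (fun h => hm (Nat.dvd_one.1 h))
    rwa [pow_one] at this
  have hone : ∀ m ∈ n.divisors.erase 1, ∃ f g : R, ¬ Phi m ∣ g ∧ x * am g = am (Phi m ^ 1 * f) := by
    intro m hm
    obtain ⟨h1, h2⟩ := mem_erase.1 hm
    have h2 := Nat.dvd_of_mem_divisors h2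
    have hm0 : 0 < m := Nat.pos_of_dvd_of_pos h2 hn
    obtain ⟨κ, _, _, φ, S⟩ := exSp m hm0
    obtain ⟨c, hc⟩ := h2
    have := modm S d hd (Nat.Coprime.coprime_dvd_left ⟨c, hc⟩ hnd) c
    rw [mul_comm c m, ← hc] at this
    refine In.fin S ?_
    rw [hx]
    exact (this.in1 fun f => (S.ker f).1).mulr (hinv S h1)
  have hp : ∀ m ∈ n.divisors.erase 1, Prime (Phi m) := fun m hm =>
    Phi_prime m (Nat.pos_of_mem_divisors (mem_erase.1 hm).2)
  have hr : ∀ i ∈ n.divisors.erase 1, ∀ j ∈ n.divisors.erase 1, i ≠ j → ¬ Phi i ∣ Phi j := fun i hi j hj h =>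
    Phi_not_dvd i j (Nat.pos_of_mem_divisors (mem_erase.1 hi).2) (Nat.pos_of_mem_divisors (mem_erase.1 hj).2) h
  constructor
  · intro hmod
    have hdv : (d : ℤ) ∣ (n : ℤ) + 1 := by
      have := hmod.symm.dvd
      simpa using this
    have hdv' : d ∣ n + 1 := by exact_mod_cast hdv
    obtain ⟨s, hs⟩ := hdv'
    have h3s : 3 * s ≤ n + 1 := by rw [hs]; exact Nat.mul_le_mul_right s hd
    have hdn : d ≤ n + 1 := Nat.le_of_dvd (by omega) ⟨s, hs⟩
    have hn1 : n ≠ 1 := by omega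
    have hmem : n ∈ n.divisors.erase 1 := mem_erase.2 ⟨hn1, Nat.mem_divisors_self n hn.ne'⟩
    have e : qintR n * Phi n = ∏ m ∈ n.divisors.erase 1, Phi m ^ (if m = n then 2 else 1) := by
      rw [qintR_prod n hn, ← mul_prod_erase _ _ hmem, ← mul_prod_erase _ (fun m => Phi m ^ (if m = n then 2 else 1)) hmem]
      rw [prod_congr rfl (g := Phi) (s₂ := (n.divisors.erase 1).erase n) (f := fun m => Phi m ^ (if m = n then 2 else 1))]
      · simp; ring
      · intro m hm; simp [(mem_erase.1 hm).1]
    rw [e]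
    apply final _ _ _ hp hr
    intro m hm
    by_cases hmn : m = n
    · subst hmn
      rw [if_pos rfl]
      obtain ⟨κ, _, _, φ, S⟩ := exSp m hn
      refine In.fin S ?_
      rw [hx]
      exact (modn2 S d s (m-s) hd hnd hs (by omega)).mulr (hinv S hn1)
    · rw [if_neg hmn]; exact hone m hm
  · intro _
    have e : qintR n = ∏ m ∈ n.divisors.erase 1, Phi m ^ 1 := by
      rw [qintR_prod n hn]; simp
    rw [e]
    exact final _ _ (fun _ => 1) hp hr x hone
end

theorem stmt4 (n d : ℕ) (hn : 0 < n) (hd : 3 ≤ d) (hnd : Nat.gcd n d = 1) :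
    (((n : ℤ) ≡ -1 [ZMOD (d : ℤ)]) →
      modCong (qintR n * Phi n)
        (∑ k ∈ Finset.range n,
          qint (2 * d * k + 1) *
            (poch (av * qv) (qv ^ (d : ℤ)) k * poch (qv / av) (qv ^ (d : ℤ)) k *
              poch (bv * qv) (qv ^ (d : ℤ)) k * poch (qv / bv) (qv ^ (d : ℤ)) k *
              poch qv (qv ^ (d : ℤ)) k ^ 2) /
            (poch (av * qv ^ (d : ℤ)) (qv ^ (d : ℤ)) k * poch (qv ^ (d : ℤ) / av) (qv ^ (d : ℤ)) k *
              poch (bv * qv ^ (d : ℤ)) (qv ^ (d : ℤ)) k * poch (qv ^ (d : ℤ) / bv) (qv ^ (d : ℤ)) k *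
              poch (qv ^ (d : ℤ)) (qv ^ (d : ℤ)) k ^ 2) *
            qv ^ ((2 * (d : ℤ) - 3) * k))) ∧
    (¬ ((n : ℤ) ≡ -1 [ZMOD (d : ℤ)]) →
      modCong (qintR n)
        (∑ k ∈ Finset.range n,
          qint (2 * d * k + 1) *
            (poch (av * qv) (qv ^ (d : ℤ)) k * poch (qv / av) (qv ^ (d : ℤ)) k *
              poch (bv * qv) (qv ^ (d : ℤ)) k * poch (qv / bv) (qv ^ (d : ℤ)) k *
              poch qv (qv ^ (d : ℤ)) k ^ 2) /
            (poch (av * qv ^ (d : ℤ)) (qv ^ (d : ℤ)) k * poch (qv ^ (d : ℤ) / av) (qv ^ (d : ℤ)) k *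
              poch (bv * qv ^ (d : ℤ)) (qv ^ (d : ℤ)) k * poch (qv ^ (d : ℤ) / bv) (qv ^ (d : ℤ)) k *
              poch (qv ^ (d : ℤ)) (qv ^ (d : ℤ)) k ^ 2) *
            qv ^ ((2 * (d : ℤ) - 3) * k))) := by
  have hx := stmt_sum n d hd
  exact main n d hn hd hnd _ hx

end
end

section
/- Let n > 1 and d ≥ 3 be integers with gcd(n,d) = 1, and let a, b be indeterminates. Then the sum over k from 0 to n−1 of [2dk−1] · (aq^{−1}, q^{−1}/a, bq^{−1}, q^{−1}/b; q^d)_k · (q^{−1}; q^d)_k^2 / ( (aq^d, q^d/a, bq^d, q^d/b; q^d)_k · (q^d; q^d)_k^2 ) · q^{(2d+3)k} is congruent to 0 modulo [n]·Φ_n(q) if n ≡ 1 (mod d), and congruent to 0 modulo [n] otherwise. -/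
open Finset

noncomputable section

namespace Work

def pp {F : Type*} [CommRing F] (x Q : F) (k : ℕ) : F := ∏ i ∈ Finset.range k, (1 - x * Q ^ i)

lemma pp_succ {F : Type*} [CommRing F] (x Q : F) (k : ℕ) :
    pp x Q (k+1) = pp x Q k * (1 - x * Q ^ k) := by
  simp [pp, Finset.prod_range_succ]

/-- triangular power -/
def ee {F : Type*} [CommRing F] (Q : F) (k : ℕ) : F := ∏ j ∈ Finset.range k, Q ^ j

lemma ee_succ {F : Type*} [CommRing F] (Q : F) (k : ℕ) : ee Q (k+1) = ee Q k * Q ^ k := by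
  simp [ee, Finset.prod_range_succ]

lemma ee_ne {F : Type*} [Field F] {Q : F} (hQ : Q ≠ 0) (k : ℕ) : ee Q k ≠ 0 := by
  unfold ee
  exact Finset.prod_ne_zero_iff.mpr fun j _ => pow_ne_zero _ hQ

lemma ee_sq {F : Type*} [CommRing F] (Q : F) (k : ℕ) : ee Q k ^ 2 * Q ^ k = Q ^ (k * k) := by
  induction k with
  | zero => simp [ee]
  | succ k ih =>
    rw [ee_succ]
    have : Q ^ ((k+1)*(k+1)) = Q^(k*k) * (Q^k)^2 * Q := by ring
    rw [this, ← ih]; ring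

def tau {F : Type*} [CommRing F] (Q a a' b b' B φ : F) (N k : ℕ) : F :=
  (B - Q ^ (2*k)) * B ^ (2*(N-k)) * Q ^ (2*k) *
  ((∏ j ∈ range k, (B - a * Q^j)) * (∏ j ∈ range k, (B - a' * Q^j)) *
   (∏ j ∈ range k, (B - b * Q^j)) * (∏ j ∈ range k, (B - b' * Q^j)) *
   (∏ j ∈ range k, (B - 1 * Q^j)) * (∏ j ∈ range k, (φ - Q^j))) *
  ∏ j ∈ range (N-k), (B - φ * Q^(k+j+1))

def gg {F : Type*} [Field F] (Q a b : F) (k : ℕ) : F :=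
  (pp (a*Q) Q k * pp (a⁻¹*Q) Q k * pp (b*Q) Q k * pp (b⁻¹*Q) Q k * pp (1*Q) Q k)⁻¹

lemma prodL {F : Type*} [Field F] {Q α α' : F} (hα : α * α' = 1) (k M : ℕ) :
    (∏ j ∈ range k, (Q^(k+M) - α * Q^j)) * pp (α' * Q) Q M =
      (-α)^k * ee Q k * pp (α' * Q) Q (k+M) := by
  have key : ∀ i, i ≤ k → (∏ j ∈ range i, (Q^(k+M) - α * Q^j)) * pp (α' * Q) Q (k + M - i) =
      (-α)^i * ee Q i * pp (α' * Q) Q (k+M) := by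
    intro i
    induction i with
    | zero => intro _; simp [ee]
    | succ i ih =>
      intro hi
      have := ih (by omega)
      obtain ⟨t, ht⟩ : ∃ t, k + M - i = t + 1 := ⟨k + M - i - 1, by omega⟩
      have h2 : k + M - (i+1) = t := by omega
      have h3 : k + M = i + t + 1 := by omega
      rw [ht, pp_succ] at this
      rw [h2, prod_range_succ, ee_succ, pow_succ]
      have e : Q^(k+M) - α * Q^i = -α * Q^i * (1 - α' * Q * Q^t) := by
        rw [h3]
        have : Q^(i+t+1) = Q^i * Q^t * Q := by ring
        rw [this]
        linear_combination (-(Q^i * Q^t * Q)) * hα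
      rw [e]
      linear_combination (-α * Q^i) * this
  have := key k le_rfl
  simpa using this

lemma tailL {F : Type*} [Field F] {Q φ : F} (k M : ℕ) :
    (∏ j ∈ range M, (Q^(k+M) - φ * Q^(k+j+1))) * ee Q M =
      (-1)^M * Q^((k+M)*M) * ∏ j ∈ range M, (φ - Q^j) := by
  rw [← Finset.prod_range_reflect, ee, ← Finset.prod_mul_distrib]
  have : ∀ j ∈ range M, (Q ^ (k + M) - φ * Q ^ (k + (M - 1 - j) + 1)) * Q ^ j =
      (-1) * Q^(k+M) * (φ - Q^j) := by
    intro j hj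
    rw [mem_range] at hj
    have : Q^(k+M) = Q^(k + (M-1-j)+1) * Q^j := by
      rw [← pow_add]; congr 1; omega
    rw [this]; ring
  rw [prod_congr rfl this, prod_mul_distrib, prod_const, card_range]
  rw [mul_pow, ← pow_mul]

lemma falg {F : Type*} [Field F] (A1 A2 A3 A4 B1 B2 B3 B4 C1 C2 A5 A6 B5 B6 C5 D1 D2 E1 E2
    x1 x2 x3 x4 s s' P R : F) (e1 : E1 ≠ 0) :
    (A1 * A3 * B1 * B3 * C1)⁻¹ * (P *
    (x1*E1*A6/A4 * (x2*E1*A5/A2) * (x3*E1*B6/B4) * (x4*E1*B5/B2) *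
    (s*E1*C5/C2) * D1) * (s' * R * D2 / E2)) =
    (A5*A6*B5*B6*C5*D1*D2*(x1 * x2 * (x3 * x4) * s)*s')/
     (A1*A2*A3*A4*B1*B2*B3*B4*C1*C2*E1*E2) * (P * E1^6 * R) := by
  have : E1⁻¹ * E1^6 = E1^5 := by field_simp
  simp only [div_eq_mul_inv, mul_inv]
  linear_combination (-(A5*A6*B5*B6*C5*D1*D2*(x1 * x2 * (x3 * x4) * s)*s' *
     (A1⁻¹*A2⁻¹*A3⁻¹*A4⁻¹*B1⁻¹*B2⁻¹*B3⁻¹*B4⁻¹*C1⁻¹*C2⁻¹*E2⁻¹)*P*R)) * this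

lemma anti {F : Type*} [Field F] {Q a b φ : F} (hQ : Q ≠ 0) (ha : a ≠ 0) (hb : b ≠ 0)
    (k M : ℕ)
    (h : ∀ x ∈ ({a, a⁻¹, b, b⁻¹, 1} : Set F), ∀ j, pp (x * Q) Q j ≠ 0 ∨ k + M < j) :
    gg Q a b k * tau Q a a⁻¹ b b⁻¹ (Q^(k+M)) φ (k+M) k +
    gg Q a b M * tau Q a a⁻¹ b b⁻¹ (Q^(k+M)) φ (k+M) M = 0 := by
  have haa : a * a⁻¹ = 1 := mul_inv_cancel₀ ha
  have haa' : a⁻¹ * a = 1 := inv_mul_cancel₀ ha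
  have hbb : b * b⁻¹ = 1 := mul_inv_cancel₀ hb
  have hbb' : b⁻¹ * b = 1 := inv_mul_cancel₀ hb
  have h' : ∀ x ∈ ({a, a⁻¹, b, b⁻¹, 1} : Set F), pp (x * Q) Q k ≠ 0 ∧ pp (x*Q) Q M ≠ 0 := by
    intro x hx
    exact ⟨(h x hx k).resolve_right (by omega), (h x hx M).resolve_right (by omega)⟩
  obtain ⟨a1, a2⟩ := h' a (by simp)
  obtain ⟨a3, a4⟩ := h' a⁻¹ (by simp)
  obtain ⟨b1, b2⟩ := h' b (by simp)
  obtain ⟨b3, b4⟩ := h' b⁻¹ (by simp)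
  obtain ⟨c1, c2⟩ := h' 1 (by simp)
  have L : ∀ (α α' : F), α * α' = 1 → ∀ k M, pp (α'*Q) Q M ≠ 0 →
      (∏ j ∈ range k, (Q^(k+M) - α * Q^j)) =
      (-α)^k * ee Q k * pp (α' * Q) Q (k+M) / pp (α' * Q) Q M := by
    intro α α' hα k M hne
    rw [eq_div_iff hne]; exact prodL hα k M
  have Tl : ∀ k M, (∏ j ∈ range M, (Q^(k+M) - φ * Q^(k+j+1))) =
      (-1)^M * Q^((k+M)*M) * (∏ j ∈ range M, (φ - Q^j)) / ee Q M := by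
    intro k M
    rw [eq_div_iff (ee_ne hQ M)]; exact tailL k M
  have one : (1:F) * 1 = 1 := one_mul 1
  unfold tau gg
  have s1 : k + M - k = M := by omega
  have s2 : k + M - M = k := by omega
  rw [s1, s2]
  rw [L a a⁻¹ haa k M a4, L a⁻¹ a haa' k M a2, L b b⁻¹ hbb k M b4, L b⁻¹ b hbb' k M b2,
    L 1 1 one k M c2, Tl k M]
  rw [add_comm k M]
  rw [L a a⁻¹ haa M k a3, L a⁻¹ a haa' M k a1, L b b⁻¹ hbb M k b3, L b⁻¹ b hbb' M k b1,
    L 1 1 one M k c1, Tl M k]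
  generalize pp (a*Q) Q k = A1 at *
  generalize pp (a*Q) Q M = A2 at *
  generalize pp (a⁻¹*Q) Q k = A3 at *
  generalize pp (a⁻¹*Q) Q M = A4 at *
  generalize pp (b*Q) Q k = B1 at *
  generalize pp (b*Q) Q M = B2 at *
  generalize pp (b⁻¹*Q) Q k = B3 at *
  generalize pp (b⁻¹*Q) Q M = B4 at *
  generalize pp (1*Q) Q k = C1 at *
  generalize pp (1*Q) Q M = C2 at *
  generalize pp (a*Q) Q (M+k) = A5 at *
  generalize pp (a⁻¹*Q) Q (M+k) = A6 at *
  generalize pp (b*Q) Q (M+k) = B5 at *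
  generalize pp (b⁻¹*Q) Q (M+k) = B6 at *
  generalize pp (1*Q) Q (M+k) = C5 at *
  generalize (∏ j ∈ range k, (φ - Q^j)) = D1 at *
  generalize (∏ j ∈ range M, (φ - Q^j)) = D2 at *
  have e1 := ee_ne hQ k
  have e2 := ee_ne hQ M
  have q1 := ee_sq Q k
  have q2 := ee_sq Q M
  have sg : ∀ k : ℕ, (-a)^k * (-a⁻¹)^k * ((-b)^k * (-b⁻¹)^k) * (-1)^k = (-1 : F)^k := by
    intro k
    rw [← mul_pow, ← mul_pow, ← mul_pow]
    simp [ha, hb]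
  have sk := sg k
  have sM := sg M
  clear sg L Tl h h'
  have core : (Q^(M+k) - Q^(2*k)) * (Q^(M+k))^(2*M) * Q^(2*k) * (ee Q k)^6 * Q^((M+k)*M) +
     (Q^(M+k) - Q^(2*M)) * (Q^(M+k))^(2*k) * Q^(2*M) * (ee Q M)^6 * Q^((M+k)*k) = 0 := by
    have r1 : ee Q k ^ 6 = Q^(3*(k*k)) / Q^(3*k) := by
      rw [eq_div_iff (pow_ne_zero _ hQ)]
      have : ee Q k ^ 6 * Q^(3*k) = (ee Q k ^ 2 * Q^k)^3 := by ring
      rw [this, q1, ← pow_mul]; ring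
    have r2 : ee Q M ^ 6 = Q^(3*(M*M)) / Q^(3*M) := by
      rw [eq_div_iff (pow_ne_zero _ hQ)]
      have : ee Q M ^ 6 * Q^(3*M) = (ee Q M ^ 2 * Q^M)^3 := by ring
      rw [this, q2, ← pow_mul]; ring
    rw [r1, r2]
    field_simp
    ring
  generalize ee Q k = E1 at *
  generalize ee Q M = E2 at *
  rw [falg _ _ _ _ _ _ _ _ _ _ _ _ _ _ _ _ _ _ _ _ _ _ _ _ _ _ _ e1,
    falg _ _ _ _ _ _ _ _ _ _ _ _ _ _ _ _ _ _ _ _ _ _ _ _ _ _ _ e2, sk, sM]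
  have G : ∀ x y G1 G2 : F, x + y = 0 → G1 = G2 → G1 * x + G2 * y = 0 := by
    intro x y G1 G2 h1 h2
    rw [h2, ← mul_add, h1, mul_zero]
  refine G _ _ _ _ core ?_
  congr 1 <;> ring

lemma sumI {F : Type*} [Field F] [CharZero F] {Q a b φ : F} (hQ : Q ≠ 0) (ha : a ≠ 0) (hb : b ≠ 0)
    (N : ℕ)
    (h : ∀ x ∈ ({a, a⁻¹, b, b⁻¹, 1} : Set F), ∀ j, pp (x * Q) Q j ≠ 0 ∨ N < j) :
    ∑ k ∈ range (N+1), gg Q a b k * tau Q a a⁻¹ b b⁻¹ (Q^N) φ N k = 0 := by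
  have h1 := Finset.sum_flip (n := N) (fun k => gg Q a b k * tau Q a a⁻¹ b b⁻¹ (Q^N) φ N k)
  have h2 : ∑ k ∈ range (N+1), (gg Q a b k * tau Q a a⁻¹ b b⁻¹ (Q^N) φ N k +
     gg Q a b (N-k) * tau Q a a⁻¹ b b⁻¹ (Q^N) φ N (N-k)) = 0 := by
    refine Finset.sum_eq_zero fun k hk => ?_
    rw [mem_range] at hk
    obtain ⟨M, rfl⟩ : ∃ M, N = k + M := ⟨N - k, by omega⟩
    rw [show k + M - k = M by omega]
    exact anti hQ ha hb k M h
  rw [sum_add_distrib, h1, ← two_mul] at h2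
  simpa using h2

end Work

namespace Work

open Polynomial in
lemma lag {F : Type*} [Field F] (N : ℕ) (v : ℕ → F) (hv : Set.InjOn v (range (N+1)))
    (P : F[X]) (hP : P.natDegree < N) :
    ∑ k ∈ range (N+1), P.eval (v k) / ∏ j ∈ (range (N+1)).erase k, (v k - v j) = 0 := by
  have h := Lagrange.coeff_eq_sum (s := range (N+1)) (v := v) hv (P := P) (by
    rw [card_range]
    exact lt_of_le_of_lt degree_le_natDegree (by exact_mod_cast (by omega)))
  rw [← h, card_range]
  exact coeff_eq_zero_of_natDegree_lt (by omega)

lemma pp_add {F : Type*} [CommRing F] (x Q : F) (k s : ℕ) :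
    pp x Q (k+s) = pp x Q k * ∏ j ∈ range s, (1 - x * Q^(k+j)) := by
  simp [pp, prod_range_add]

lemma B1 {F : Type*} [Field F] {Q β : F} (α : F) (s k : ℕ) (hβ : β * Q^(s+1) = 1) :
    (∏ j ∈ range k, (β - α * Q^j)) * pp (α*Q) Q s = β^k * pp (α*Q) Q (k+s) := by
  rw [add_comm k s, pp_add]
  have : ∀ j ∈ range k, (β - α * Q^j) = β * (1 - α * Q * Q^(s+j)) := by
    intro j _
    have e : Q * Q^(s+j) = Q^(s+1) * Q^j := by ring
    linear_combination (α * Q^j) * hβ + (α * β) * e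
  rw [prod_congr rfl this, prod_mul_distrib, prod_const, card_range]
  ring

def lam {F : Type*} [Field F] (Q β : F) (k : ℕ) : F := Q^k + β * (Q^k)⁻¹

lemma B2 {F : Type*} [Field F] {Q β : F} (hQ : Q ≠ 0) (α α' : F) (hα : α * α' = 1) (s k : ℕ)
    (hβ : β * Q^(s+1) = 1) :
    (Q^(k+s+1))^s * (∏ i ∈ range s, (lam Q β k - (α * Q^(i+1) * β + α' * (Q^(i+1))⁻¹))) *
      pp (α*Q) Q k * pp (α'*Q) Q k = pp (α*Q) Q (k+s) * pp (α'*Q) Q (k+s) := by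
  rw [pp_add, pp_add]
  have h1 := Finset.prod_range_reflect (fun j => (1 - α' * Q * Q^(k+j))) s
  rw [← h1]
  have : ∀ i ∈ range s, (1 - α * Q * Q^(k+i)) * (1 - α' * Q * Q^(k + (s-1-i))) =
     Q^(k+s+1) * (lam Q β k - (α * Q^(i+1) * β + α' * (Q^(i+1))⁻¹)) := by
    intro i hi
    rw [mem_range] at hi
    obtain ⟨t, rfl⟩ : ∃ t, s = i + 1 + t := ⟨s - 1 - i, by omega⟩
    rw [show i + 1 + t - 1 - i = t by omega]
    have hb : β = (Q^(i+1+t+1))⁻¹ := eq_inv_of_mul_eq_one_left hβ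
    rw [lam, hb]
    field_simp
    linear_combination (Q^(5+3*k+3*i+2*t)) * hα
  have h2 := prod_congr rfl this
  rw [prod_mul_distrib, prod_mul_distrib, prod_const, card_range] at h2
  linear_combination (-(pp (α*Q) Q k * pp (α'*Q) Q k)) * h2

lemma erase_prod {F : Type*} [CommRing F] (f : ℕ → F) (k M : ℕ) :
    ∏ j ∈ (range (k+M+1)).erase k, f j = (∏ j ∈ range k, f j) * ∏ j ∈ range M, f (k+1+j) := by
  have : (range (k+M+1)).erase k = range k ∪ (range M).image (fun j => k+1+j) := by
    ext x
    simp only [mem_erase, mem_range, mem_union, mem_image]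
    constructor
    · rintro ⟨h1, h2⟩
      rcases lt_or_gt_of_ne h1 with h | h
      · exact Or.inl h
      · exact Or.inr ⟨x - k - 1, by omega, by omega⟩
    · rintro (h | ⟨j, h1, h2⟩) <;> omega
  rw [this, prod_union, prod_image]
  · intro x _ y _ h; simpa using h
  · rw [disjoint_left]
    intro x hx hy
    simp only [mem_range, mem_image] at hx hy
    obtain ⟨j, _, h⟩ := hy
    omega

lemma B3 {F : Type*} [Field F] {Q β : F} (hQ : Q ≠ 0) (hQ1 : ∀ j, pp (1*Q) Q j ≠ 0) (k M : ℕ) :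
    ((β - Q^(2*k)) * (∏ j ∈ range k, (β - 1 * Q^j)) * (∏ j ∈ range k, (Q^(k+M) - Q^j)) *
      (∏ j ∈ range M, (β - Q^(k+M) * Q^(k+j+1)))) * (pp (1*Q) Q k)⁻¹ *
      (∏ j ∈ (range (k+M+1)).erase k, (lam Q β k - lam Q β j)) =
    (ee Q (k+M+1))⁻¹ * pp (1*Q) Q (k+M) * (-1)^(k+M) * ∏ j ∈ range (2*(k+M)+1), (β - Q^j) := by
  have hl : ∀ j, lam Q β k - lam Q β j = (Q^(k+j))⁻¹ * ((Q^k - Q^j) * ((-1) * (β - Q^(k+j)))) := by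
    intro j
    rw [lam, lam]
    field_simp
    ring
  have p1 := prodL (Q := Q) (one_mul (1:F)) k 0
  have p2 := prodL (Q := Q) (one_mul (1:F)) k M
  have p3 : (∏ j ∈ range M, (Q^k - Q^(k+1+j))) = Q^(k*M) * pp (1*Q) Q M := by
    rw [pp]
    have : ∀ j ∈ range M, (Q^k - Q^(k+1+j)) = Q^k * (1 - 1 * Q * Q^j) := by
      intro j _; ring
    rw [prod_congr rfl this, prod_mul_distrib, prod_const, card_range, pow_mul]
  have p4 : (∏ j ∈ range k, Q^(k+j)) * (∏ j ∈ range M, Q^(k+(k+1+j))) * Q^k =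
      Q^(k*(k+M)) * ee Q (k+M+1) := by
    have h1 : ee Q (k+M+1) = ∏ j ∈ range (k+M+1), Q^j := rfl
    have h2 := Finset.mul_prod_erase (range (k+M+1)) (fun j => Q^(k+j)) (a := k) (by simp)
    rw [erase_prod] at h2
    have h3 : ∏ j ∈ range (k+M+1), Q^(k+j) = Q^(k*(k+M+1)) * ee Q (k+M+1) := by
      rw [h1]
      simp_rw [pow_add]
      rw [prod_mul_distrib, prod_const, card_range]
      rw [← pow_mul]
    rw [h3] at h2
    apply mul_left_cancel₀ (pow_ne_zero k hQ)
    linear_combination h2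
  have p5 : (∏ j ∈ range k, (β - Q^j)) * (∏ j ∈ range k, (β - Q^(k+j))) * (β - Q^(2*k)) *
      (∏ j ∈ range M, (β - Q^(k+(k+1+j)))) * (∏ j ∈ range M, (β - Q^(k+M) * Q^(k+j+1))) =
      ∏ j ∈ range (2*(k+M)+1), (β - Q^j) := by
    rw [show 2*(k+M)+1 = (((k+k)+1)+M)+M by ring, prod_range_add, prod_range_add, prod_range_succ,
      prod_range_add]
    have q1 : ∀ j ∈ range M, β - Q^(k+M) * Q^(k+j+1) = β - Q^(k+k+1+M+j) := by
      intro j _; congr 1; ring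
    have q2 : ∀ j ∈ range M, β - Q^(k+(k+1+j)) = β - Q^(k+k+1+j) := by
      intro j _; congr 1; ring
    rw [prod_congr rfl q1, prod_congr rfl q2, two_mul]
  rw [erase_prod]
  simp_rw [hl]
  simp only [prod_mul_distrib, prod_inv_distrib, prod_const, card_range]
  rw [p3, ← p5]
  simp only [add_zero, one_mul] at p1 p2 ⊢
  have z0 : pp Q Q 0 = 1 := by simp [pp]
  rw [z0, mul_one] at p1
  rw [p1]
  have n1 : pp Q Q k ≠ 0 := by simpa using hQ1 k
  have n2 : pp Q Q M ≠ 0 := by simpa using hQ1 M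
  have n3 : ee Q (k+M+1) ≠ 0 := ee_ne hQ _
  have n4 : (∏ j ∈ range k, Q^(k+j)) ≠ 0 := prod_ne_zero_iff.mpr fun j _ => pow_ne_zero _ hQ
  have n5 : (∏ j ∈ range M, Q^(k+(k+1+j))) ≠ 0 := prod_ne_zero_iff.mpr fun j _ => pow_ne_zero _ hQ
  have e1 := ee_sq Q k
  generalize (∏ j ∈ range k, (β - Q^j)) = w1 at *
  generalize (∏ j ∈ range k, (β - Q^(k+j))) = w2 at *
  generalize (∏ j ∈ range M, (β - Q^(k+(k+1+j)))) = w3 at *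
  generalize (∏ j ∈ range M, (β - Q^(k+M) * Q^(k+j+1))) = w4 at *
  generalize (∏ j ∈ range k, (Q^(k+M) - Q^j)) = w5 at *
  generalize (∏ j ∈ range k, Q^(k+j)) = v1 at *
  generalize (∏ j ∈ range M, Q^(k+(k+1+j))) = v2 at *
  generalize ee Q (k+M+1) = E at *
  generalize pp Q Q (k+M) = P3 at *
  generalize pp Q Q M = P2 at *
  generalize pp Q Q k = P1 at *
  generalize ee Q k = e at *
  generalize (β - Q^(2*k)) = w6 at *
  have sg : ((-1:F)^k)^2 = 1 := by rw [← pow_mul, mul_comm, pow_mul]; simp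
  have c : w5 * P2 * ((-1)^k * e) * Q^(k*M) * E = v1 * v2 * P3 := by
    apply mul_right_cancel₀ (pow_ne_zero k hQ)
    have e2 : Q^(k*(k+M)) = Q^(k*k) * Q^(k*M) := by ring
    rw [e2] at p4
    linear_combination ((-1)^k * e * Q^(k*M) * E * Q^k) * p2 - P3 * p4 + P3 * E * Q^(k*M) * ((-1)^k)^2 * e1 + P3 * E * Q^(k*M) * Q^(k*k) * sg
  field_simp
  rw [pow_add]
  linear_combination w6 * w1 * w4 * w2 * w3 * (-1)^k * (-1)^M * c

lemma sumII {F : Type*} [Field F] {Q a b β : F} (hQ : Q ≠ 0) (ha : a ≠ 0) (hb : b ≠ 0)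
    (hroot : ∀ j, 0 < j → Q^j ≠ 1)
    (N s : ℕ) (hsN : 2*s < N) (hβ : β * Q^(s+1) = 1)
    (h : ∀ x ∈ ({a, a⁻¹, b, b⁻¹, 1} : Set F), ∀ j, pp (x * Q) Q j ≠ 0) :
    ∑ k ∈ range (N+1), gg Q a b k * tau Q a a⁻¹ b b⁻¹ β (Q^N) N k = 0 := by
  have hinj : Set.InjOn (lam Q β) (range (N+1)) := by
    have main : ∀ x y, x < y → lam Q β x ≠ lam Q β y := by
      intro x y hxy he
      have hb' : β = (Q^(s+1))⁻¹ := eq_inv_of_mul_eq_one_left hβ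
      obtain ⟨t, rfl⟩ : ∃ t, y = x + (t+1) := ⟨y - x - 1, by omega⟩
      rw [lam, lam, hb'] at he
      have f : (Q^(t+1) - 1) * (Q^(s+1+x+(x+(t+1))) - 1) = 0 := by
        field_simp at he
        have hx := pow_ne_zero x hQ
        have : Q^x * ((Q^(t+1) - 1) * (Q^(s+1+x+(x+(t+1))) - 1)) = 0 := by
          linear_combination (-1) * he
        exact (mul_eq_zero.mp this).resolve_left hx
      rcases mul_eq_zero.mp f with f | f
      · exact hroot _ (by omega) (sub_eq_zero.mp f)
      · exact hroot _ (by omega) (sub_eq_zero.mp f)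
    intro x _ y _ he
    rcases lt_trichotomy x y with h | h | h
    · exact absurd he (main _ _ h)
    · exact h
    · exact absurd he.symm (main _ _ h)
  let P : Polynomial F :=
    (∏ i ∈ range s, (Polynomial.X - Polynomial.C (a * Q^(i+1) * β + a⁻¹ * (Q^(i+1))⁻¹))) *
    (∏ i ∈ range s, (Polynomial.X - Polynomial.C (b * Q^(i+1) * β + b⁻¹ * (Q^(i+1))⁻¹)))
  have hP : P.natDegree < N := by
    refine lt_of_le_of_lt Polynomial.natDegree_mul_le ?_
    rw [Polynomial.natDegree_prod_of_monic _ _ (fun i _ => Polynomial.monic_X_sub_C _),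
      Polynomial.natDegree_prod_of_monic _ _ (fun i _ => Polynomial.monic_X_sub_C _)]
    simp only [Polynomial.natDegree_X_sub_C, sum_const, card_range, smul_eq_mul, mul_one]
    omega
  have L := lag N (lam Q β) hinj P hP
  obtain ⟨C, hC⟩ : ∃ C : F, ∀ k ∈ range (N+1), gg Q a b k * tau Q a a⁻¹ b b⁻¹ β (Q^N) N k =
      C * (P.eval (lam Q β k) / ∏ j ∈ (range (N+1)).erase k, (lam Q β k - lam Q β j)) := by
    refine ⟨β^(2*N) * (Q^(s+1))^(2*s) * (pp (a*Q) Q s * pp (a⁻¹*Q) Q s * pp (b*Q) Q s * pp (b⁻¹*Q) Q s)⁻¹ *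
      ((ee Q (N+1))⁻¹ * pp (1*Q) Q N * (-1)^N * ∏ j ∈ range (2*N+1), (β - Q^j)), ?_⟩
    intro k hk
    have hD : ∏ j ∈ (range (N+1)).erase k, (lam Q β k - lam Q β j) ≠ 0 := by
      refine prod_ne_zero_iff.mpr fun j hj => ?_
      rw [mem_erase] at hj
      intro h0
      exact hj.1 (hinj hj.2 hk (sub_eq_zero.mp h0).symm)
    rw [mem_range] at hk
    obtain ⟨M, rfl⟩ : ∃ M, N = k + M := ⟨N - k, by omega⟩
    rw [mul_div_assoc', eq_div_iff hD]
    have b3 := B3 (β := β) hQ (h 1 (by simp)) k M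
    rw [← b3]
    have b2a := B2 hQ a a⁻¹ (mul_inv_cancel₀ ha) s k hβ
    have b2b := B2 hQ b b⁻¹ (mul_inv_cancel₀ hb) s k hβ
    have l1 := B1 a s k hβ
    have l2 := B1 a⁻¹ s k hβ
    have l3 := B1 b s k hβ
    have l4 := B1 b⁻¹ s k hβ
    have hev : P.eval (lam Q β k) =
       (∏ i ∈ range s, (lam Q β k - (a * Q^(i+1) * β + a⁻¹ * (Q^(i+1))⁻¹))) *
       (∏ i ∈ range s, (lam Q β k - (b * Q^(i+1) * β + b⁻¹ * (Q^(i+1))⁻¹))) := by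
      simp only [P, Polynomial.eval_mul, Polynomial.eval_prod, Polynomial.eval_sub,
        Polynomial.eval_X, Polynomial.eval_C]
    rw [hev]
    generalize (∏ i ∈ range s, (lam Q β k - (a * Q^(i+1) * β + a⁻¹ * (Q^(i+1))⁻¹))) = Pa at *
    generalize (∏ i ∈ range s, (lam Q β k - (b * Q^(i+1) * β + b⁻¹ * (Q^(i+1))⁻¹))) = Pb at *
    generalize (∏ j ∈ (range (k+M+1)).erase k, (lam Q β k - lam Q β j)) = D at *
    have a1 := h a (by simp) k
    have a2 := h a⁻¹ (by simp) k
    have b1 := h b (by simp) k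
    have b2 := h b⁻¹ (by simp) k
    have a3 := h a (by simp) s
    have a4 := h a⁻¹ (by simp) s
    have b3' := h b (by simp) s
    have b4 := h b⁻¹ (by simp) s
    unfold tau gg
    rw [show k + M - k = M by omega]
    have pw : β^(2*M) * Q^(2*k) * β^(4*k) * (Q^(k+s+1))^(2*s) = β^(2*(k+M)) * (Q^(s+1))^(2*s) := by
      have h1 : β^(2*k) * (Q^(s+1))^(2*k) = 1 := by rw [← mul_pow, hβ, one_pow]
      have h2 : β^(2*M) * Q^(2*k) * β^(4*k) * (Q^(k+s+1))^(2*s) =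
        β^(2*(k+M)) * (Q^(s+1))^(2*s) * (β^(2*k) * (Q^(s+1))^(2*k)) := by ring
      rw [h2, h1, mul_one]
    rw [← pw]
    clear b3 hev L hP pw
    generalize (∏ j ∈ range k, (β - a * Q^j)) = x1 at *
    generalize (∏ j ∈ range k, (β - a⁻¹ * Q^j)) = x2 at *
    generalize (∏ j ∈ range k, (β - b * Q^j)) = x3 at *
    generalize (∏ j ∈ range k, (β - b⁻¹ * Q^j)) = x4 at *
    generalize (∏ j ∈ range k, (β - 1 * Q^j)) = x5 at *
    generalize (∏ j ∈ range k, (Q^(k+M) - Q^j)) = x6 at *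
    generalize (∏ j ∈ range M, (β - Q^(k+M) * Q^(k+j+1))) = x7 at *
    generalize (pp (1*Q) Q k) = C1 at *
    generalize (β - Q^(2*k)) = x8 at *
    generalize pp (a*Q) Q k = A1 at *
    generalize pp (a⁻¹*Q) Q k = A2 at *
    generalize pp (b*Q) Q k = B1 at *
    generalize pp (b⁻¹*Q) Q k = B2 at *
    generalize pp (a*Q) Q s = A3 at *
    generalize pp (a⁻¹*Q) Q s = A4 at *
    generalize pp (b*Q) Q s = B3 at *
    generalize pp (b⁻¹*Q) Q s = B4 at *
    generalize pp (a*Q) Q (k+s) = A5 at *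
    generalize pp (a⁻¹*Q) Q (k+s) = A6 at *
    generalize pp (b*Q) Q (k+s) = B5 at *
    generalize pp (b⁻¹*Q) Q (k+s) = B6 at *
    have m1 : x1 * x2 * (A1⁻¹ * A2⁻¹) = β^k * β^k * (Q^(k+s+1))^s * Pa * (A3⁻¹ * A4⁻¹) := by
      field_simp
      linear_combination (x2 * A4) * l1 + (β^k * A5) * l2 - β^k * β^k * b2a
    have m2 : x3 * x4 * (B1⁻¹ * B2⁻¹) = β^k * β^k * (Q^(k+s+1))^s * Pb * (B3⁻¹ * B4⁻¹) := by
      field_simp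
      linear_combination (x4 * B4) * l3 + (β^k * B5) * l4 - β^k * β^k * b2b
    simp only [mul_inv]
    have r1 : β^(4*k) = β^k * β^k * (β^k * β^k) := by ring
    have r2 : (Q^(k+s+1))^(2*s) = (Q^(k+s+1))^s * (Q^(k+s+1))^s := by ring
    rw [r1, r2]
    generalize (Q^(k+s+1))^s = y1 at *
    generalize β^k = y2 at *
    generalize β^(2*M) = y3 at *
    generalize Q^(2*k) = y4 at *
    linear_combination (x8 * y3 * y4 * x5 * x6 * x7 * D * C1⁻¹) * (x3 * x4 * (B1⁻¹ * B2⁻¹)) * m1 +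
      (x8 * y3 * y4 * x5 * x6 * x7 * D * C1⁻¹) * (y2 * y2 * y1 * Pa * (A3⁻¹ * A4⁻¹)) * m2
  rw [sum_congr rfl hC, ← mul_sum, L, mul_zero]

end Work

namespace Work

lemma map_tau {A B : Type*} [CommRing A] [CommRing B] (f : A →+* B) (Q a a' b b' x φ : A) (N k : ℕ) :
    f (tau Q a a' b b' x φ N k) = tau (f Q) (f a) (f a') (f b) (f b') (f x) (f φ) N k := by
  simp [tau, map_prod]

/-- the polynomial behind the sum -/
def TP {A : Type*} [CommRing A] (g : ℕ → A) (Q a a' b b' q κ : A) (N : ℕ) : Polynomial A :=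
  ∑ k ∈ range (N+1), Polynomial.C (g k) * tau (Polynomial.C Q) (Polynomial.C a) (Polynomial.C a')
    (Polynomial.C b) (Polynomial.C b') Polynomial.X
    (Polynomial.C q + Polynomial.C κ * (Polynomial.X - Polynomial.C q)) N k

lemma TP_eval {A : Type*} [CommRing A] (g : ℕ → A) (Q a a' b b' q κ : A) (N : ℕ) (x : A) :
    (TP g Q a a' b b' q κ N).eval x =
      ∑ k ∈ range (N+1), g k * tau Q a a' b b' x (q + κ * (x - q)) N k := by
  rw [TP, Polynomial.eval_finsetSum]
  refine sum_congr rfl fun k _ => ?_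
  rw [Polynomial.eval_mul, Polynomial.eval_C, ← Polynomial.coe_evalRingHom, map_tau]
  simp

lemma div1 {A : Type*} [CommRing A] (P : Polynomial A) (q x : A) (h : P.eval x = 0) :
    ∃ y, P.eval q = (q - x) * y := by
  obtain ⟨U, hU⟩ := Polynomial.dvd_iff_isRoot.mpr h
  exact ⟨U.eval q, by rw [hU]; simp⟩

lemma div2 {A : Type*} [CommRing A] [IsDomain A] (P : Polynomial A) (q x x' : A)
    (h : P.eval x = 0) (h' : P.eval x' = 0) (hne : x' ≠ x) :
    ∃ y, P.eval q = (q - x) * (q - x') * y := by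
  obtain ⟨U, hU⟩ := Polynomial.dvd_iff_isRoot.mpr h
  rw [hU] at h'
  simp only [Polynomial.eval_mul, Polynomial.eval_sub, Polynomial.eval_X, Polynomial.eval_C] at h'
  have h2 := (mul_eq_zero.mp h').resolve_left (sub_ne_zero.mpr hne)
  obtain ⟨y, hy⟩ := div1 U q x' h2
  refine ⟨y, ?_⟩
  rw [hU, Polynomial.eval_mul, hy]
  simp [mul_assoc]

structure Loc {F : Type*} [Field F] (Λ : Subring F) (q a b : F) (m : ℕ) : Prop where
  hm : 1 < m
  hq : q ≠ 0
  ha : a ≠ 0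
  hb : b ≠ 0
  hroot : ∀ j, 0 < j → q^j ≠ 1
  hne : ∀ x ∈ ({a, a⁻¹, b, b⁻¹} : Set F), ∀ j : ℕ, 1 - x * q^j ≠ 0
  mq : q ∈ Λ
  mq' : q⁻¹ ∈ Λ
  mx : ∀ x ∈ ({a, a⁻¹, b, b⁻¹} : Set F), x ∈ Λ
  minv : ∀ x ∈ ({a, a⁻¹, b, b⁻¹} : Set F), ∀ j : ℕ, (1 - x * q^j)⁻¹ ∈ Λ
  minv1 : ∀ j, ¬ m ∣ j → (1 - q^j)⁻¹ ∈ Λ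
  mgeom : ∀ M, 0 < M → (∑ i ∈ range M, (q^m)^i)⁻¹ ∈ Λ

section
variable {F : Type*} [Field F]

lemma geo (x : F) (t : ℕ) : 1 - x^t = (1 - x) * ∑ i ∈ range t, x^i := by
  rw [mul_neg_geom_sum]

/-- the four-parameter factor -/
def rho (q a b : F) (d j : ℕ) : F :=
  (1 - a * q⁻¹ * (q^d)^j) * (1 - a⁻¹ * q⁻¹ * (q^d)^j) *
  (1 - b * q⁻¹ * (q^d)^j) * (1 - b⁻¹ * q⁻¹ * (q^d)^j) *
  ((1 - a * q^(d*(j+1)))⁻¹ * (1 - a⁻¹ * q^(d*(j+1)))⁻¹ *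
   (1 - b * q^(d*(j+1)))⁻¹ * (1 - b⁻¹ * q^(d*(j+1)))⁻¹) * q^(2*d+3)

def sig (q : F) (d j : ℕ) : F := (1 - q⁻¹ * (q^d)^j) * (1 - q^(d*(j+1)))⁻¹

def cc (q a b : F) (d k : ℕ) : F := ∏ j ∈ range k, (rho q a b d j * sig q d j ^ 2)

def tt (q a b : F) (d k : ℕ) : F := (1 - q⁻¹ * (q^d)^(2*k)) * cc q a b d k

lemma pp_inv (x q : F) (d k : ℕ) :
    (pp (x * q^d) (q^d) k)⁻¹ = ∏ j ∈ range k, (1 - x * q^(d*(j+1)))⁻¹ := by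
  rw [pp, ← prod_inv_distrib]
  refine prod_congr rfl fun j _ => ?_
  congr 2
  rw [mul_assoc]; congr 1
  ring

lemma cc_eq (q a b : F) (d k : ℕ) :
    cc q a b d k = (pp (a * q⁻¹) (q^d) k * pp (a⁻¹ * q⁻¹) (q^d) k * pp (b * q⁻¹) (q^d) k *
      pp (b⁻¹ * q⁻¹) (q^d) k * pp q⁻¹ (q^d) k ^ 2) *
      ((pp (a*q^d) (q^d) k)⁻¹ * (pp (a⁻¹*q^d) (q^d) k)⁻¹ * (pp (b*q^d) (q^d) k)⁻¹ *
       (pp (b⁻¹*q^d) (q^d) k)⁻¹ * (pp (1*q^d) (q^d) k)⁻¹ ^ 2) * q^((2*d+3)*k) := by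
  simp only [pp_inv]
  simp only [pp, cc, rho, sig, prod_mul_distrib, prod_const, card_range, ← prod_pow, one_mul,
    mul_pow]
  rw [pow_mul q (2*d+3) k]
  ring
end

end Work

namespace Work
variable {F : Type*} [Field F]

lemma pl (q α Q : F) (hq : q ≠ 0) (k : ℕ) :
    ∏ j ∈ range k, (q - α * Q^j) = q^k * pp (α * q⁻¹) Q k := by
  have : ∀ j ∈ range k, q - α * Q^j = q * (1 - α * q⁻¹ * Q^j) := by
    intro j _; field_simp
  rw [prod_congr rfl this, prod_mul_distrib, prod_const, card_range, pp]

lemma C0 (q a b : F) (d N k : ℕ) (hq : q ≠ 0) (hk : k ≤ N) (hpp : pp (1*q^d) (q^d) k ≠ 0) :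
    gg (q^d) a b k * tau (q^d) a a⁻¹ b b⁻¹ q q N k =
      q^(1+3*N) * pp (1*q^d) (q^d) N * tt q a b d k := by
  obtain ⟨M, rfl⟩ : ∃ M, N = k + M := ⟨N - k, by omega⟩
  rw [tt, cc_eq, gg, tau]
  have e1 : ∏ j ∈ range k, (q - (q^d)^j) = q^k * pp q⁻¹ (q^d) k := by
    simpa using pl q 1 (q^d) hq k
  have e2 : ∏ j ∈ range M, (q - q * (q^d)^(k+j+1)) = q^M * ∏ j ∈ range M, (1 - 1 * q^d * (q^d)^(k+j)) := by
    have : ∀ j ∈ range M, q - q * (q^d)^(k+j+1) = q * (1 - 1 * q^d * (q^d)^(k+j)) := by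
      intro j _; ring
    rw [prod_congr rfl this, prod_mul_distrib, prod_const, card_range]
  rw [show k + M - k = M by omega, pl q a _ hq, pl q a⁻¹ _ hq, pl q b _ hq, pl q b⁻¹ _ hq,
    pl q 1 _ hq, e1, e2, pp_add (1*q^d)]
  have e3 : q - (q^d)^(2*k) = q * (1 - q⁻¹ * (q^d)^(2*k)) := by field_simp
  rw [e3]
  have e4 : q * q^(2*M) * (q^d)^(2*k) * (q^k)^6 * q^M = q^(1+3*(k+M)) * q^((2*d+3)*k) := by ring
  simp only [mul_inv, one_mul]
  rw [one_mul] at hpp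
  have e5 : pp (q^d) (q^d) k * (pp (q^d) (q^d) k)⁻¹ = 1 := mul_inv_cancel₀ hpp
  generalize (pp (q^d) (q^d) k)⁻¹ = P' at *
  generalize (pp (q^d) (q^d) k) = P at *
  generalize (pp (a*q^d) (q^d) k)⁻¹ = P1 at *
  generalize (pp (a⁻¹*q^d) (q^d) k)⁻¹ = P2 at *
  generalize (pp (b*q^d) (q^d) k)⁻¹ = P3 at *
  generalize (pp (b⁻¹*q^d) (q^d) k)⁻¹ = P4 at *
  generalize (pp (a*q⁻¹) (q^d) k) = R1 at *
  generalize (pp (a⁻¹*q⁻¹) (q^d) k) = R2 at *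
  generalize (pp (b*q⁻¹) (q^d) k) = R3 at *
  generalize (pp (b⁻¹*q⁻¹) (q^d) k) = R4 at *
  generalize (pp (q⁻¹) (q^d) k) = R5 at *
  generalize (∏ j ∈ range M, (1 - q^d * (q^d)^(k+j))) = W at *
  generalize (1 - q⁻¹ * (q^d)^(2*k)) = V at *
  generalize q^(1+3*(k+M)) = z1 at *
  generalize q^((2*d+3)*k) = z2 at *
  generalize q^(2*M) = z3 at *
  generalize (q^d)^(2*k) = z4 at *
  generalize q^k = z5 at *
  generalize q^M = z6 at *
  linear_combination (P1*P2*P3*P4*P' * V*R1*R2*R3*R4*R5^2*W) * e4 -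
    z1 * W * V * z2 * R1*R2*R3*R4*R5^2*P1*P2*P3*P4 * P' * e5

namespace Loc
variable {Λ : Subring F} {q a b : F} {m : ℕ}

lemma e_ne (L : Loc Λ q a b m) : 1 - q^m ≠ 0 := by
  have := L.hroot m (by have := L.hm; omega)
  exact sub_ne_zero.mpr (Ne.symm this)

lemma ndvd {d N j : ℕ} (hco : Nat.Coprime m d) (hN : j + 1 ≤ N) (hNm : N < m) :
    ¬ m ∣ d * (j+1) := by
  intro h
  have := hco.dvd_of_dvd_mul_left h
  have := Nat.le_of_dvd (by omega) this
  omega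

lemma ppne (L : Loc Λ q a b m) {d : ℕ} (hd : 0 < d) :
    ∀ x ∈ ({a, a⁻¹, b, b⁻¹, 1} : Set F), ∀ j, pp (x * q^d) (q^d) j ≠ 0 := by
  intro x hx j
  rw [pp]
  refine prod_ne_zero_iff.mpr fun i _ => ?_
  have e : x * q^d * (q^d)^i = x * q^(d*(i+1)) := by ring
  rw [e]
  simp only [Set.mem_insert_iff, Set.mem_singleton_iff] at hx
  by_cases h1 : x = 1
  · rw [h1, one_mul]
    exact sub_ne_zero.mpr (Ne.symm (L.hroot _ (by positivity)))
  · exact L.hne x (by simp only [Set.mem_insert_iff, Set.mem_singleton_iff]; tauto) _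

lemma ppinv (L : Loc Λ q a b m) {d N : ℕ} (hco : Nat.Coprime m d) (hN : N < m) {k : ℕ}
    (hk : k ≤ N) :
    ∀ x ∈ ({a, a⁻¹, b, b⁻¹, 1} : Set F), (pp (x * q^d) (q^d) k)⁻¹ ∈ Λ := by
  intro x hx
  rw [pp_inv]
  refine Subring.prod_mem _ fun i hi => ?_
  rw [mem_range] at hi
  simp only [Set.mem_insert_iff, Set.mem_singleton_iff] at hx
  by_cases h1 : x = 1
  · rw [h1, one_mul]
    exact L.minv1 _ (ndvd hco (by omega) hN)
  · exact L.minv x (by simp only [Set.mem_insert_iff, Set.mem_singleton_iff]; tauto) _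

lemma ggmem (L : Loc Λ q a b m) {d N : ℕ} (hco : Nat.Coprime m d) (hN : N < m) {k : ℕ}
    (hk : k ≤ N) : gg (q^d) a b k ∈ Λ := by
  have h := L.ppinv hco hN hk
  rw [gg]
  simp only [mul_inv]
  exact mul_mem (mul_mem (mul_mem (mul_mem (h a (by simp)) (h _ (by simp))) (h _ (by simp)))
    (h _ (by simp))) (h _ (by simp))

lemma geom_mem (L : Loc Λ q a b m) (t : ℕ) : ∑ i ∈ range t, (q^m)^i ∈ Λ :=
  Subring.sum_mem _ fun _ _ => pow_mem (pow_mem L.mq _) _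

/-- relation of the evaluated polynomial with the sum -/
lemma core (L : Loc Λ q a b m) [CharZero F] {d N l : ℕ} (hd : 0 < d) (hco : Nat.Coprime m d)
    (hN : N < m) (hdN : d * N = 1 + m * l) :
    (1 - q^m)⁻¹ * ∑ k ∈ range (N+1), tt q a b d k ∈ Λ ∧
    ∀ r, 0 < r → 2 * r < N → m = d * r + 1 → N + r = m →
      ((1 - q^m)^2)⁻¹ * ∑ k ∈ range (N+1), tt q a b d k ∈ Λ := by
  classical
  have hq := L.hq
  let g : ℕ → Λ := fun k => if h : gg (q^d) a b k ∈ Λ then ⟨_, h⟩ else 0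
  have hg : ∀ k ∈ range (N+1), ((g k : Λ) : F) = gg (q^d) a b k := by
    intro k hk
    rw [mem_range] at hk
    simp only [g]
    rw [dif_pos (L.ggmem hco hN (k := k) (by omega))]
  let qq : Λ := ⟨q, L.mq⟩
  let a0 : Λ := ⟨a, L.mx a (by simp)⟩
  let a1 : Λ := ⟨a⁻¹, L.mx _ (by simp)⟩
  let b0 : Λ := ⟨b, L.mx b (by simp)⟩
  let b1 : Λ := ⟨b⁻¹, L.mx _ (by simp)⟩
  have hev : ∀ κ x : Λ, (((TP g (qq^d) a0 a1 b0 b1 qq κ N).eval x : Λ) : F) =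
      ∑ k ∈ range (N+1), gg (q^d) a b k *
        tau (q^d) a a⁻¹ b b⁻¹ (x:F) (q + κ * (x - q)) N k := by
    intro κ x
    rw [TP_eval, ← Subring.subtype_apply, map_sum]
    refine sum_congr rfl fun k hk => ?_
    rw [map_mul, map_tau, Subring.subtype_apply, hg k hk]
    rfl
  have hne := L.ppne hd
  have hevq : ∀ κ : Λ, (((TP g (qq^d) a0 a1 b0 b1 qq κ N).eval qq : Λ) : F) =
      q^(1+3*N) * pp (1*q^d) (q^d) N * ∑ k ∈ range (N+1), tt q a b d k := by
    intro κ
    rw [hev, mul_sum]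
    refine sum_congr rfl fun k hk => ?_
    rw [mem_range] at hk
    rw [← C0 q a b d N k hq (by omega) (hne 1 (by simp) k)]
    simp [qq]
  have hQ : q^d ≠ 0 := pow_ne_zero _ hq
  have hx1 : ∀ κ : Λ, (TP g (qq^d) a0 a1 b0 b1 qq κ N).eval ((qq^d)^N) = 0 := by
    intro κ
    apply Subtype.ext
    rw [hev]
    exact sumI hQ L.ha L.hb N (fun x hx j => Or.inl (hne x hx j))
  have hqN : q - (q^d)^N = (1 - q^m) * (q * ∑ i ∈ range l, (q^m)^i) := by
    rw [← pow_mul, hdN, pow_add, pow_mul, pow_one]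
    have := geo (q^m) l
    linear_combination q * this
  have he := L.e_ne
  have hunit : (q^(1+3*N) * pp (1*q^d) (q^d) N)⁻¹ ∈ Λ := by
    rw [mul_inv, ← inv_pow]
    exact mul_mem (pow_mem L.mq' _) (L.ppinv hco hN le_rfl 1 (by simp))
  have hun : q^(1+3*N) * pp (1*q^d) (q^d) N ≠ 0 :=
    mul_ne_zero (pow_ne_zero _ hq) (hne 1 (by simp) N)
  have hG := mul_mem L.mq (L.geom_mem l)
  constructor
  · obtain ⟨y, hy⟩ := div1 _ qq _ (hx1 0)
    have h2 := hevq 0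
    rw [hy] at h2
    have h3 : (q - (q^d)^N) * (y : F) =
      q^(1+3*N) * pp (1*q^d) (q^d) N * ∑ k ∈ range (N+1), tt q a b d k := h2
    rw [hqN] at h3
    have h4 : (1 - q^m)⁻¹ * ∑ k ∈ range (N+1), tt q a b d k =
      (q^(1+3*N) * pp (1*q^d) (q^d) N)⁻¹ * ((q * ∑ i ∈ range l, (q^m)^i) * y) := by
      rw [inv_mul_eq_iff_eq_mul₀ he, mul_left_comm, eq_inv_mul_iff_mul_eq₀ hun, ← h3]
      ring
    rw [h4]
    exact mul_mem hunit (mul_mem hG y.2)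
  · intro r hr hrN hmr hNr
    let qi : Λ := ⟨q⁻¹, L.mq'⟩
    let β : Λ := (qi^d)^r
    have hβ : (β : F) = ((q^d)^r)⁻¹ := by
      simp [β, qi]
    have hβ1 : (β : F) * (q^d)^r = 1 := by
      rw [hβ]; exact inv_mul_cancel₀ (pow_ne_zero _ hQ)
    have hqm : q^m = (q^d)^r * q := by rw [hmr]; ring
    have hβq : q - (β : F) = (1 - q^m) * (-(β : F)) := by
      rw [hqm]
      linear_combination (-q) * hβ1
    let κ : Λ := -(qq * (∑ i ∈ range l, (qq^m)^i) * (qq^d)^r)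
    have hκ : (κ : F) = -(q * (∑ i ∈ range l, (q^m)^i) * (q^d)^r) := by
      simp [κ, qq]
    have hφ : q + (κ : F) * ((β : F) - q) = (q^d)^N := by
      have e1 : (β:F) - q = (1 - q^m) * β := by linear_combination (-1) * hβq
      rw [e1, hκ]
      linear_combination hqN - (q * (∑ i ∈ range l, (q^m)^i) * (1 - q^m)) * hβ1
    have hx2 : (TP g (qq^d) a0 a1 b0 b1 qq κ N).eval β = 0 := by
      apply Subtype.ext
      rw [hev, hφ]
      obtain ⟨s, rfl⟩ : ∃ s, r = s + 1 := ⟨r - 1, by omega⟩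
      refine sumII hQ L.ha L.hb ?_ N s (by omega) hβ1 hne
      intro j hj
      rw [← pow_mul]
      exact L.hroot _ (by positivity)
    have hne' : β ≠ (qq^d)^N := by
      intro h
      have h1 : (β : F) = (q^d)^N := by rw [h]; simp [qq]
      rw [h1, ← pow_add, ← pow_mul] at hβ1
      exact L.hroot _ (by positivity) hβ1
    obtain ⟨y, hy⟩ := div2 _ qq _ _ (hx1 κ) hx2 hne'
    have h2 := hevq κ
    rw [hy] at h2
    have h3 : (q - (q^d)^N) * (q - (β : F)) * (y : F) =
      q^(1+3*N) * pp (1*q^d) (q^d) N * ∑ k ∈ range (N+1), tt q a b d k := h2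
    rw [hqN, hβq] at h3
    have h4 : ((1 - q^m)^2)⁻¹ * ∑ k ∈ range (N+1), tt q a b d k =
      (q^(1+3*N) * pp (1*q^d) (q^d) N)⁻¹ * ((q * ∑ i ∈ range l, (q^m)^i) * (-(β:F)) * y) := by
      rw [inv_mul_eq_iff_eq_mul₀ (pow_ne_zero _ he), mul_left_comm, eq_inv_mul_iff_mul_eq₀ hun, ← h3]
      ring
    rw [h4]
    exact mul_mem hunit (mul_mem (mul_mem hG (neg_mem β.2)) y.2)

end Loc
end Work

namespace Work
variable {F : Type*} [Field F]

/-- congruence modulo `e` inside the subring -/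
def Cg (Λ : Subring F) (e x y : F) : Prop := x ∈ Λ ∧ y ∈ Λ ∧ ∃ z ∈ Λ, x = y + e * z

namespace Cg
variable {Λ : Subring F} {e x y x' y' : F}

lemma refl (h : x ∈ Λ) : Cg Λ e x x := ⟨h, h, 0, zero_mem _, by ring⟩

lemma mul (h : Cg Λ e x y) (h' : Cg Λ e x' y') : Cg Λ e (x * x') (y * y') := by
  obtain ⟨hx, hy, z, hz, h1⟩ := h
  obtain ⟨hx', hy', z', hz', h1'⟩ := h'
  refine ⟨mul_mem hx hx', mul_mem hy hy', z * x' + y * z',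
    add_mem (mul_mem hz hx') (mul_mem hy hz'), ?_⟩
  linear_combination x' * h1 + y * h1'

lemma sub (h : Cg Λ e x y) (h' : Cg Λ e x' y') : Cg Λ e (x - x') (y - y') := by
  obtain ⟨hx, hy, z, hz, h1⟩ := h
  obtain ⟨hx', hy', z', hz', h1'⟩ := h'
  refine ⟨sub_mem hx hx', sub_mem hy hy', z - z', sub_mem hz hz', ?_⟩
  linear_combination h1 - h1'

lemma inv (h : Cg Λ e x y) (hx : x ≠ 0) (hy : y ≠ 0) (mx : x⁻¹ ∈ Λ) (my : y⁻¹ ∈ Λ) :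
    Cg Λ e x⁻¹ y⁻¹ := by
  obtain ⟨_, _, z, hz, h1⟩ := h
  refine ⟨mx, my, -(z * x⁻¹ * y⁻¹), neg_mem (mul_mem (mul_mem hz mx) my), ?_⟩
  field_simp
  linear_combination (-1) * h1

lemma pow (h : Cg Λ e x y) (k : ℕ) : Cg Λ e (x^k) (y^k) := by
  induction k with
  | zero => simpa using refl (one_mem _)
  | succ k ih => rw [pow_succ, pow_succ]; exact ih.mul h

lemma prod {f g : ℕ → F} {k : ℕ} (h : ∀ j < k, Cg Λ e (f j) (g j)) :
    Cg Λ e (∏ j ∈ range k, f j) (∏ j ∈ range k, g j) := by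
  induction k with
  | zero => simpa using refl (one_mem _)
  | succ k ih =>
    rw [prod_range_succ, prod_range_succ]
    exact (ih fun j hj => h j (by omega)).mul (h k (by omega))

end Cg

namespace Loc
variable {Λ : Subring F} {q a b : F} {m : ℕ}

lemma cgQ (L : Loc Λ q a b m) (d l j : ℕ) : Cg Λ (1 - q^m) (q^(d*(l*m+j))) (q^(d*j)) := by
  refine ⟨pow_mem L.mq _, pow_mem L.mq _, -(q^(d*j) * ∑ i ∈ range (d*l), (q^m)^i),
    neg_mem (mul_mem (pow_mem L.mq _) (L.geom_mem _)), ?_⟩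
  have := geo (q^m) (d*l)
  have e : q^(d*(l*m+j)) = q^(d*j) * (q^m)^(d*l) := by ring
  rw [e]
  linear_combination (-q^(d*j)) * this

lemma cgn (L : Loc Λ q a b m) (d l j : ℕ) {x : F} (hx : x ∈ Λ) :
    Cg Λ (1 - q^m) (1 - x * (q^d)^(l*m+j)) (1 - x * (q^d)^j) := by
  rw [← pow_mul, ← pow_mul]
  exact (Cg.refl (one_mem _)).sub ((Cg.refl hx).mul (L.cgQ d l j))

lemma cgd (L : Loc Λ q a b m) (d l j : ℕ) {x : F} (hx : x ∈ ({a, a⁻¹, b, b⁻¹} : Set F)) :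
    Cg Λ (1 - q^m) (1 - x * q^(d*(l*m+j+1)))⁻¹ (1 - x * q^(d*(j+1)))⁻¹ := by
  refine Cg.inv ?_ (L.hne x hx _) (L.hne x hx _) (L.minv x hx _) (L.minv x hx _)
  rw [add_assoc]
  exact (Cg.refl (one_mem _)).sub ((Cg.refl (L.mx x hx)).mul (L.cgQ d l (j+1)))

lemma cgrho (L : Loc Λ q a b m) (d l j : ℕ) :
    Cg Λ (1 - q^m) (rho q a b d (l*m+j)) (rho q a b d j) := by
  have ma := L.mx a (by simp)
  have ma' := L.mx a⁻¹ (by simp)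
  have mb := L.mx b (by simp)
  have mb' := L.mx b⁻¹ (by simp)
  have hi := L.mq'
  rw [rho, rho]
  exact ((((((L.cgn d l j (mul_mem ma hi)).mul (L.cgn d l j (mul_mem ma' hi))).mul
    (L.cgn d l j (mul_mem mb hi))).mul (L.cgn d l j (mul_mem mb' hi))).mul
    ((((L.cgd d l j (by simp)).mul (L.cgd d l j (by simp))).mul (L.cgd d l j (by simp))).mul
      (L.cgd d l j (by simp)))).mul (Cg.refl (pow_mem L.mq _)))

lemma ndvd' {d l j : ℕ} (hco : Nat.Coprime m d) (hj : j + 1 < m) : ¬ m ∣ d * (l*m+j+1) := by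
  intro h
  have h1 := hco.dvd_of_dvd_mul_left h
  rw [add_assoc] at h1
  have h2 := (Nat.dvd_add_right (Dvd.intro_left l rfl)).mp h1
  have := Nat.le_of_dvd (by omega) h2
  omega

lemma rne (L : Loc Λ q a b m) {j : ℕ} (h : 0 < j) : 1 - q^j ≠ 0 :=
  sub_ne_zero.mpr (Ne.symm (L.hroot _ h))

lemma cgsig (L : Loc Λ q a b m) {d l j : ℕ} (hd : 0 < d) (hco : Nat.Coprime m d)
    (hj : j + 1 < m) : Cg Λ (1 - q^m) (sig q d (l*m+j)) (sig q d j) := by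
  rw [sig, sig]
  refine (L.cgn d l j L.mq').mul (Cg.inv ?_ (L.rne (by positivity)) (L.rne (by positivity))
    (L.minv1 _ (ndvd' hco hj)) (L.minv1 _ (by simpa using ndvd' (l := 0) hco hj)))
  rw [add_assoc]
  exact (Cg.refl (one_mem _)).sub (L.cgQ d l (j+1))

/-- the numerator vanishing modulo e -/
lemma numN (L : Loc Λ q a b m) {d N l' : ℕ} (hdN : d * N = 1 + m * l') (l : ℕ) :
    1 - q⁻¹ * (q^d)^(l*m+N) = (1 - q^m) * ∑ i ∈ range (d*l+l'), (q^m)^i := by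
  rw [← geo]
  congr 1
  have : (q^d)^(l*m+N) = q * (q^m)^(d*l+l') := by
    rw [← pow_mul, ← pow_mul, ← pow_succ']
    congr 1
    linear_combination hdN
  rw [this, inv_mul_cancel_left₀ L.hq]

lemma nmem (L : Loc Λ q a b m) (d j : ℕ) : 1 - q⁻¹ * (q^d)^j ∈ Λ :=
  sub_mem (one_mem _) (mul_mem L.mq' (pow_mem (pow_mem L.mq _) _))

lemma prodnum (L : Loc Λ q a b m) {d N l' : ℕ} (hdN : d * N = 1 + m * l') (l : ℕ) {k : ℕ}
    (hk : N < k) : ∃ z ∈ Λ, ∏ j ∈ range k, (1 - q⁻¹ * (q^d)^(l*m+j)) = (1 - q^m) * z := by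
  refine ⟨(∑ i ∈ range (d*l+l'), (q^m)^i) * ∏ j ∈ (range k).erase N, (1 - q⁻¹ * (q^d)^(l*m+j)),
    mul_mem (L.geom_mem _) (Subring.prod_mem _ fun j _ => L.nmem _ _), ?_⟩
  rw [← mul_prod_erase (range k) _ (mem_range.mpr hk), L.numN hdN]
  ring

lemma prodsig (L : Loc Λ q a b m) {d N l' : ℕ} (hd : 0 < d) (hco : Nat.Coprime m d)
    (hN : N < m) (hdN : d * N = 1 + m * l') (l : ℕ) :
    ∏ j ∈ range m, sig q d (l*m+j) ∈ Λ := by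
  obtain ⟨z, hz, h⟩ := L.prodnum hdN l hN
  simp only [sig]
  rw [prod_mul_distrib, h]
  obtain ⟨m', rfl⟩ : ∃ m', m = m' + 1 := ⟨m - 1, by omega⟩
  rw [prod_range_succ]
  have e1 : q^(d*(l*(m'+1)+m'+1)) = (q^(m'+1))^(d*(l+1)) := by
    rw [← pow_mul]; congr 1; ring
  rw [e1, geo (q^(m'+1)), mul_inv]
  have he := L.e_ne
  have : ∀ P G : F, (1 - q^(m'+1)) * z * (P * ((1 - q^(m'+1))⁻¹ * G)) = z * (P * G) := by
    intro P G; field_simp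
  rw [this]
  refine mul_mem hz (mul_mem (Subring.prod_mem _ fun j hj => ?_) (L.mgeom _ (by positivity)))
  rw [mem_range] at hj
  exact L.minv1 _ (ndvd' hco (by omega))

lemma ccmem (L : Loc Λ q a b m) {d N l' : ℕ} (hd : 0 < d) (hco : Nat.Coprime m d)
    (hN : N < m) (hdN : d * N = 1 + m * l') (l : ℕ) : cc q a b d (l*m) ∈ Λ := by
  induction l with
  | zero => simp [cc]
  | succ l ih =>
    rw [cc] at ih ⊢
    rw [add_mul, one_mul, prod_range_add, prod_mul_distrib (s := range m), prod_pow]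
    exact mul_mem ih (mul_mem (Subring.prod_mem _ fun j _ => (L.cgrho d l j).1)
      (pow_mem (L.prodsig hd hco hN hdN l) 2))

lemma block (L : Loc Λ q a b m) {d N l' : ℕ} (hd : 0 < d) (hco : Nat.Coprime m d)
    (hN : N < m) (hdN : d * N = 1 + m * l') (l i : ℕ) (hi : i < m) :
    Cg Λ (1 - q^m) (tt q a b d (l*m+i)) (cc q a b d (l*m) * tt q a b d i) := by
  have h : Cg Λ (1 - q^m) (∏ j ∈ range i, (rho q a b d (l*m+j) * sig q d (l*m+j) ^ 2))
      (cc q a b d i) :=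
    Cg.prod fun j hj => (L.cgrho d l j).mul ((L.cgsig hd hco (by omega)).pow 2)
  have h2 : Cg Λ (1 - q^m) (1 - q⁻¹ * (q^d)^(2*(l*m+i))) (1 - q⁻¹ * (q^d)^(2*i)) := by
    have := L.cgn d (2*l) (2*i) L.mq'
    rwa [show 2*l*m+2*i = 2*(l*m+i) by ring] at this
  have h3 := (Cg.refl (L.ccmem hd hco hN hdN l)).mul (h2.mul h)
  rw [tt, tt]
  convert h3 using 1
  rw [cc, prod_range_add, cc]
  ring

lemma tail (L : Loc Λ q a b m) {d N l' : ℕ} (hco : Nat.Coprime m d)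
    (hdN : d * N = 1 + m * l') {k : ℕ} (hk : N < k) (hkm : k < m) :
    ∃ z ∈ Λ, tt q a b d k = (1 - q^m)^2 * z := by
  obtain ⟨z, hz, h⟩ := L.prodnum hdN 0 hk
  simp only [zero_mul, zero_add] at h
  rw [tt, cc, prod_mul_distrib, prod_pow]
  simp only [sig]
  rw [prod_mul_distrib, h]
  refine ⟨(1 - q⁻¹ * (q^d)^(2*k)) * ((∏ j ∈ range k, rho q a b d j) *
    (z * ∏ j ∈ range k, (1 - q^(d*(j+1)))⁻¹)^2), ?_, by ring⟩
  refine mul_mem (L.nmem _ _) (mul_mem (Subring.prod_mem _ fun j _ => (L.cgrho d 0 j).2.1)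
    (pow_mem (mul_mem hz (Subring.prod_mem _ fun j hj => ?_)) 2))
  rw [mem_range] at hj
  exact L.minv1 _ (by simpa using ndvd' (l := 0) hco (by omega : j + 1 < m))

lemma full (L : Loc Λ q a b m) [CharZero F] {d N l : ℕ} (hd : 0 < d) (hco : Nat.Coprime m d)
    (hN : N < m) (hdN : d * N = 1 + m * l) :
    (∃ z ∈ Λ, ∑ k ∈ range m, tt q a b d k = (1 - q^m) * z) ∧
    ∀ r, 0 < r → 2 * r < N → m = d * r + 1 → N + r = m →
      ∃ z ∈ Λ, ∑ k ∈ range m, tt q a b d k = (1 - q^m)^2 * z := by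
  have he := L.e_ne
  have hT : ∃ z ∈ Λ, ∑ i ∈ range (m - (N+1)), tt q a b d (N+1+i) = (1 - q^m)^2 * z := by
    have : ∀ i : ℕ, ∃ z ∈ Λ, i ∈ range (m - (N+1)) → tt q a b d (N+1+i) = (1 - q^m)^2 * z := by
      intro i
      by_cases hi : i < m - (N+1)
      · obtain ⟨z, hz, h⟩ := L.tail hco hdN (k := N+1+i) (by omega) (by omega)
        exact ⟨z, hz, fun _ => h⟩
      · exact ⟨0, zero_mem _, fun h => absurd (mem_range.mp h) hi⟩
    choose z hz h using this
    exact ⟨∑ i ∈ range (m - (N+1)), z i, Subring.sum_mem _ fun i _ => hz i,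
      by rw [mul_sum]; exact sum_congr rfl fun i hi => h i hi⟩
  obtain ⟨z, hz, h⟩ := hT
  have hs : ∑ k ∈ range m, tt q a b d k = ∑ k ∈ range (N+1), tt q a b d k + (1 - q^m)^2 * z := by
    rw [← h, ← sum_range_add]
    congr 2; omega
  obtain ⟨c1, c2⟩ := L.core hd hco hN hdN
  have m1 : 1 - q^m ∈ Λ := sub_mem (one_mem _) (pow_mem L.mq _)
  constructor
  · refine ⟨_, add_mem c1 (mul_mem m1 hz), ?_⟩
    rw [hs]; field_simp
  · intro r h1 h2 h3 h4
    refine ⟨_, add_mem (c2 r h1 h2 h3 h4) hz, ?_⟩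
    rw [hs]; field_simp

lemma blocks (L : Loc Λ q a b m) [CharZero F] {d N l : ℕ} (hd : 0 < d) (hco : Nat.Coprime m d)
    (hN : N < m) (hdN : d * N = 1 + m * l) (M : ℕ) :
    ∃ z ∈ Λ, ∑ k ∈ range (M*m), tt q a b d k = (1 - q^m) * z := by
  induction M with
  | zero => exact ⟨0, zero_mem _, by simp⟩
  | succ M ih =>
    obtain ⟨z, hz, h⟩ := ih
    obtain ⟨y, hy, h'⟩ := (L.full hd hco hN hdN).1
    have : ∀ i : ℕ, ∃ w ∈ Λ, i ∈ range m →
        tt q a b d (M*m+i) = cc q a b d (M*m) * tt q a b d i + (1 - q^m) * w := by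
      intro i
      by_cases hi : i < m
      · obtain ⟨_, _, w, hw, hh⟩ := L.block hd hco hN hdN M i hi
        exact ⟨w, hw, fun _ => hh⟩
      · exact ⟨0, zero_mem _, fun h => absurd (mem_range.mp h) hi⟩
    choose w hw hh using this
    refine ⟨z + (cc q a b d (M*m) * y + ∑ i ∈ range m, w i), add_mem hz (add_mem
      (mul_mem (L.ccmem hd hco hN hdN M) hy) (Subring.sum_mem _ fun i _ => hw i)), ?_⟩
    rw [add_mul, one_mul, sum_range_add, h, sum_congr rfl hh, sum_add_distrib, ← mul_sum,
      ← mul_sum, h']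
    ring

end Loc

lemma existsN {m d : ℕ} (hm : 1 < m) (hco : Nat.Coprime m d) :
    ∃ N l, N < m ∧ d * N = 1 + m * l := by
  obtain ⟨N, hN, h⟩ := Nat.exists_mul_mod_eq_one_of_coprime hco.symm hm
  refine ⟨N, d * N / m, hN, ?_⟩
  have := Nat.mod_add_div (d*N) m
  omega

end Work

namespace Work

/-- localisation of the polynomial ring at a prime, inside the fraction field -/
def lam0 (p : R) (hp : Prime p) : Subring K where
  carrier := {x | ∃ f g : R, ¬ p ∣ g ∧ x * algebraMap R K g = algebraMap R K f}
  mul_mem' := by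
    rintro x y ⟨f, g, h, e⟩ ⟨f', g', h', e'⟩
    refine ⟨f * f', g * g', fun hh => (hp.dvd_or_dvd hh).elim h h', ?_⟩
    rw [map_mul, map_mul, ← e, ← e']; ring
  one_mem' := ⟨1, 1, fun h => hp.not_unit (isUnit_of_dvd_one h), by simp⟩
  add_mem' := by
    rintro x y ⟨f, g, h, e⟩ ⟨f', g', h', e'⟩
    refine ⟨f * g' + f' * g, g * g', fun hh => (hp.dvd_or_dvd hh).elim h h', ?_⟩
    rw [map_mul, map_add, map_mul, map_mul, ← e, ← e']; ring
  zero_mem' := ⟨0, 1, fun h => hp.not_unit (isUnit_of_dvd_one h), by simp⟩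
  neg_mem' := by
    rintro x ⟨f, g, h, e⟩
    exact ⟨-f, g, h, by rw [map_neg, ← e]; ring⟩

lemma alg_mem (p : R) (hp : Prime p) (f : R) : algebraMap R K f ∈ lam0 p hp :=
  ⟨f, 1, fun h => hp.not_unit (isUnit_of_dvd_one h), by simp⟩

lemma alg_ne {g : R} (h : g ≠ 0) : algebraMap R K g ≠ 0 := by
  intro h0
  exact h ((IsFractionRing.injective R K) (by rw [h0, map_zero]))

lemma alg_inv_mem {p : R} (hp : Prime p) {g : R} (h : ¬ p ∣ g) :
    (algebraMap R K g)⁻¹ ∈ lam0 p hp :=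
  ⟨1, g, h, by rw [inv_mul_cancel₀ (alg_ne (by rintro rfl; exact h (dvd_zero _))), map_one]⟩

/-- the embedding of univariate polynomials -/
def emb : Polynomial ℚ →+* R := Polynomial.eval₂RingHom MvPolynomial.C (MvPolynomial.X 0)

lemma Phi_eq (m : ℕ) : Phi m = emb (Polynomial.cyclotomic m ℚ) := rfl

lemma emb_prime {f : Polynomial ℚ} (hf : Prime f) : Prime (emb f) := by
  let s : Set (Fin 4) := {0}
  have : Unique s := Set.uniqueSingleton 0
  let E : MvPolynomial s ℚ ≃ₐ[ℚ] Polynomial ℚ :=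
    (MvPolynomial.renameEquiv ℚ (Equiv.equivPUnit.{_,1} s)).trans (MvPolynomial.pUnitAlgEquiv ℚ)
  have h1 : Prime (E.symm f) := (MulEquiv.prime_iff E.symm.toMulEquiv).mpr hf
  have h2 := (MvPolynomial.prime_rename_iff (σ := Fin 4) s).mpr h1
  have h3 : ((MvPolynomial.rename (Subtype.val : s → Fin 4)).comp
    E.symm.toAlgHom).toRingHom = emb := by
    refine Polynomial.ringHom_ext ?_ ?_
    · intro c
      simp [emb, E]
    · simp [emb, E]
      exact this.default.2
  have h4 : (MvPolynomial.rename (Subtype.val : s → Fin 4)) (E.symm f) = emb f := by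
    rw [← h3]; rfl
  rwa [h4] at h2

lemma Phi_prime {m : ℕ} (hm : 0 < m) : Prime (Phi m) :=
  emb_prime (Polynomial.cyclotomic.irreducible_rat hm).prime

/-- test homomorphism -/
def chi (z x y : ℂ) : R →+* ℂ := MvPolynomial.eval₂Hom (algebraMap ℚ ℂ) ![z, x, y, 0]

@[simp] lemma chi0 (z x y : ℂ) : chi z x y (MvPolynomial.X 0) = z := by simp [chi]
@[simp] lemma chi1 (z x y : ℂ) : chi z x y (MvPolynomial.X 1) = x := by simp [chi]
@[simp] lemma chi2 (z x y : ℂ) : chi z x y (MvPolynomial.X 2) = y := by simp [chi]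

lemma chi_emb (z x y : ℂ) (f : Polynomial ℚ) : chi z x y (emb f) = Polynomial.aeval z f := by
  have : (chi z x y).comp emb = (Polynomial.aeval z).toRingHom := by
    refine Polynomial.ringHom_ext ?_ ?_
    · intro c; simp [emb, chi]
    · simp [emb, chi]
  rw [← RingHom.comp_apply, this]; rfl

lemma not_dvd {m : ℕ} (hm : 0 < m) {z : ℂ} (hz : IsPrimitiveRoot z m) (x y : ℂ) {g : R}
    (h : chi z x y g ≠ 0) : ¬ Phi m ∣ g := by
  rintro ⟨f, rfl⟩
  apply h
  rw [map_mul, Phi_eq, chi_emb]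
  have h1 := hz.isRoot_cyclotomic hm
  rw [← Polynomial.map_cyclotomic m (algebraMap ℚ ℂ), Polynomial.IsRoot, Polynomial.eval_map,
    ← Polynomial.aeval_def] at h1
  rw [h1, zero_mul]

lemma loc {m : ℕ} (hm : 1 < m) : Loc (lam0 (Phi m) (Phi_prime (by omega))) qv av bv m := by
  have hm0 : 0 < m := by omega
  have hp := Phi_prime hm0
  obtain ⟨z, hz⟩ : ∃ z : ℂ, IsPrimitiveRoot z m :=
    ⟨_, Complex.isPrimitiveRoot_exp m (by omega)⟩
  have nd : ∀ (x y : ℂ) (g : R), chi z x y g ≠ 0 → ¬ Phi m ∣ g := fun x y g h =>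
    not_dvd hm0 hz x y h
  have ne : ∀ g : R, ¬ Phi m ∣ g → algebraMap R K g ≠ 0 := by
    intro g h
    exact alg_ne (by rintro rfl; exact h (dvd_zero _))
  have n0 : ¬ Phi m ∣ (MvPolynomial.X 0 : R) := nd 0 0 _ (by simpa using hz.ne_zero (by omega))
  have n1 : ¬ Phi m ∣ (MvPolynomial.X 1 : R) := nd 1 1 _ (by simp)
  have n2 : ¬ Phi m ∣ (MvPolynomial.X 2 : R) := nd 1 1 _ (by simp)
  have n3 : ∀ j, ¬ Phi m ∣ (1 - MvPolynomial.X 1 * MvPolynomial.X 0 ^ j : R) := fun j =>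
    nd 0 0 _ (by simp)
  have n4 : ∀ j, ¬ Phi m ∣ (1 - MvPolynomial.X 2 * MvPolynomial.X 0 ^ j : R) := fun j =>
    nd 0 0 _ (by simp)
  have n5 : ∀ j, ¬ Phi m ∣ (MvPolynomial.X 1 - MvPolynomial.X 0 ^ j : R) := fun j =>
    nd (1 + z^j) 0 _ (by simp)
  have n6 : ∀ j, ¬ Phi m ∣ (MvPolynomial.X 2 - MvPolynomial.X 0 ^ j : R) := fun j =>
    nd 0 (1 + z^j) _ (by simp)
  have ha : av ≠ 0 := ne _ n1
  have hb : bv ≠ 0 := ne _ n2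
  have key : ∀ x ∈ ({av, av⁻¹, bv, bv⁻¹} : Set K), ∀ j : ℕ, 1 - x * qv^j ≠ 0 ∧
      (1 - x * qv^j)⁻¹ ∈ lam0 (Phi m) hp := by
    intro x hx j
    simp only [Set.mem_insert_iff, Set.mem_singleton_iff] at hx
    have e3 : 1 - av * qv^j = algebraMap R K (1 - MvPolynomial.X 1 * MvPolynomial.X 0 ^ j) := by
      simp [av, qv]
    have e4 : 1 - bv * qv^j = algebraMap R K (1 - MvPolynomial.X 2 * MvPolynomial.X 0 ^ j) := by
      simp [bv, qv]
    have e5 : 1 - av⁻¹ * qv^j = av⁻¹ * algebraMap R K (MvPolynomial.X 1 - MvPolynomial.X 0 ^ j) := by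
      rw [map_sub, map_pow]; change _ = av⁻¹ * (av - qv^j); field_simp
    have e6 : 1 - bv⁻¹ * qv^j = bv⁻¹ * algebraMap R K (MvPolynomial.X 2 - MvPolynomial.X 0 ^ j) := by
      rw [map_sub, map_pow]; change _ = bv⁻¹ * (bv - qv^j); field_simp
    rcases hx with rfl | rfl | rfl | rfl
    · rw [e3]; exact ⟨ne _ (n3 j), alg_inv_mem hp (n3 j)⟩
    · rw [e5, mul_inv, inv_inv]
      exact ⟨mul_ne_zero (inv_ne_zero ha) (ne _ (n5 j)),
        mul_mem (alg_mem _ _ _) (alg_inv_mem hp (n5 j))⟩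
    · rw [e4]; exact ⟨ne _ (n4 j), alg_inv_mem hp (n4 j)⟩
    · rw [e6, mul_inv, inv_inv]
      exact ⟨mul_ne_zero (inv_ne_zero hb) (ne _ (n6 j)),
        mul_mem (alg_mem _ _ _) (alg_inv_mem hp (n6 j))⟩
  refine ⟨hm, ne _ n0, ha, hb, ?_, fun x hx j => (key x hx j).1, alg_mem _ _ _,
    alg_inv_mem hp n0, ?_, fun x hx j => (key x hx j).2, ?_, ?_⟩
  · intro j hj h
    have h1 : (MvPolynomial.X 0 : R)^j = 1 := by
      apply IsFractionRing.injective R K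
      rw [map_pow, map_one]; exact h
    have h2 := congrArg (chi 2 0 0) h1
    rw [map_pow, chi0, map_one] at h2
    have h3 : (2:ℕ)^j = 1 := by exact_mod_cast h2
    have := Nat.one_lt_two_pow (n := j) (by omega)
    omega
  · intro x hx
    simp only [Set.mem_insert_iff, Set.mem_singleton_iff] at hx
    rcases hx with rfl | rfl | rfl | rfl
    · exact alg_mem _ _ _
    · exact alg_inv_mem hp n1
    · exact alg_mem _ _ _
    · exact alg_inv_mem hp n2
  · intro j hj
    have e : 1 - qv^j = algebraMap R K (1 - MvPolynomial.X 0 ^ j) := by simp [qv]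
    rw [e]
    refine alg_inv_mem hp (nd 0 0 _ ?_)
    rw [map_sub, map_pow, chi0, map_one]
    intro h
    exact hj ((hz.pow_eq_one_iff_dvd j).mp (sub_eq_zero.mp h).symm)
  · intro M hM
    have e : ∑ i ∈ range M, (qv^m)^i =
        algebraMap R K (∑ i ∈ range M, ((MvPolynomial.X 0 : R)^m)^i) := by simp [qv]
    rw [e]
    refine alg_inv_mem hp (nd 0 0 _ ?_)
    simp [hz.pow_eq_one]
    omega

lemma e_eq (m : ℕ) (hm : 0 < m) : ∃ h : R, 1 - qv^m = algebraMap R K (Phi m * h) := by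
  obtain ⟨f, hf⟩ := Polynomial.cyclotomic.dvd_X_pow_sub_one m ℚ
  refine ⟨-emb f, ?_⟩
  have h1 := congrArg emb hf
  rw [map_mul, ← Phi_eq] at h1
  rw [mul_neg, ← h1]
  simp [emb, qv]

/-- divisibility at a prime -/
lemma locdiv {m c : ℕ} (hm : 1 < m) {x : K}
    (h : ∃ z ∈ lam0 (Phi m) (Phi_prime (by omega)), x = (1 - qv^m)^c * z) :
    ∃ f g : R, ¬ Phi m ∣ g ∧ x * algebraMap R K g = algebraMap R K (Phi m ^ c * f) := by
  obtain ⟨z, ⟨f, g, hg, e⟩, rfl⟩ := h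
  obtain ⟨t, ht⟩ := e_eq m (by omega)
  refine ⟨t^c * f, g, hg, ?_⟩
  rw [mul_assoc, e, ht, ← map_pow, ← map_mul]
  congr 1; ring

lemma glue (D : Finset ℕ) (c : ℕ → ℕ) (hD : ∀ m ∈ D, 1 < m) (hc : ∀ m ∈ D, 0 < c m) (x : K)
    (h : ∀ m ∈ D, ∃ f g : R, ¬ Phi m ∣ g ∧ x * algebraMap R K g = algebraMap R K (Phi m ^ c m * f)) :
    modCong (∏ m ∈ D, Phi m ^ c m) x := by
  obtain ⟨A, B, hAB, hx⟩ := IsFractionRing.exists_reduced_fraction (A := R) x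
  have hB : (B : R) ≠ 0 := nonZeroDivisors.ne_zero B.2
  have hxB : x * algebraMap R K B = algebraMap R K A := by
    rw [← hx]; exact IsLocalization.mk'_spec K A B
  have hdiv : ∏ m ∈ D, Phi m ^ c m ∣ A := by
    refine Finset.prod_dvd_of_coprime ?_ ?_
    · intro i hi j hj hij
      refine IsCoprime.pow ?_
      rw [Phi_eq, Phi_eq]
      exact (Polynomial.cyclotomic.isCoprime_rat hij).map emb
    · intro m hm
      obtain ⟨f, g, hg, e⟩ := h m hm
      have h1 : A * g = Phi m ^ c m * f * B := by
        apply IsFractionRing.injective R K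
        rw [map_mul, map_mul _ _ (B : R), ← e, ← hxB]; ring
      have hp : Prime (Phi m) := Phi_prime (by have := hD m hm; omega)
      exact hp.pow_dvd_of_dvd_mul_right _ hg ⟨f * B, by rw [h1]; ring⟩
  obtain ⟨f, rfl⟩ := hdiv
  refine ⟨f, B, hB, ?_, hxB⟩
  intro p hp h1 h2
  exact hp.not_unit (hAB (dvd_mul_of_dvd_left h1 _) h2)

lemma qintR_eq {n : ℕ} (hn : 0 < n) : qintR n = ∏ m ∈ n.divisors.erase 1, Phi m := by
  have h := congrArg emb (Polynomial.prod_cyclotomic_eq_geom_sum hn ℚ)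
  rw [map_prod, map_sum] at h
  simp only [Phi_eq]
  rw [h]
  simp [qintR, emb]

/-- the summand of the statement -/
lemma term (d k : ℕ) (hq : qv ≠ 0) :
    qint (2 * d * k - 1) *
            (poch (av * qv ^ (-1 : ℤ)) (qv ^ (d : ℤ)) k * poch (qv ^ (-1 : ℤ) / av) (qv ^ (d : ℤ)) k *
              poch (bv * qv ^ (-1 : ℤ)) (qv ^ (d : ℤ)) k * poch (qv ^ (-1 : ℤ) / bv) (qv ^ (d : ℤ)) k *
              poch (qv ^ (-1 : ℤ)) (qv ^ (d : ℤ)) k ^ 2) /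
            (poch (av * qv ^ (d : ℤ)) (qv ^ (d : ℤ)) k * poch (qv ^ (d : ℤ) / av) (qv ^ (d : ℤ)) k *
              poch (bv * qv ^ (d : ℤ)) (qv ^ (d : ℤ)) k * poch (qv ^ (d : ℤ) / bv) (qv ^ (d : ℤ)) k *
              poch (qv ^ (d : ℤ)) (qv ^ (d : ℤ)) k ^ 2) *
            qv ^ ((2 * (d : ℤ) + 3) * k) = (1 - qv)⁻¹ * tt qv av bv d k := by
  have e1 : qv ^ ((2 * (d : ℤ) + 3) * k) = qv ^ ((2*d+3)*k) := by
    rw [← zpow_natCast]; push_cast; rfl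
  have e2 : qv ^ (2 * (d : ℤ) * k - 1) = qv⁻¹ * (qv^d)^(2*k) := by
    rw [zpow_sub₀ hq, ← pow_mul, ← zpow_natCast, zpow_one, div_eq_mul_inv, mul_comm]
    push_cast
    congr 2; ring
  have e3 : ∀ x Q : K, poch x Q k = pp x Q k := fun x Q => rfl
  rw [tt, cc_eq, qint, e1, e2]
  simp only [zpow_neg_one, zpow_natCast, e3, one_mul, div_eq_mul_inv, mul_inv, inv_pow]
  rw [mul_comm qv⁻¹ av⁻¹, mul_comm qv⁻¹ bv⁻¹, mul_comm (qv^d) av⁻¹, mul_comm (qv^d) bv⁻¹]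
  ring

lemma summ {n d m c : ℕ} (hm : 1 < m)
    (h : ∃ z ∈ lam0 (Phi m) (Phi_prime (by omega)),
      ∑ k ∈ range n, tt qv av bv d k = (1 - qv^m)^c * z) :
    ∃ f g : R, ¬ Phi m ∣ g ∧ (∑ k ∈ range n, (1 - qv)⁻¹ * tt qv av bv d k) * algebraMap R K g =
      algebraMap R K (Phi m ^ c * f) := by
  refine locdiv hm ?_
  obtain ⟨z, hz, e⟩ := h
  have := (loc hm).minv1 1 (by intro h; have := Nat.le_of_dvd one_pos h; omega)
  rw [pow_one] at this
  refine ⟨_, mul_mem this hz, ?_⟩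
  rw [← mul_sum, e]; ring

lemma local1 {n d m : ℕ} (hn : 1 < n) (hd : 3 ≤ d) (hnd : Nat.Coprime n d) (hm : 1 < m)
    (hmn : m ∣ n) : ∃ z ∈ lam0 (Phi m) (Phi_prime (by omega)),
      ∑ k ∈ range n, tt qv av bv d k = (1 - qv^m) * z := by
  have hco : Nat.Coprime m d := Nat.Coprime.coprime_dvd_left hmn hnd
  obtain ⟨N, l, hN, h⟩ := existsN hm hco
  obtain ⟨M, rfl⟩ := hmn
  rw [mul_comm m M]
  exact (loc hm).blocks (by omega) hco hN h M

lemma local2 {n d : ℕ} (hn : 1 < n) (hd : 3 ≤ d) (hnd : Nat.Coprime n d)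
    (h1 : (n : ℤ) ≡ 1 [ZMOD (d : ℤ)]) : ∃ z ∈ lam0 (Phi n) (Phi_prime (by omega)),
      ∑ k ∈ range n, tt qv av bv d k = (1 - qv^n)^2 * z := by
  obtain ⟨t, ht⟩ := h1.symm.dvd
  have ht0 : 0 < t := by
    by_contra hcon
    have : (d:ℤ) * t ≤ 0 := mul_nonpos_of_nonneg_of_nonpos (by omega) (by omega)
    omega
  obtain ⟨r, rfl⟩ := Int.eq_ofNat_of_zero_le ht0.le
  have hnr : n = d * r + 1 := by zify; linarith
  have hr : 0 < r := by omega
  obtain ⟨d', rfl⟩ : ∃ d', d = d' + 3 := ⟨d - 3, by omega⟩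
  refine ((loc hn).full (d := d'+3) (N := (d'+2)*r+1) (l := d'+2) (by omega) hnd ?_ ?_).2 r hr ?_ hnr ?_
  · rw [hnr]; nlinarith
  · rw [hnr]; ring
  · nlinarith [Nat.zero_le (d'*r)]
  · rw [hnr]; ring

end Work

theorem stmt5 (n d : ℕ) (hn : 1 < n) (hd : 3 ≤ d) (hnd : Nat.gcd n d = 1) :
    (((n : ℤ) ≡ 1 [ZMOD (d : ℤ)]) →
      modCong (qintR n * Phi n)
        (∑ k ∈ Finset.range n,
          qint (2 * d * k - 1) *
            (poch (av * qv ^ (-1 : ℤ)) (qv ^ (d : ℤ)) k * poch (qv ^ (-1 : ℤ) / av) (qv ^ (d : ℤ)) k *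
              poch (bv * qv ^ (-1 : ℤ)) (qv ^ (d : ℤ)) k * poch (qv ^ (-1 : ℤ) / bv) (qv ^ (d : ℤ)) k *
              poch (qv ^ (-1 : ℤ)) (qv ^ (d : ℤ)) k ^ 2) /
            (poch (av * qv ^ (d : ℤ)) (qv ^ (d : ℤ)) k * poch (qv ^ (d : ℤ) / av) (qv ^ (d : ℤ)) k *
              poch (bv * qv ^ (d : ℤ)) (qv ^ (d : ℤ)) k * poch (qv ^ (d : ℤ) / bv) (qv ^ (d : ℤ)) k *
              poch (qv ^ (d : ℤ)) (qv ^ (d : ℤ)) k ^ 2) *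
            qv ^ ((2 * (d : ℤ) + 3) * k))) ∧
    (¬ ((n : ℤ) ≡ 1 [ZMOD (d : ℤ)]) →
      modCong (qintR n)
        (∑ k ∈ Finset.range n,
          qint (2 * d * k - 1) *
            (poch (av * qv ^ (-1 : ℤ)) (qv ^ (d : ℤ)) k * poch (qv ^ (-1 : ℤ) / av) (qv ^ (d : ℤ)) k *
              poch (bv * qv ^ (-1 : ℤ)) (qv ^ (d : ℤ)) k * poch (qv ^ (-1 : ℤ) / bv) (qv ^ (d : ℤ)) k *
              poch (qv ^ (-1 : ℤ)) (qv ^ (d : ℤ)) k ^ 2) /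
            (poch (av * qv ^ (d : ℤ)) (qv ^ (d : ℤ)) k * poch (qv ^ (d : ℤ) / av) (qv ^ (d : ℤ)) k *
              poch (bv * qv ^ (d : ℤ)) (qv ^ (d : ℤ)) k * poch (qv ^ (d : ℤ) / bv) (qv ^ (d : ℤ)) k *
              poch (qv ^ (d : ℤ)) (qv ^ (d : ℤ)) k ^ 2) *
            qv ^ ((2 * (d : ℤ) + 3) * k))) := by
  have hq : qv ≠ 0 := (Work.loc hn).hq
  have hD : ∀ m ∈ n.divisors.erase 1, 1 < m ∧ m ∣ n := by
    intro m hm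
    rw [mem_erase, Nat.mem_divisors] at hm
    have := Nat.pos_of_dvd_of_pos hm.2.1 (by omega)
    exact ⟨by omega, hm.2.1⟩
  simp only [Work.term d _ hq]
  constructor
  · intro h1
    have hM : qintR n * Phi n = ∏ m ∈ n.divisors.erase 1, Phi m ^ (if m = n then 2 else 1) := by
      have hmem : n ∈ n.divisors.erase 1 := by
        rw [mem_erase, Nat.mem_divisors]; exact ⟨by omega, dvd_rfl, by omega⟩
      rw [Work.qintR_eq (by omega), ← mul_prod_erase _ _ hmem, ← mul_prod_erase _ _ hmem, if_pos rfl]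
      have : ∏ m ∈ (n.divisors.erase 1).erase n, Phi m ^ (if m = n then 2 else 1) =
          ∏ m ∈ (n.divisors.erase 1).erase n, Phi m := by
        refine prod_congr rfl fun m hm => ?_
        rw [if_neg (mem_erase.mp hm).1, pow_one]
      rw [this]; ring
    rw [hM]
    refine Work.glue _ _ (fun m hm => (hD m hm).1) (fun m _ => by split_ifs <;> omega) _ ?_
    intro m hm
    by_cases hmn : m = n
    · subst hmn
      rw [if_pos rfl]
      exact Work.summ hn (Work.local2 hn hd hnd h1)
    · rw [if_neg hmn]
      refine Work.summ (hD m hm).1 ?_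
      rw [pow_one]
      exact Work.local1 hn hd hnd (hD m hm).1 (hD m hm).2
  · intro _
    have hM : qintR n = ∏ m ∈ n.divisors.erase 1, Phi m ^ 1 := by
      rw [Work.qintR_eq (by omega)]; simp only [pow_one]
    rw [hM]
    refine Work.glue _ (fun _ => 1) (fun m hm => (hD m hm).1) (fun m _ => one_pos) _ ?_
    intro m hm
    refine Work.summ (hD m hm).1 ?_
    rw [pow_one]
    exact Work.local1 hn hd hnd (hD m hm).1 (hD m hm).2

end
end
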